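/- Under the stated parameter constraints, there exist k₀ > 0 and C > 0 such that for every k ≥ k₀ there is a function W : [0,∞) → ℂ, continuous on [0,∞), twice differentiable on (0,∞), satisfying W''(t) = k²(c t^α − μ) W(t) for all t > 0, with ∫₀^∞ |W(t)|² dt < ∞, and such that: |W(t)| ≤ C·|q(t)|^{−1/4}·(e^{k(Re S(t) − 2R₀)} + e^{−k·Re S(t)}) for all t ∈ [0, Z₀]; |W(t)| ≤ C·|q(t)|^{−1/4}·e^{k(Re S(t) − 2R₀)} for all t > Z₀; and |W(0)| ≥ 1/C. -/

import Mathlib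

open MeasureTheory Set

/-- `t₀(α) = 2πα/(α+2)`. -/
noncomputable def t0 (α : ℝ) : ℝ := 2 * Real.pi * α / (α + 2)

/-!
Put `ψ = (φ - θ) / α + φ / 2` and `β = (θ - φ) / α`. If `V` solves
`V'' = k² e^{2iψ} (x^α - 1) V` on the slit plane, then `t ↦ V (t e^{iβ})` solves
`W'' = k² (e^{iθ} t^α - e^{iφ}) W`, and the turning point `x = 1` lies below the ray of direction
`β`. The solution sought is the one which is recessive at infinity below the positive axis.

Choose `γ > 0` such that the square root of the coefficient has positive real part on the whole ray
of direction `-γ`. A solution whose growing part vanishes at distance `T` on that ray is then a pure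
decaying mode down to the origin, up to a bounded factor, so its value at `0` can be normalised to
`1` with slope `O(k)`. Follow it from `T e^{-iγ}` along the circle of radius `T` to `T e^{iβ}` and
back along the ray of direction `β` to `Z₀`: the real part of the action is monotone on each piece,
so the energy estimate for the Liouville–Green system loses only a bounded factor. By Cauchy's
theorem the total action along this contour is twice the integral between the origin and the turning
point, so its real part is `-2 R₀` for every `T`; this is the gain in the amplitude of the mode
`e^{kS}`. The slope at the origin stays bounded as `T → ∞`, and a limit point yields the recessive
solution. Between `0` and `Z₀` it is the sum of a growing solution controlled from `Z₀` and a
decaying one controlled from `0`.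
-/

/-! ### Energy estimates for the Liouville–Green system -/

section Energy

variable {k s₀ s₁ : ℝ}

theorem two_mul_mul_mul_le_of_sq_le {n m c b x p : ℝ} (hn : 0 ≤ n) (hm : 0 ≤ m)
    (hx : x ^ 2 ≤ 5 * p) (hnm : 5 * c ^ 2 ≤ m * n) :
    2 * c * b * x ≤ n * b ^ 2 + m * p := by
  have hsum : n * b ^ 2 + m * (x ^ 2 / 5) ≤ n * b ^ 2 + m * p := by
    gcongr; linarith
  refine le_trans ?_ hsum
  have hnonneg : 0 ≤ n * b ^ 2 + m * (x ^ 2 / 5) := by positivity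
  refine (le_abs_self _).trans (abs_le_of_sq_le_sq ?_ hnonneg)
  nlinarith [sq_nonneg (n * b ^ 2 - m * (x ^ 2 / 5)),
    mul_le_mul_of_nonneg_right hnm (mul_nonneg (sq_nonneg b) (sq_nonneg x))]

/-- The density `m = E'` controls the coupling `c` of two modes, one of which is damped at rate
`p`: `coupling_le` is what makes the energy of the pair grow at most like `exp E`. -/
structure IsErrorControl (s₀ s₁ : ℝ) (p : ℝ → ℝ) (c : ℝ → ℂ) (m E : ℝ → ℝ) : Prop where
  continuousOn : ContinuousOn E (Icc s₀ s₁)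
  hasDerivAt : ∀ s ∈ Ioo s₀ s₁, HasDerivAt E (m s) s
  rate_nonneg : ∀ s ∈ Ioo s₀ s₁, 0 ≤ p s
  density_nonneg : ∀ s ∈ Ioo s₀ s₁, 0 ≤ m s
  coupling_le : ∀ s ∈ Ioo s₀ s₁, 5 * ‖c s‖ ^ 2 ≤ m s * (2 * p s + m s)

theorem inner_coupled_add_inner_damped_le {a b c Γ : ℂ} {m : ℝ} (ζ : ℂ) (hΓ : 0 ≤ Γ.re)
    (hm : 0 ≤ m) (hc : 5 * ‖c‖ ^ 2 ≤ m * (2 * Γ.re + m)) :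
    2 * inner ℝ (a - ζ) (c * b) + 2 * inner ℝ b (-Γ * b + c * a)
      ≤ m * (‖a - ζ‖ ^ 2 + ‖b‖ ^ 2 + ‖ζ‖ ^ 2) := by
  have hsplit : inner ℝ b (-Γ * b + c * a)
      = -Γ.re * ‖b‖ ^ 2 + inner ℝ b (c * (a - ζ)) + inner ℝ b (c * ζ) := by
    rw [← Complex.normSq_eq_norm_sq, Complex.normSq_apply]
    simp [Complex.inner]
    ring
  have hinner : ∀ x y : ℂ, inner ℝ x (c * y) ≤ ‖c‖ * ‖x‖ * ‖y‖ := fun x y =>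
    (real_inner_le_norm _ _).trans_eq (by rw [norm_mul]; ring)
  have hamgm := two_mul_mul_mul_le_of_sq_le (c := ‖c‖) (b := ‖b‖) (x := 2 * ‖a - ζ‖ + ‖ζ‖)
    (p := ‖a - ζ‖ ^ 2 + ‖ζ‖ ^ 2) (by positivity : 0 ≤ 2 * Γ.re + m) hm
    (by nlinarith [sq_nonneg (‖a - ζ‖ - 2 * ‖ζ‖)]) hc
  rw [hsplit]
  linarith [hinner (a - ζ) b, hinner b (a - ζ), hinner b ζ]

theorem IsErrorControl.energy_le {a b c Γ : ℝ → ℂ} {m E : ℝ → ℝ}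
    (hE : IsErrorControl s₀ s₁ (fun s => (Γ s).re) c m E) (ζ : ℂ)
    (ha : ContinuousOn a (Icc s₀ s₁)) (hb : ContinuousOn b (Icc s₀ s₁))
    (ha' : ∀ s ∈ Ioo s₀ s₁, HasDerivAt a (c s * b s) s)
    (hb' : ∀ s ∈ Ioo s₀ s₁, HasDerivAt b (-Γ s * b s + c s * a s) s)
    {s : ℝ} (hs : s ∈ Icc s₀ s₁) :
    ‖a s - ζ‖ ^ 2 + ‖b s‖ ^ 2 + ‖ζ‖ ^ 2
      ≤ Real.exp (E s - E s₀) * (‖a s₀ - ζ‖ ^ 2 + ‖b s₀‖ ^ 2 + ‖ζ‖ ^ 2) := by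
  set H : ℝ → ℝ := fun s => (‖a s - ζ‖ ^ 2 + ‖b s‖ ^ 2 + ‖ζ‖ ^ 2) * Real.exp (-E s) with hH
  have hderiv : ∀ s ∈ Ioo s₀ s₁, HasDerivAt H
      ((2 * inner ℝ (a s - ζ) (c s * b s) + 2 * inner ℝ (b s) (-Γ s * b s + c s * a s))
          * Real.exp (-E s)
        + (‖a s - ζ‖ ^ 2 + ‖b s‖ ^ 2 + ‖ζ‖ ^ 2) * (Real.exp (-E s) * (-m s))) s := fun s hs =>
    ((((ha' s hs).sub_const ζ).norm_sq.add (hb' s hs).norm_sq).add_const _).mul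
      (hE.hasDerivAt s hs).neg.exp
  have hanti : AntitoneOn H (Icc s₀ s₁) := by
    have hEc := hE.continuousOn
    refine antitoneOn_of_deriv_nonpos (convex_Icc _ _) (by fun_prop) ?_ ?_ <;>
      rw [interior_Icc] <;> intro s hs
    · exact (hderiv s hs).differentiableAt.differentiableWithinAt
    · rw [(hderiv s hs).deriv]
      nlinarith [Real.exp_pos (-E s), inner_coupled_add_inner_damped_le (a := a s) (b := b s) ζ
        (hE.rate_nonneg s hs) (hE.density_nonneg s hs) (hE.coupling_le s hs)]
  have hle := hanti (left_mem_Icc.2 (hs.1.trans hs.2)) hs hs.1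
  simp only [hH, Real.exp_neg, ← div_eq_mul_inv] at hle
  rw [div_le_div_iff₀ (Real.exp_pos _) (Real.exp_pos _)] at hle
  rw [Real.exp_sub, div_mul_eq_mul_div, le_div_iff₀ (Real.exp_pos _)]
  linarith

/-- Data of the Liouville–Green ansatz along a path: `g` is a square root of the potential, `τ` the
velocity of the path, `c` half the logarithmic derivative of `g`, and `F` the growing mode. The
factor `F` behaves like `g ^ (1 / 2) * exp (k * ∫ τ * g)`, so that `F / g` approximates `W`. -/
structure IsWKBPath (k s₀ s₁ : ℝ) (g F τ c : ℝ → ℂ) : Prop where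
  continuousOn_root : ContinuousOn g (Icc s₀ s₁)
  continuousOn_mode : ContinuousOn F (Icc s₀ s₁)
  mode_ne_zero : ∀ s ∈ Icc s₀ s₁, F s ≠ 0
  hasDerivAt_root : ∀ s ∈ Ioo s₀ s₁, HasDerivAt g (2 * c s * g s) s
  hasDerivAt_mode : ∀ s ∈ Ioo s₀ s₁, HasDerivAt F ((k * τ s * g s + c s) * F s) s

/-- `(W, Y)` solves the first order system `W' = τ Y`, `Y' = k² τ g² W`, that is, `W'' = k² g² W`
pulled back to a path with velocity `τ`. -/
structure IsPathSolution (k s₀ s₁ : ℝ) (g τ W Y : ℝ → ℂ) : Prop where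
  continuousOn : ContinuousOn W (Icc s₀ s₁)
  continuousOn_deriv : ContinuousOn Y (Icc s₀ s₁)
  hasDerivAt : ∀ s ∈ Ioo s₀ s₁, HasDerivAt W (τ s * Y s) s
  hasDerivAt_deriv : ∀ s ∈ Ioo s₀ s₁, HasDerivAt Y (k ^ 2 * τ s * g s ^ 2 * W s) s

/-- The component of `(W, Y)` along the mode growing like `exp (k * ∫ g)`. -/
noncomputable def growingPart (k : ℝ) (g W Y : ℝ → ℂ) (s : ℝ) : ℂ := k * g s * W s + Y s

/-- The component of `(W, Y)` along the mode decaying like `exp (-k * ∫ g)`. -/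
noncomputable def decayingPart (k : ℝ) (g W Y : ℝ → ℂ) (s : ℝ) : ℂ := k * g s * W s - Y s

/-- The squared distance of a solution, measured in units of the mode `F`, to the pure growing mode
of amplitude `ζ`. The constant `‖ζ‖ ^ 2` absorbs the forcing of the decaying part by that mode. -/
noncomputable def wkbEnergy (k : ℝ) (g F W Y : ℝ → ℂ) (ζ : ℂ) (s : ℝ) : ℝ :=
  ‖growingPart k g W Y s / F s - ζ‖ ^ 2 + ‖decayingPart k g W Y s / F s‖ ^ 2 + ‖ζ‖ ^ 2

variable {g F τ c W Y : ℝ → ℂ} {m E : ℝ → ℝ}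

theorem wkbEnergy_nonneg (ζ : ℂ) (s : ℝ) : 0 ≤ wkbEnergy k g F W Y ζ s := by
  unfold wkbEnergy; positivity

theorem IsPathSolution.of_sq_eq {g' : ℝ → ℂ} (h : IsPathSolution k s₀ s₁ g τ W Y)
    (hg : ∀ s ∈ Ioo s₀ s₁, g s ^ 2 = g' s ^ 2) : IsPathSolution k s₀ s₁ g' τ W Y where
  continuousOn := h.continuousOn
  continuousOn_deriv := h.continuousOn_deriv
  hasDerivAt := h.hasDerivAt
  hasDerivAt_deriv s hs := hg s hs ▸ h.hasDerivAt_deriv s hs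

theorem IsWKBPath.hasDerivAt_growingPart_div (hp : IsWKBPath k s₀ s₁ g F τ c)
    (hW : IsPathSolution k s₀ s₁ g τ W Y) {s : ℝ} (hs : s ∈ Ioo s₀ s₁) :
    HasDerivAt (fun s => growingPart k g W Y s / F s)
      (c s * (decayingPart k g W Y s / F s)) s := by
  have hF := hp.mode_ne_zero s (Ioo_subset_Icc_self hs)
  convert! ((((hp.hasDerivAt_root s hs).const_mul (k : ℂ)).mul (hW.hasDerivAt s hs)).add
    (hW.hasDerivAt_deriv s hs)).div (hp.hasDerivAt_mode s hs) hF using 1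
  simp only [decayingPart, Pi.add_apply, Pi.mul_apply]
  field_simp
  ring

theorem IsWKBPath.hasDerivAt_decayingPart_div (hp : IsWKBPath k s₀ s₁ g F τ c)
    (hW : IsPathSolution k s₀ s₁ g τ W Y) {s : ℝ} (hs : s ∈ Ioo s₀ s₁) :
    HasDerivAt (fun s => decayingPart k g W Y s / F s)
      (-(2 * k * (τ s * g s)) * (decayingPart k g W Y s / F s)
        + c s * (growingPart k g W Y s / F s)) s := by
  have hF := hp.mode_ne_zero s (Ioo_subset_Icc_self hs)
  convert! ((((hp.hasDerivAt_root s hs).const_mul (k : ℂ)).mul (hW.hasDerivAt s hs)).sub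
    (hW.hasDerivAt_deriv s hs)).div (hp.hasDerivAt_mode s hs) hF using 1
  simp only [growingPart, decayingPart, Pi.mul_apply, Pi.sub_apply]
  field_simp
  ring

theorem IsWKBPath.wkbEnergy_le_left (hp : IsWKBPath k s₀ s₁ g F τ c)
    (hW : IsPathSolution k s₀ s₁ g τ W Y)
    (hE : IsErrorControl s₀ s₁ (fun s => 2 * k * (τ s * g s).re) c m E) (ζ : ℂ)
    {s : ℝ} (hs : s ∈ Icc s₀ s₁) :
    wkbEnergy k g F W Y ζ s ≤ Real.exp (E s - E s₀) * wkbEnergy k g F W Y ζ s₀ := by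
  have hg := hp.continuousOn_root
  have hWc := hW.continuousOn
  have hYc := hW.continuousOn_deriv
  have hE' : IsErrorControl s₀ s₁ (fun s => (2 * k * (τ s * g s) : ℂ).re) c m E := by
    convert! hE using 2
    rw [← Complex.re_ofReal_mul]
    push_cast
    rfl
  refine hE'.energy_le ζ (ContinuousOn.div ?_ hp.continuousOn_mode hp.mode_ne_zero)
    (ContinuousOn.div ?_ hp.continuousOn_mode hp.mode_ne_zero)
    (fun s => hp.hasDerivAt_growingPart_div hW) (fun s => hp.hasDerivAt_decayingPart_div hW) hs
  · unfold growingPart; fun_prop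
  · unfold decayingPart; fun_prop

theorem hasDerivAt_comp_neg {V : Type*} [NormedAddCommGroup V] [NormedSpace ℝ V] {f : ℝ → V}
    {f' : V} {s : ℝ} (hf : HasDerivAt f f' (-s)) : HasDerivAt (fun s => f (-s)) (-f') s := by
  simpa [Function.comp_def] using hf.scomp s (hasDerivAt_neg s)

theorem IsWKBPath.comp_neg (hp : IsWKBPath k s₀ s₁ g F τ c) :
    IsWKBPath k (-s₁) (-s₀) (fun s => g (-s)) (fun s => F (-s)) (fun s => -τ (-s))
      (fun s => -c (-s)) where
  continuousOn_root := hp.continuousOn_root.comp continuousOn_neg fun _ => neg_mem_Icc_iff.2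
  continuousOn_mode := hp.continuousOn_mode.comp continuousOn_neg fun _ => neg_mem_Icc_iff.2
  mode_ne_zero s hs := hp.mode_ne_zero _ (neg_mem_Icc_iff.2 hs)
  hasDerivAt_root s hs := by
    convert! hasDerivAt_comp_neg (hp.hasDerivAt_root _ (neg_mem_Ioo_iff.2 hs)) using 1; ring
  hasDerivAt_mode s hs := by
    convert! hasDerivAt_comp_neg (hp.hasDerivAt_mode _ (neg_mem_Ioo_iff.2 hs)) using 1; ring

theorem IsPathSolution.comp_neg (hW : IsPathSolution k s₀ s₁ g τ W Y) :
    IsPathSolution k (-s₁) (-s₀) (fun s => g (-s)) (fun s => -τ (-s)) (fun s => W (-s))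
      (fun s => Y (-s)) where
  continuousOn := hW.continuousOn.comp continuousOn_neg fun _ => neg_mem_Icc_iff.2
  continuousOn_deriv := hW.continuousOn_deriv.comp continuousOn_neg fun _ => neg_mem_Icc_iff.2
  hasDerivAt s hs := by
    convert! hasDerivAt_comp_neg (hW.hasDerivAt _ (neg_mem_Ioo_iff.2 hs)) using 1; ring
  hasDerivAt_deriv s hs := by
    convert! hasDerivAt_comp_neg (hW.hasDerivAt_deriv _ (neg_mem_Ioo_iff.2 hs)) using 1; ring

theorem IsErrorControl.comp_neg {p : ℝ → ℝ} (hE : IsErrorControl s₀ s₁ p c m E) :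
    IsErrorControl (-s₁) (-s₀) (fun s => p (-s)) (fun s => -c (-s)) (fun s => m (-s))
      (fun s => -E (-s)) where
  continuousOn := (hE.continuousOn.comp continuousOn_neg fun _ => neg_mem_Icc_iff.2).neg
  hasDerivAt s hs := by
    simpa using! (hasDerivAt_comp_neg (hE.hasDerivAt _ (neg_mem_Ioo_iff.2 hs))).neg
  rate_nonneg s hs := hE.rate_nonneg _ (neg_mem_Ioo_iff.2 hs)
  density_nonneg s hs := hE.density_nonneg _ (neg_mem_Ioo_iff.2 hs)
  coupling_le s hs := by simpa using hE.coupling_le _ (neg_mem_Ioo_iff.2 hs)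

theorem IsWKBPath.wkbEnergy_le_right (hp : IsWKBPath k s₀ s₁ g F τ c)
    (hW : IsPathSolution k s₀ s₁ g τ W Y)
    (hE : IsErrorControl s₀ s₁ (fun s => 2 * k * -(τ s * g s).re) c m E) (ζ : ℂ)
    {s : ℝ} (hs : s ∈ Icc s₀ s₁) :
    wkbEnergy k g F W Y ζ s ≤ Real.exp (E s₁ - E s) * wkbEnergy k g F W Y ζ s₁ := by
  have hle := hp.comp_neg.wkbEnergy_le_left hW.comp_neg
    (by simpa only [neg_mul, Complex.neg_re] using hE.comp_neg) ζ
    (s := -s) ⟨neg_le_neg hs.2, neg_le_neg hs.1⟩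
  simpa [wkbEnergy, growingPart, decayingPart, sub_eq_add_neg, add_comm] using hle

end Energy

/-! ### Potentials along rays -/

/-- The potential `e^{iA} r^α - e^{iB}` on a ray, divided by `-e^{iB}`, where `ω = A - B`. -/
noncomputable def rayFactor (α ω r : ℝ) : ℂ := 1 - ((r ^ α : ℝ) : ℂ) * Complex.exp (Complex.I * ω)

/-- The continuous square root of `e^{iA} r^α - e^{iB}` with value `-i e^{iB/2}` at `r = 0`. -/
noncomputable def rayRoot (α A B r : ℝ) : ℂ :=
  -Complex.I * Complex.exp (Complex.I * ((B / 2 : ℝ) : ℂ))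
    * rayFactor α (A - B) r ^ ((1 / 2 : ℝ) : ℂ)

/-- Half the logarithmic derivative of `rayRoot`. -/
noncomputable def rayCoupling (α ω r : ℝ) : ℂ :=
  -((α * r ^ (α - 1) : ℝ) : ℂ) * Complex.exp (Complex.I * ω) / (4 * rayFactor α ω r)

/-- The primitive of `rayRoot`. -/
noncomputable def rayAction (α A B r : ℝ) : ℂ := ∫ s in (0 : ℝ)..r, rayRoot α A B s

/-- The Liouville–Green mode for the root `ε g` of the potential, normalised to `1` at `r = 0`;
`ε = ± 1` selects the mode growing or decaying like `exp (± k ∫ g)`. -/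
noncomputable def rayMode (α A B k ε r : ℝ) : ℂ :=
  rayFactor α (A - B) r ^ ((1 / 4 : ℝ) : ℂ) * Complex.exp (k * ε * rayAction α A B r)

/-- The density of the error-control function along a ray. It is comparable to the coupling near
turning points of `Re ∫ g` and of order `1 / k` away from them. -/
noncomputable def rayError (α A B k r : ℝ) : ℝ :=
  5 * ‖rayCoupling α (A - B) r‖ ^ 2 / (‖rayCoupling α (A - B) r‖ + k * |(rayRoot α A B r).re|)

theorem rayFactor_zero {α ω : ℝ} (hα : 0 < α) : rayFactor α ω 0 = 1 := by
  simp [rayFactor, Real.zero_rpow hα.ne']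

theorem rayFactor_im (α ω r : ℝ) : (rayFactor α ω r).im = -(r ^ α * Real.sin ω) := by
  simp [rayFactor, Complex.exp_im]

theorem rayFactor_mem_slitPlane {α ω : ℝ} (hω : Real.sin ω ≠ 0) (r : ℝ) :
    rayFactor α ω r ∈ Complex.slitPlane := by
  by_cases hr : r ^ α = 0
  · simp [rayFactor, hr]
  · refine Or.inr ?_
    rw [rayFactor_im]
    exact neg_ne_zero.2 (mul_ne_zero hr hω)

theorem rayFactor_ne_zero {α ω : ℝ} (hω : Real.sin ω ≠ 0) (r : ℝ) : rayFactor α ω r ≠ 0 :=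
  Complex.slitPlane_ne_zero (rayFactor_mem_slitPlane hω r)

theorem continuous_rayFactor {α ω : ℝ} (hα : 0 < α) : Continuous (rayFactor α ω) := by
  have := Real.continuous_rpow_const hα.le
  unfold rayFactor
  fun_prop

theorem continuous_rayFactor_cpow {α ω : ℝ} (hα : 0 < α) (hω : Real.sin ω ≠ 0) (p : ℂ) :
    Continuous (fun r => rayFactor α ω r ^ p) :=
  (continuous_rayFactor hα).cpow continuous_const (rayFactor_mem_slitPlane hω)

theorem continuous_rayRoot {α A B : ℝ} (hα : 0 < α) (hω : Real.sin (A - B) ≠ 0) :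
    Continuous (rayRoot α A B) :=
  continuous_const.mul (continuous_rayFactor_cpow hα hω _)

theorem rayRoot_zero {α A B : ℝ} (hα : 0 < α) :
    rayRoot α A B 0 = -Complex.I * Complex.exp (Complex.I * ((B / 2 : ℝ) : ℂ)) := by
  simp [rayRoot, rayFactor_zero hα]

theorem rayRoot_sq (α A B r : ℝ) : rayRoot α A B r ^ 2 =
    Complex.exp (Complex.I * A) * ((r ^ α : ℝ) : ℂ) - Complex.exp (Complex.I * B) := by
  have hfactor : (rayFactor α (A - B) r ^ ((1 / 2 : ℝ) : ℂ)) ^ 2 = rayFactor α (A - B) r := by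
    rw [← Complex.cpow_nat_mul]; norm_num
  have hhalf : Complex.exp (Complex.I * ((B / 2 : ℝ) : ℂ)) ^ 2 = Complex.exp (Complex.I * B) := by
    rw [← Complex.exp_nat_mul]; congr 1; push_cast; ring
  have hsplit : Complex.exp (Complex.I * A)
      = Complex.exp (Complex.I * B) * Complex.exp (Complex.I * ((A - B : ℝ) : ℂ)) := by
    rw [← Complex.exp_add]; congr 1; push_cast; ring
  rw [rayRoot, mul_pow, mul_pow, hfactor, hhalf, hsplit, rayFactor, neg_sq, Complex.I_sq]
  ring

theorem norm_rayRoot (α A B r : ℝ) :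
    ‖rayRoot α A B r‖ = ‖rayFactor α (A - B) r‖ ^ (1 / 2 : ℝ) := by
  rw [rayRoot, norm_mul, norm_mul, Complex.norm_exp_I_mul_ofReal, Complex.norm_cpow_real]
  simp

theorem norm_rayRoot_sq (α A B r : ℝ) : ‖rayRoot α A B r‖ ^ 2 = ‖rayFactor α (A - B) r‖ := by
  rw [norm_rayRoot, ← Real.rpow_mul_natCast (norm_nonneg _)]
  norm_num

theorem rayRoot_ne_zero {α A B : ℝ} (hω : Real.sin (A - B) ≠ 0) (r : ℝ) : rayRoot α A B r ≠ 0 := by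
  rw [← norm_pos_iff, norm_rayRoot]
  exact Real.rpow_pos_of_pos (norm_pos_iff.2 (rayFactor_ne_zero hω r)) _

theorem norm_rayMode (α A B k ε r : ℝ) :
    ‖rayMode α A B k ε r‖
      = ‖rayFactor α (A - B) r‖ ^ (1 / 4 : ℝ) * Real.exp (k * ε * (rayAction α A B r).re) := by
  rw [rayMode, norm_mul, Complex.norm_cpow_real, Complex.norm_exp]
  congr 2
  simp [mul_assoc]

theorem rayMode_ne_zero {α A B : ℝ} (hω : Real.sin (A - B) ≠ 0) (k ε r : ℝ) :
    rayMode α A B k ε r ≠ 0 := by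
  rw [← norm_pos_iff, norm_rayMode]
  exact mul_pos (Real.rpow_pos_of_pos (norm_pos_iff.2 (rayFactor_ne_zero hω r)) _) (Real.exp_pos _)

theorem rayMode_zero {α A B : ℝ} (hα : 0 < α) (k ε : ℝ) : rayMode α A B k ε 0 = 1 := by
  simp [rayMode, rayFactor_zero hα, rayAction]

theorem hasDerivAt_rayAction {α A B : ℝ} (hα : 0 < α) (hω : Real.sin (A - B) ≠ 0) (r : ℝ) :
    HasDerivAt (rayAction α A B) (rayRoot α A B r) r :=
  (continuous_rayRoot hα hω).integral_hasStrictDerivAt 0 r |>.hasDerivAt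

theorem hasDerivAt_rayFactor {α ω r : ℝ} (hr : 0 < r) (hω : Real.sin ω ≠ 0) :
    HasDerivAt (rayFactor α ω) (4 * rayCoupling α ω r * rayFactor α ω r) r := by
  have h := ((Real.hasDerivAt_rpow_const (p := α) (Or.inl hr.ne')).ofReal_comp.mul_const
    (Complex.exp (Complex.I * ω))).const_sub 1
  convert! h using 1
  have := rayFactor_ne_zero (α := α) hω r
  rw [rayCoupling]
  field_simp

theorem hasDerivAt_rayFactor_cpow {α ω r : ℝ} (hr : 0 < r) (hω : Real.sin ω ≠ 0) (p : ℂ) :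
    HasDerivAt (fun r => rayFactor α ω r ^ p)
      (4 * p * rayCoupling α ω r * rayFactor α ω r ^ p) r := by
  convert! ((hasDerivAt_id (rayFactor α ω r)).cpow_const (c := p)
    (rayFactor_mem_slitPlane hω r)).comp r (hasDerivAt_rayFactor (α := α) hr hω) using 1
  have := rayFactor_ne_zero (α := α) hω r
  simp only [id]
  rw [Complex.cpow_sub _ _ this, Complex.cpow_one]
  field_simp

theorem hasDerivAt_rayRoot {α A B r : ℝ} (hr : 0 < r) (hω : Real.sin (A - B) ≠ 0) :
    HasDerivAt (rayRoot α A B) (2 * rayCoupling α (A - B) r * rayRoot α A B r) r := by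
  convert! (hasDerivAt_rayFactor_cpow (α := α) hr hω ((1 / 2 : ℝ) : ℂ)).const_mul
    (-Complex.I * Complex.exp (Complex.I * ((B / 2 : ℝ) : ℂ))) using 1
  rw [rayRoot]
  push_cast
  ring

theorem hasDerivAt_rayMode {α A B r : ℝ} (hα : 0 < α) (hr : 0 < r) (hω : Real.sin (A - B) ≠ 0)
    (k ε : ℝ) : HasDerivAt (rayMode α A B k ε)
      ((k * ε * rayRoot α A B r + rayCoupling α (A - B) r) * rayMode α A B k ε r) r := by
  convert! (hasDerivAt_rayFactor_cpow (α := α) hr hω ((1 / 4 : ℝ) : ℂ)).mul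
    (((hasDerivAt_rayAction hα hω r).const_mul (k * ε : ℂ)).cexp) using 1
  rw [rayMode]
  push_cast
  ring

theorem isWKBPath_ray {α A B s₀ s₁ : ℝ} (hα : 0 < α) (hω : Real.sin (A - B) ≠ 0) (h₀ : 0 ≤ s₀)
    (k ε : ℝ) :
    IsWKBPath k s₀ s₁ (fun r => ε * rayRoot α A B r) (rayMode α A B k ε) 1
      (rayCoupling α (A - B)) where
  continuousOn_root := (continuous_const.mul (continuous_rayRoot hα hω)).continuousOn
  continuousOn_mode := by
    have : Continuous (rayAction α A B) :=
      continuous_iff_continuousAt.2 fun r => (hasDerivAt_rayAction hα hω r).continuousAt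
    have := continuous_rayFactor_cpow (ω := A - B) hα hω ((1 / 4 : ℝ) : ℂ)
    unfold rayMode
    fun_prop
  mode_ne_zero s _ := rayMode_ne_zero hω _ _ _
  hasDerivAt_root s hs := by
    convert! (hasDerivAt_rayRoot (α := α) (h₀.trans_lt hs.1) hω).const_mul (ε : ℂ) using 1
    ring
  hasDerivAt_mode s hs := by
    convert! hasDerivAt_rayMode hα (h₀.trans_lt hs.1) hω k ε using 1
    simp [mul_assoc]

theorem abs_sin_le_norm_rayFactor (α ω r : ℝ) : |Real.sin ω| ≤ ‖rayFactor α ω r‖ := by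
  have h : (rayFactor α ω r * Complex.exp (Complex.I * ((-ω : ℝ) : ℂ))).im = -Real.sin ω := by
    rw [rayFactor, sub_mul, mul_assoc, ← Complex.exp_add]
    simp [Complex.exp_im]
  have hle := Complex.abs_im_le_norm (rayFactor α ω r * Complex.exp (Complex.I * ((-ω : ℝ) : ℂ)))
  rwa [h, abs_neg, norm_mul, Complex.norm_exp_I_mul_ofReal, mul_one] at hle

theorem rpow_mul_abs_sin_le_norm_rayFactor (α ω : ℝ) {r : ℝ} (hr : 0 ≤ r) :
    r ^ α * |Real.sin ω| ≤ ‖rayFactor α ω r‖ := by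
  have hle := Complex.abs_im_le_norm (rayFactor α ω r)
  rwa [rayFactor_im, abs_neg, abs_mul, abs_of_nonneg (Real.rpow_nonneg hr _)] at hle

theorem norm_rayCoupling {α r : ℝ} (ω : ℝ) (hα : 0 < α) (hr : 0 < r) :
    ‖rayCoupling α ω r‖ = α * r ^ (α - 1) / (4 * ‖rayFactor α ω r‖) := by
  have hnum : ‖((α * r ^ (α - 1) : ℝ) : ℂ)‖ = α * r ^ (α - 1) :=
    Complex.norm_of_nonneg (by positivity)
  rw [rayCoupling, norm_div, norm_mul, norm_neg, Complex.norm_exp_I_mul_ofReal, hnum]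
  simp

theorem norm_rayCoupling_pos {α ω r : ℝ} (hα : 0 < α) (hω : Real.sin ω ≠ 0) (hr : 0 < r) :
    0 < ‖rayCoupling α ω r‖ := by
  rw [norm_rayCoupling ω hα hr]
  have := norm_pos_iff.2 (rayFactor_ne_zero (α := α) hω r)
  positivity

theorem norm_rayCoupling_le {α ω r : ℝ} (hα : 0 < α) (hω : Real.sin ω ≠ 0) (hr : 0 < r) :
    ‖rayCoupling α ω r‖ ≤ α / (4 * |Real.sin ω|) * r ^ (α - 1) := by
  rw [norm_rayCoupling ω hα hr, div_mul_eq_mul_div]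
  have := abs_pos.2 hω
  gcongr
  exact abs_sin_le_norm_rayFactor _ _ _

theorem norm_rayCoupling_le_inv {α ω r : ℝ} (hα : 0 < α) (hω : Real.sin ω ≠ 0) (hr : 0 < r) :
    ‖rayCoupling α ω r‖ ≤ α / (4 * |Real.sin ω|) * r⁻¹ := by
  have := abs_pos.2 hω
  have := Real.rpow_pos_of_pos hr α
  calc ‖rayCoupling α ω r‖ = α * r ^ (α - 1) / (4 * ‖rayFactor α ω r‖) := norm_rayCoupling ω hα hr
    _ ≤ α * r ^ (α - 1) / (4 * (r ^ α * |Real.sin ω|)) := by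
        gcongr
        exact rpow_mul_abs_sin_le_norm_rayFactor _ _ hr.le
    _ = α / (4 * |Real.sin ω|) * r⁻¹ := by
        rw [Real.rpow_sub_one hr.ne']
        field_simp

theorem rayError_nonneg (α A B r : ℝ) {k : ℝ} (hk : 0 ≤ k) : 0 ≤ rayError α A B k r := by
  unfold rayError; positivity

theorem five_mul_sq_le_rayError_mul (α A B r : ℝ) {k : ℝ} (hk : 0 ≤ k) :
    5 * ‖rayCoupling α (A - B) r‖ ^ 2
      ≤ rayError α A B k r * (4 * k * |(rayRoot α A B r).re| + rayError α A B k r) := by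
  rcases (norm_nonneg (rayCoupling α (A - B) r)).eq_or_lt with h0 | h0
  · simp [rayError, ← h0]
  unfold rayError
  set c := ‖rayCoupling α (A - B) r‖
  have hG := mul_nonneg hk (abs_nonneg (rayRoot α A B r).re)
  rw [mul_assoc 4]
  set G := k * |(rayRoot α A B r).re|
  have hdiff : 5 * c ^ 2 / (c + G) * (4 * G + 5 * c ^ 2 / (c + G)) - 5 * c ^ 2
      = 5 * c ^ 2 * (3 * G ^ 2 + 2 * c * G + 4 * c ^ 2) / (c + G) ^ 2 := by
    field_simp; ring
  have hnonneg : 0 ≤ 5 * c ^ 2 * (3 * G ^ 2 + 2 * c * G + 4 * c ^ 2) / (c + G) ^ 2 := by positivity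
  linarith

theorem continuousOn_rayError {α A B k : ℝ} (hα : 0 < α) (hω : Real.sin (A - B) ≠ 0) (hk : 0 ≤ k) :
    ContinuousOn (rayError α A B k) (Ioi 0) := by
  have hcoupling : ContinuousOn (rayCoupling α (A - B)) (Ioi 0) := by
    have := (continuous_rayFactor (ω := A - B) hα).continuousOn (s := Ioi 0)
    have hpow : ContinuousOn (fun r : ℝ => r ^ (α - 1)) (Ioi 0) :=
      continuousOn_id.rpow_const fun x hx => Or.inl (ne_of_gt hx)
    unfold rayCoupling
    refine ContinuousOn.div (by fun_prop) (by fun_prop) fun r _ => ?_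
    exact mul_ne_zero (by norm_num) (rayFactor_ne_zero hω r)
  have hre : ContinuousOn (fun r => |(rayRoot α A B r).re|) (Ioi 0) :=
    (Complex.continuous_re.comp (continuous_rayRoot (α := α) hα hω)).abs.continuousOn
  unfold rayError
  refine ContinuousOn.div (by fun_prop) (by fun_prop) fun r hr => ?_
  have := norm_rayCoupling_pos hα hω hr
  positivity

theorem rayError_le_norm_rayCoupling (α A B r : ℝ) {k : ℝ} (hk : 0 ≤ k) :
    rayError α A B k r ≤ 5 * ‖rayCoupling α (A - B) r‖ := by
  rcases (norm_nonneg (rayCoupling α (A - B) r)).eq_or_lt with h0 | h0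
  · simp [rayError, ← h0]
  unfold rayError
  rw [div_le_iff₀ (by positivity)]
  have := mul_nonneg h0.le (mul_nonneg hk (abs_nonneg (rayRoot α A B r).re))
  nlinarith

theorem rayError_le_div (α A B r : ℝ) {k : ℝ} (hk : 0 < k) (hr : (rayRoot α A B r).re ≠ 0) :
    rayError α A B k r ≤ 5 * ‖rayCoupling α (A - B) r‖ ^ 2 / (k * |(rayRoot α A B r).re|) := by
  have := abs_pos.2 hr
  unfold rayError
  gcongr
  linarith [norm_nonneg (rayCoupling α (A - B) r)]

theorem rayError_le_rayError {α A B r k l : ℝ} (hα : 0 < α) (hω : Real.sin (A - B) ≠ 0) (hr : 0 < r)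
    (hk : 0 ≤ k) (hkl : k ≤ l) : rayError α A B l r ≤ rayError α A B k r := by
  have := norm_rayCoupling_pos hα hω hr
  unfold rayError
  gcongr

theorem one_add_cos_mul_rpow_le_re_rayRoot_sq {α r : ℝ} (A B : ℝ) (hr : 0 ≤ r) :
    (1 + Real.cos A) * r ^ α - 2 ≤ 2 * (rayRoot α A B r).re ^ 2 := by
  have hsq := rayRoot_sq α A B r
  have hre : (rayRoot α A B r).re ^ 2 - (rayRoot α A B r).im ^ 2
      = Real.cos A * r ^ α - Real.cos B := by
    have := congrArg Complex.re hsq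
    simp [pow_two, Complex.exp_re] at this
    linarith
  have hnorm : r ^ α - 1 ≤ (rayRoot α A B r).re ^ 2 + (rayRoot α A B r).im ^ 2 := by
    rw [← Complex.sq_norm_sub_sq_re, ← add_sub_assoc, add_sub_cancel_left, ← norm_pow, hsq]
    have := norm_sub_norm_le (Complex.exp (Complex.I * A) * ((r ^ α : ℝ) : ℂ))
      (Complex.exp (Complex.I * B))
    rwa [norm_mul, Complex.norm_exp_I_mul_ofReal, Complex.norm_exp_I_mul_ofReal,
      Complex.norm_real, Real.norm_of_nonneg (Real.rpow_nonneg hr _), one_mul] at this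
  linarith [Real.cos_le_one B]

theorem sqrt_mul_rpow_le_abs_re_rayRoot {α A B r : ℝ} (hA : 0 < 1 + Real.cos A) (hr : 0 ≤ r)
    (hrA : 4 / (1 + Real.cos A) ≤ r ^ α) :
    √(1 + Real.cos A) / 2 * r ^ (α / 2) ≤ |(rayRoot α A B r).re| := by
  have hsq : (√(1 + Real.cos A) / 2 * r ^ (α / 2)) ^ 2 ≤ (rayRoot α A B r).re ^ 2 := by
    have hpow : (r ^ (α / 2)) ^ 2 = r ^ α := by
      rw [← Real.rpow_mul_natCast hr]; congr 1; push_cast; ring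
    rw [mul_pow, div_pow, Real.sq_sqrt hA.le, hpow]
    rw [div_le_iff₀ hA] at hrA
    linarith [one_add_cos_mul_rpow_le_re_rayRoot_sq (α := α) A B hr]
  exact le_of_sq_le_sq (hsq.trans_eq (sq_abs _).symm) (abs_nonneg _)

theorem re_rayRoot_ne_zero {α A B r : ℝ} (h : Real.sin A * r ^ α ≠ Real.sin B) :
    (rayRoot α A B r).re ≠ 0 := by
  intro h0
  have := congrArg Complex.im (rayRoot_sq α A B r)
  simp [pow_two, Complex.exp_im, Complex.exp_re, h0] at this
  exact h (by linarith)

/-- Parameters for which the potential `e^{iA} r^α - e^{iB}` has no zero on the ray and neither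
square root of it is asymptotically imaginary, so that the modes separate at infinity. -/
structure IsRegularRay (α A B : ℝ) : Prop where
  alpha_pos : 0 < α
  sin_ne_zero : Real.sin (A - B) ≠ 0
  one_add_cos_pos : 0 < 1 + Real.cos A

/-- The error-control function along a ray: the primitive of `rayError`. -/
noncomputable def rayErrorControl (α A B k r : ℝ) : ℝ := ∫ s in (0 : ℝ)..r, rayError α A B k s

namespace IsRegularRay

variable {α A B k : ℝ}

theorem integrableOn_rayError_Ioc (h : IsRegularRay α A B) (R : ℝ) :
    IntegrableOn (rayError α A B 1) (Ioc 0 R) := by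
  have hbound : IntegrableOn (fun r : ℝ => 5 * (α / (4 * |Real.sin (A - B)|) * r ^ (α - 1)))
      (Ioc 0 R) :=
    ((intervalIntegral.intervalIntegrable_rpow' (by linarith [h.alpha_pos])).1.const_mul
      _).const_mul _
  refine hbound.mono' (((continuousOn_rayError h.alpha_pos h.sin_ne_zero zero_le_one).mono
    Ioc_subset_Ioi_self).aestronglyMeasurable measurableSet_Ioc) ?_
  filter_upwards [ae_restrict_mem measurableSet_Ioc] with r hr
  rw [Real.norm_of_nonneg (rayError_nonneg _ _ _ _ zero_le_one)]
  refine (rayError_le_norm_rayCoupling _ _ _ _ zero_le_one).trans ?_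
  gcongr
  exact norm_rayCoupling_le h.alpha_pos h.sin_ne_zero hr.1

theorem rayError_le_rpow (h : IsRegularRay α A B) {r : ℝ} (hr : 0 < r)
    (hrA : 4 / (1 + Real.cos A) ≤ r ^ α) :
    rayError α A B 1 r ≤ 5 * (α / (4 * |Real.sin (A - B)|)) ^ 2 /
      (√(1 + Real.cos A) / 2) * r ^ (-2 - α / 2) := by
  have hre := sqrt_mul_rpow_le_abs_re_rayRoot (B := B) h.one_add_cos_pos hr.le hrA
  have := Real.rpow_pos_of_pos hr (α / 2)
  have := Real.sqrt_pos.2 h.one_add_cos_pos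
  have hne : (rayRoot α A B r).re ≠ 0 := abs_pos.1 (lt_of_lt_of_le (by positivity) hre)
  calc rayError α A B 1 r
      ≤ 5 * ‖rayCoupling α (A - B) r‖ ^ 2 / |(rayRoot α A B r).re| := by
        simpa only [one_mul] using rayError_le_div α A B r one_pos hne
    _ ≤ 5 * (α / (4 * |Real.sin (A - B)|) * r⁻¹) ^ 2
          / (√(1 + Real.cos A) / 2 * r ^ (α / 2)) := by
        gcongr
        exact norm_rayCoupling_le_inv h.alpha_pos h.sin_ne_zero hr
    _ = _ := by
        rw [Real.rpow_sub hr, Real.rpow_neg hr.le, Real.rpow_two]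
        field_simp

theorem integrableOn_rayError_Ioi (h : IsRegularRay α A B) {R : ℝ} (hR : 0 < R)
    (hRA : 4 / (1 + Real.cos A) ≤ R ^ α) : IntegrableOn (rayError α A B 1) (Ioi R) := by
  have hα := h.alpha_pos
  refine ((integrableOn_Ioi_rpow_of_lt (a := -2 - α / 2) (by linarith) hR).const_mul
    (5 * (α / (4 * |Real.sin (A - B)|)) ^ 2 / (√(1 + Real.cos A) / 2))).mono'
    (((continuousOn_rayError hα h.sin_ne_zero zero_le_one).mono
      (Ioi_subset_Ioi hR.le)).aestronglyMeasurable measurableSet_Ioi) ?_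
  filter_upwards [ae_restrict_mem measurableSet_Ioi] with r hr
  rw [Real.norm_of_nonneg (rayError_nonneg _ _ _ _ zero_le_one)]
  exact h.rayError_le_rpow (hR.trans hr)
    (hRA.trans (Real.rpow_le_rpow hR.le (le_of_lt hr) hα.le))

theorem integrableOn_rayError_one (h : IsRegularRay α A B) :
    IntegrableOn (rayError α A B 1) (Ioi 0) := by
  have hcos := h.one_add_cos_pos
  set R : ℝ := (4 / (1 + Real.cos A)) ^ (1 / α) with hR
  have hR0 : 0 < R := by positivity
  have hRα : R ^ α = 4 / (1 + Real.cos A) := by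
    rw [hR, ← Real.rpow_mul (by positivity), one_div_mul_cancel h.alpha_pos.ne', Real.rpow_one]
  rw [← Ioc_union_Ioi_eq_Ioi hR0.le]
  exact (h.integrableOn_rayError_Ioc R).union (h.integrableOn_rayError_Ioi hR0 hRα.ge)

theorem norm_rayError_le (h : IsRegularRay α A B) (hk : 1 ≤ k) :
    ∀ᵐ r ∂volume.restrict (Ioi 0), ‖rayError α A B k r‖ ≤ rayError α A B 1 r := by
  filter_upwards [ae_restrict_mem measurableSet_Ioi] with r hr
  rw [Real.norm_of_nonneg (rayError_nonneg _ _ _ _ (zero_le_one.trans hk))]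
  exact rayError_le_rayError h.alpha_pos h.sin_ne_zero hr zero_le_one hk

theorem integrableOn_rayError (h : IsRegularRay α A B) (hk : 1 ≤ k) :
    IntegrableOn (rayError α A B k) (Ioi 0) :=
  h.integrableOn_rayError_one.mono'
    ((continuousOn_rayError h.alpha_pos h.sin_ne_zero
      (zero_le_one.trans hk)).aestronglyMeasurable measurableSet_Ioi) (h.norm_rayError_le hk)

theorem tendsto_rayError (h : IsRegularRay α A B) (hsA : Real.sin A ≠ 0) :
    ∀ᵐ r ∂volume.restrict (Ioi 0),
      Filter.Tendsto (fun k => rayError α A B k r) Filter.atTop (nhds 0) := by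
  have hnull : ∀ᵐ r ∂volume.restrict (Ioi (0 : ℝ)), r ≠ (Real.sin B / Real.sin A) ^ (1 / α) :=
    Measure.ae_ne _ _
  filter_upwards [hnull, ae_restrict_mem measurableSet_Ioi] with r hr hr0
  have hne : (rayRoot α A B r).re ≠ 0 := by
    refine re_rayRoot_ne_zero fun hsin => hr ?_
    rw [← hsin, mul_div_cancel_left₀ _ hsA, ← Real.rpow_mul (le_of_lt hr0),
      mul_one_div_cancel h.alpha_pos.ne', Real.rpow_one]
  refine squeeze_zero'
    ((Filter.eventually_ge_atTop 0).mono fun k hk => rayError_nonneg _ _ _ _ hk)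
    ((Filter.eventually_gt_atTop 0).mono fun k hk => rayError_le_div _ _ _ _ hk hne) ?_
  exact (Filter.tendsto_id.atTop_mul_const (abs_pos.2 hne)).const_div_atTop _

theorem tendsto_integral_rayError (h : IsRegularRay α A B) (hsA : Real.sin A ≠ 0) :
    Filter.Tendsto (fun k => ∫ r in Ioi 0, rayError α A B k r) Filter.atTop (nhds 0) := by
  suffices Filter.Tendsto (fun k => ∫ r in Ioi 0, rayError α A B k r) Filter.atTop
      (nhds (∫ _ in Ioi (0 : ℝ), (0 : ℝ))) by simpa only [integral_zero] using this
  refine tendsto_integral_filter_of_dominated_convergence (rayError α A B 1) ?_ ?_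
    h.integrableOn_rayError_one (h.tendsto_rayError hsA)
  · exact (Filter.eventually_ge_atTop 0).mono fun k hk =>
      (continuousOn_rayError h.alpha_pos h.sin_ne_zero hk).aestronglyMeasurable measurableSet_Ioi
  · exact (Filter.eventually_ge_atTop 1).mono fun k hk => h.norm_rayError_le hk

theorem intervalIntegrable_rayError (h : IsRegularRay α A B) (hk : 1 ≤ k) {r : ℝ} (hr : 0 ≤ r) :
    IntervalIntegrable (rayError α A B k) volume 0 r := by
  rw [intervalIntegrable_iff_integrableOn_Ioc_of_le hr]
  exact (h.integrableOn_rayError hk).mono_set Ioc_subset_Ioi_self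

theorem hasDerivAt_rayErrorControl (h : IsRegularRay α A B) (hk : 1 ≤ k) {r : ℝ} (hr : 0 < r) :
    HasDerivAt (rayErrorControl α A B k) (rayError α A B k r) r := by
  have hc := continuousOn_rayError h.alpha_pos h.sin_ne_zero (zero_le_one.trans hk)
  exact intervalIntegral.integral_hasDerivAt_right (h.intervalIntegrable_rayError hk hr.le)
    (hc.stronglyMeasurableAtFilter isOpen_Ioi r hr) (hc.continuousAt (Ioi_mem_nhds hr))

theorem continuousOn_rayErrorControl (h : IsRegularRay α A B) (hk : 1 ≤ k) (s : ℝ) :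
    ContinuousOn (rayErrorControl α A B k) (Icc 0 s) := by
  rcases lt_or_ge s 0 with hs | hs
  · simp [Icc_eq_empty_of_lt hs]
  have hi : IntegrableOn (rayError α A B k) (uIcc 0 s) := by
    rw [uIcc_of_le hs, integrableOn_Icc_iff_integrableOn_Ioc]
    exact (h.integrableOn_rayError hk).mono_set Ioc_subset_Ioi_self
  rw [← uIcc_of_le hs]
  exact intervalIntegral.continuousOn_primitive_interval hi

theorem rayErrorControl_sub_le (h : IsRegularRay α A B) (hk : 1 ≤ k) {s t : ℝ} (hs : 0 ≤ s)
    (hst : s ≤ t) : rayErrorControl α A B k t - rayErrorControl α A B k s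
      ≤ ∫ r in Ioi 0, rayError α A B k r := by
  rw [rayErrorControl, rayErrorControl, intervalIntegral.integral_interval_sub_left
    (h.intervalIntegrable_rayError hk (hs.trans hst)) (h.intervalIntegrable_rayError hk hs),
    intervalIntegral.integral_of_le hst]
  refine setIntegral_mono_set (h.integrableOn_rayError hk) (Filter.Eventually.of_forall fun r =>
    rayError_nonneg _ _ _ _ (zero_le_one.trans hk)) ?_
  exact (Ioc_subset_Ioi_self.trans (Ioi_subset_Ioi hs)).eventuallyLE

end IsRegularRay

/-! ### Propagation of Liouville–Green modes along rays -/

/-- A regular ray on which the error-control function varies by at most `log (17 / 16)`. This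
numerical threshold keeps solutions within a quarter of a pure mode. -/
structure RayControl (α A B k : ℝ) : Prop extends IsRegularRay α A B where
  one_le : 1 ≤ k
  exp_integral_le : Real.exp (∫ r in Ioi 0, rayError α A B k r) ≤ 17 / 16

theorem IsRegularRay.eventually_rayControl {α A B : ℝ} (h : IsRegularRay α A B)
    (hsA : Real.sin A ≠ 0) : ∀ᶠ k in Filter.atTop, RayControl α A B k := by
  have hexp := (Real.continuous_exp.tendsto 0).comp (h.tendsto_integral_rayError hsA)
  rw [Real.exp_zero] at hexp
  filter_upwards [hexp.eventually_le_const (show (1 : ℝ) < 17 / 16 by norm_num),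
    Filter.eventually_ge_atTop 1] with k hle hk
  exact ⟨h, hk, hle⟩

section

variable {k : ℝ} {g F W Y : ℝ → ℂ} {ζ : ℂ} {s : ℝ}

theorem norm_growingPart_decayingPart_of_wkbEnergy_le (hF : F s ≠ 0)
    (h : wkbEnergy k g F W Y ζ s ≤ 17 / 16 * ‖ζ‖ ^ 2) :
    3 / 4 * ‖ζ‖ * ‖F s‖ ≤ ‖growingPart k g W Y s‖ ∧
      ‖growingPart k g W Y s‖ ≤ 5 / 4 * ‖ζ‖ * ‖F s‖ ∧
      ‖decayingPart k g W Y s‖ ≤ 1 / 4 * ‖ζ‖ * ‖F s‖ := by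
  unfold wkbEnergy at h
  set p := growingPart k g W Y s
  set m := decayingPart k g W Y s
  have hF' := norm_pos_iff.2 hF
  have hdist : ‖p / F s - ζ‖ ≤ 1 / 4 * ‖ζ‖ :=
    le_of_sq_le_sq (by nlinarith [sq_nonneg ‖m / F s‖]) (by positivity)
  have hdecaying : ‖m / F s‖ ≤ 1 / 4 * ‖ζ‖ :=
    le_of_sq_le_sq (by nlinarith [sq_nonneg ‖p / F s - ζ‖]) (by positivity)
  have hupper : ‖p / F s‖ ≤ 5 / 4 * ‖ζ‖ := by linarith [norm_le_norm_add_norm_sub' (p / F s) ζ]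
  have hlower : 3 / 4 * ‖ζ‖ ≤ ‖p / F s‖ := by linarith [norm_le_norm_add_norm_sub (p / F s) ζ]
  rw [norm_div] at hdecaying hupper hlower
  exact ⟨(le_div_iff₀ hF').1 hlower, (div_le_iff₀ hF').1 hupper, (div_le_iff₀ hF').1 hdecaying⟩

theorem growingPart_neg_root : growingPart k (fun r => -g r) W Y s = -decayingPart k g W Y s := by
  unfold growingPart decayingPart; ring

theorem decayingPart_neg_root : decayingPart k (fun r => -g r) W Y s = -growingPart k g W Y s := by
  unfold growingPart decayingPart; ring

end

namespace RayControl

variable {α A B k s₀ s₁ : ℝ} {W Y : ℝ → ℂ}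

theorem isErrorControl (hc : RayControl α A B k) (h₀ : 0 ≤ s₀) {p : ℝ → ℝ}
    (hp : ∀ s ∈ Ioo s₀ s₁, p s = |(rayRoot α A B s).re|) :
    IsErrorControl s₀ s₁ (fun s => 2 * k * p s) (rayCoupling α (A - B)) (rayError α A B k)
      (rayErrorControl α A B k) := by
  have hk : 0 ≤ k := zero_le_one.trans hc.one_le
  exact
    { continuousOn := (hc.continuousOn_rayErrorControl hc.one_le s₁).mono (Icc_subset_Icc_left h₀)
      hasDerivAt s hs := hc.hasDerivAt_rayErrorControl hc.one_le (h₀.trans_lt hs.1)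
      rate_nonneg s hs := by rw [hp s hs]; positivity
      density_nonneg s _ := rayError_nonneg _ _ _ _ hk
      coupling_le s hs := by
        rw [hp s hs]
        exact (five_mul_sq_le_rayError_mul α A B s hk).trans_eq (by ring) }

theorem exp_sub_le (hc : RayControl α A B k) {s t : ℝ} (hs : 0 ≤ s) (hst : s ≤ t) :
    Real.exp (rayErrorControl α A B k t - rayErrorControl α A B k s) ≤ 17 / 16 :=
  (Real.exp_le_exp.2 (hc.rayErrorControl_sub_le hc.one_le hs hst)).trans hc.exp_integral_le

theorem isWKBPath (hc : RayControl α A B k) (h₀ : 0 ≤ s₀) (ε : ℝ) :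
    IsWKBPath k s₀ s₁ (fun r => ε * rayRoot α A B r) (rayMode α A B k ε) 1
      (rayCoupling α (A - B)) :=
  isWKBPath_ray hc.alpha_pos hc.sin_ne_zero h₀ k ε

theorem norm_parts_of_decayingPart_eq_zero (hc : RayControl α A B k) (h₀ : 0 ≤ s₀)
    (hs : IsPathSolution k s₀ s₁ (rayRoot α A B) 1 W Y)
    (hG : ∀ s ∈ Ioo s₀ s₁, 0 ≤ (rayRoot α A B s).re)
    (hpure : decayingPart k (rayRoot α A B) W Y s₀ = 0) {s : ℝ} (h : s ∈ Icc s₀ s₁) :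
    let K := ‖growingPart k (rayRoot α A B) W Y s₀‖ / ‖rayMode α A B k 1 s₀‖
    3 / 4 * K * ‖rayMode α A B k 1 s‖ ≤ ‖growingPart k (rayRoot α A B) W Y s‖ ∧
    ‖growingPart k (rayRoot α A B) W Y s‖ ≤ 5 / 4 * K * ‖rayMode α A B k 1 s‖ ∧
    ‖decayingPart k (rayRoot α A B) W Y s‖ ≤ 1 / 4 * K * ‖rayMode α A B k 1 s‖ := by
  intro _
  set ζ := growingPart k (rayRoot α A B) W Y s₀ / rayMode α A B k 1 s₀ with hζ
  have hwkb : IsWKBPath k s₀ s₁ (rayRoot α A B) (rayMode α A B k 1) 1 (rayCoupling α (A - B)) := by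
    simpa using hc.isWKBPath h₀ 1
  have henergy : wkbEnergy k (rayRoot α A B) (rayMode α A B k 1) W Y ζ s ≤ 17 / 16 * ‖ζ‖ ^ 2 :=
    calc wkbEnergy k (rayRoot α A B) (rayMode α A B k 1) W Y ζ s
        ≤ 17 / 16 * wkbEnergy k (rayRoot α A B) (rayMode α A B k 1) W Y ζ s₀ :=
          (hwkb.wkbEnergy_le_left hs
            (hc.isErrorControl h₀ fun s hs => by simp [abs_of_nonneg (hG s hs)]) ζ h).trans
            (mul_le_mul_of_nonneg_right (hc.exp_sub_le h₀ h.1) (wkbEnergy_nonneg _ _))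
      _ = 17 / 16 * ‖ζ‖ ^ 2 := by simp [wkbEnergy, hpure, hζ]
  simpa only [hζ, norm_div] using norm_growingPart_decayingPart_of_wkbEnergy_le
    (rayMode_ne_zero hc.sin_ne_zero _ _ _) henergy

theorem norm_parts_of_growingPart_eq_zero (hc : RayControl α A B k) (h₀ : 0 ≤ s₀)
    (hs : IsPathSolution k s₀ s₁ (rayRoot α A B) 1 W Y)
    (hG : ∀ s ∈ Ioo s₀ s₁, 0 ≤ (rayRoot α A B s).re)
    (hpure : growingPart k (rayRoot α A B) W Y s₁ = 0) {s : ℝ} (h : s ∈ Icc s₀ s₁) :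
    let K := ‖decayingPart k (rayRoot α A B) W Y s₁‖ / ‖rayMode α A B k (-1) s₁‖
    3 / 4 * K * ‖rayMode α A B k (-1) s‖ ≤ ‖decayingPart k (rayRoot α A B) W Y s‖ ∧
    ‖decayingPart k (rayRoot α A B) W Y s‖ ≤ 5 / 4 * K * ‖rayMode α A B k (-1) s‖ ∧
    ‖growingPart k (rayRoot α A B) W Y s‖ ≤ 1 / 4 * K * ‖rayMode α A B k (-1) s‖ := by
  intro _
  set g : ℝ → ℂ := fun r => -rayRoot α A B r with hg
  set ζ := growingPart k g W Y s₁ / rayMode α A B k (-1) s₁ with hζ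
  have hwkb : IsWKBPath k s₀ s₁ g (rayMode α A B k (-1)) 1 (rayCoupling α (A - B)) := by
    simpa using hc.isWKBPath h₀ (-1)
  have henergy : wkbEnergy k g (rayMode α A B k (-1)) W Y ζ s ≤ 17 / 16 * ‖ζ‖ ^ 2 :=
    calc wkbEnergy k g (rayMode α A B k (-1)) W Y ζ s
        ≤ 17 / 16 * wkbEnergy k g (rayMode α A B k (-1)) W Y ζ s₁ :=
          (hwkb.wkbEnergy_le_right (hs.of_sq_eq fun s _ => (neg_sq _).symm)
            (hc.isErrorControl h₀ fun s hs => by simp [g, abs_of_nonneg (hG s hs)]) ζ h).trans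
            (mul_le_mul_of_nonneg_right (hc.exp_sub_le (h₀.trans h.1) h.2) (wkbEnergy_nonneg _ _))
      _ = 17 / 16 * ‖ζ‖ ^ 2 := by
          have : decayingPart k g W Y s₁ = 0 := by rw [decayingPart_neg_root, hpure, neg_zero]
          simp [wkbEnergy, this, hζ]
  have hbounds := norm_growingPart_decayingPart_of_wkbEnergy_le
    (rayMode_ne_zero hc.sin_ne_zero _ _ _) henergy
  simpa only [hζ, hg, growingPart_neg_root, decayingPart_neg_root, norm_neg, norm_div] using hbounds

theorem wkbEnergy_le (hc : RayControl α A B k) (h₀ : 0 ≤ s₀) (h₁ : s₀ ≤ s₁)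
    (hs : IsPathSolution k s₀ s₁ (rayRoot α A B) 1 W Y)
    (hG : ∀ s ∈ Ioo s₀ s₁, (rayRoot α A B s).re ≤ 0) :
    wkbEnergy k (rayRoot α A B) (rayMode α A B k 1) W Y 0 s₀
      ≤ 17 / 16 * wkbEnergy k (rayRoot α A B) (rayMode α A B k 1) W Y 0 s₁ := by
  have hwkb : IsWKBPath k s₀ s₁ (rayRoot α A B) (rayMode α A B k 1) 1 (rayCoupling α (A - B)) := by
    simpa using hc.isWKBPath h₀ 1
  exact (hwkb.wkbEnergy_le_right hs
    (hc.isErrorControl h₀ fun s hs => by simp [abs_of_nonpos (hG s hs)]) 0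
    (left_mem_Icc.2 h₁)).trans
    (mul_le_mul_of_nonneg_right (hc.exp_sub_le h₀ h₁) (wkbEnergy_nonneg _ _))

end RayControl

/-! ### Fundamental solutions of `V'' = Λ (x^α - 1) V` -/

/-- Exponents of the generalised power series of the fundamental solutions. -/
noncomputable def frobExponent (α e : ℝ) (n j : ℕ) : ℝ := e + 2 * n + α * j

/-- Coefficients of the generalised power series of the fundamental solutions. -/
noncomputable def frobCoeff (Λ : ℂ) (α e : ℝ) : ℕ → ℕ → ℂ
  | 0, 0 => 1
  | 0, _ + 1 => 0
  | n + 1, 0 => -Λ * frobCoeff Λ α e n 0 /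
      (frobExponent α e (n + 1) 0 * (frobExponent α e (n + 1) 0 - 1))
  | n + 1, j + 1 => Λ * (frobCoeff Λ α e n j - frobCoeff Λ α e n (j + 1)) /
      (frobExponent α e (n + 1) (j + 1) * (frobExponent α e (n + 1) (j + 1) - 1))

/-- The `n`-th Picard increment of a fundamental solution. -/
noncomputable def frobTerm (Λ : ℂ) (α e : ℝ) (n : ℕ) (x : ℂ) : ℂ :=
  ∑ j ∈ Finset.range (n + 1), frobCoeff Λ α e n j * x ^ (frobExponent α e n j : ℂ)

/-- The derivative of `frobTerm`. -/
noncomputable def frobTermDeriv (Λ : ℂ) (α e : ℝ) (n : ℕ) (x : ℂ) : ℂ :=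
  ∑ j ∈ Finset.range (n + 1), frobCoeff Λ α e n j * (frobExponent α e n j *
    x ^ ((frobExponent α e n j - 1 : ℝ) : ℂ))

/-- The fundamental solution behaving like `x^e` at the origin, `e ∈ {0, 1}`. -/
noncomputable def frobSol (Λ : ℂ) (α e : ℝ) (x : ℂ) : ℂ := ∑' n, frobTerm Λ α e n x

/-- The derivative of `frobSol`. -/
noncomputable def frobSolDeriv (Λ : ℂ) (α e : ℝ) (x : ℂ) : ℂ := ∑' n, frobTermDeriv Λ α e n x

section

variable {Λ : ℂ} {α e : ℝ}

theorem frobExponent_succ_sub_two (n j : ℕ) :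
    frobExponent α e (n + 1) j - 1 - 1 = frobExponent α e n j := by
  unfold frobExponent; push_cast; ring

theorem frobExponent_nonneg (hα : 0 < α) (he : 0 ≤ e) (n j : ℕ) : 0 ≤ frobExponent α e n j := by
  unfold frobExponent; positivity

theorem two_le_frobExponent_succ (hα : 0 < α) (he : 0 ≤ e) (n j : ℕ) :
    2 * (n : ℝ) + 2 ≤ frobExponent α e (n + 1) j := by
  linarith [frobExponent_nonneg hα he 0 j, frobExponent_succ_sub_two (α := α) (e := e) n j,
    show frobExponent α e n j = 2 * n + frobExponent α e 0 j by simp [frobExponent]; ring]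

theorem one_lt_frobExponent_succ (hα : 0 < α) (he : 0 ≤ e) (n j : ℕ) :
    1 < frobExponent α e (n + 1) j := by
  linarith [two_le_frobExponent_succ hα he n j, (n.cast_nonneg : (0 : ℝ) ≤ n)]

theorem frobExponent_le (hα : 0 < α) (he : e ≤ 1) {n j : ℕ} (h : j ≤ n) :
    frobExponent α e n j ≤ 1 + (2 + α) * n := by
  have hj : (j : ℝ) ≤ n := by exact_mod_cast h
  unfold frobExponent
  nlinarith

theorem frobExponent_eq_zero_or_one_le (hα : 0 < α) (he : e = 0 ∨ e = 1) {n j : ℕ} (hj : j ≤ n) :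
    frobExponent α e n j = 0 ∨ 1 ≤ frobExponent α e n j := by
  rcases n with _ | n
  · obtain rfl : j = 0 := by omega
    rcases he with rfl | rfl <;> simp [frobExponent]
  · exact Or.inr (one_lt_frobExponent_succ hα (by rcases he with rfl | rfl <;> norm_num) n j).le

theorem frobCoeff_eq_zero {n j : ℕ} (h : n < j) : frobCoeff Λ α e n j = 0 := by
  induction n generalizing j with
  | zero => obtain ⟨j, rfl⟩ := Nat.exists_eq_succ_of_ne_zero (by omega : j ≠ 0); rfl
  | succ n ih =>
    obtain ⟨j, rfl⟩ := Nat.exists_eq_succ_of_ne_zero (by omega : j ≠ 0)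
    simp only [frobCoeff]
    rw [ih (by omega), ih (by omega)]
    simp

theorem norm_div_frobExponent_le (hα : 0 < α) (he : 0 ≤ e) (n j : ℕ) {z : ℂ} {b : ℝ}
    (hz : ‖z‖ ≤ b) :
    ‖z / (frobExponent α e (n + 1) j * (frobExponent α e (n + 1) j - 1))‖ ≤ b / (n + 1) := by
  have hp := two_le_frobExponent_succ hα he n j
  set p := frobExponent α e (n + 1) j
  have : (0 : ℝ) ≤ n := n.cast_nonneg
  have hden : (n : ℝ) + 1 ≤ p * (p - 1) := by nlinarith
  have hcast : ((p : ℂ) * (p - 1)) = ((p * (p - 1) : ℝ) : ℂ) := by push_cast; ring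
  rw [hcast, norm_div, Complex.norm_of_nonneg (by linarith)]
  have := (norm_nonneg z).trans hz
  gcongr

theorem norm_frobCoeff_le (hα : 0 < α) (he : 0 ≤ e) (n j : ℕ) :
    ‖frobCoeff Λ α e n j‖ ≤ (2 * ‖Λ‖) ^ n / n.factorial := by
  induction n generalizing j with
  | zero =>
    cases j <;> simp [frobCoeff]
  | succ n ih =>
    have hsucc : (2 * ‖Λ‖) ^ (n + 1) / ((n + 1).factorial : ℝ)
        = (‖Λ‖ * (2 * ((2 * ‖Λ‖) ^ n / n.factorial))) / (n + 1) := by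
      rw [Nat.factorial_succ]; push_cast; field_simp; ring
    rw [hsucc]
    cases j with
    | zero =>
      refine norm_div_frobExponent_le hα he n 0 ?_
      rw [norm_mul, norm_neg]
      gcongr
      linarith [ih 0, norm_nonneg (frobCoeff Λ α e n 0)]
    | succ j =>
      refine norm_div_frobExponent_le hα he n (j + 1) ?_
      rw [norm_mul]
      gcongr
      linarith [ih j, ih (j + 1), norm_sub_le (frobCoeff Λ α e n j) (frobCoeff Λ α e n (j + 1))]

/-- Common bound for `frobTerm` and `frobTermDeriv` on the disc of radius `R`. -/
noncomputable def frobBound (Λ : ℂ) (α R : ℝ) (n : ℕ) : ℝ :=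
  R * ((2 * (3 + α) * (2 * ‖Λ‖) * R ^ (2 + α)) ^ n / n.factorial)

theorem summable_frobBound (R : ℝ) : Summable (frobBound Λ α R) :=
  (Real.summable_pow_div_factorial _).mul_left _

theorem succ_mul_one_add_mul_le_pow (hα : 0 < α) (n : ℕ) :
    ((n : ℝ) + 1) * (1 + (2 + α) * n) ≤ (2 * (3 + α)) ^ n := by
  have htwo := one_add_mul_le_pow (show (-2 : ℝ) ≤ 1 by norm_num) n
  have hthree := one_add_mul_le_pow (show -2 ≤ 2 + α by linarith) n
  calc ((n : ℝ) + 1) * (1 + (2 + α) * n) ≤ (1 + 1) ^ n * (1 + (2 + α)) ^ n := by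
        gcongr <;> linarith
    _ = (2 * (3 + α)) ^ n := by rw [← mul_pow]; ring

theorem norm_sum_range_le_frobBound (hα : 0 < α) {R : ℝ} (hR : 1 ≤ R) (n : ℕ) {a : ℕ → ℂ}
    (ha : ∀ j ≤ n, ‖a j‖ ≤
      (2 * ‖Λ‖) ^ n / n.factorial * ((1 + (2 + α) * n) * R ^ (1 + (2 + α) * n))) :
    ‖∑ j ∈ Finset.range (n + 1), a j‖ ≤ frobBound Λ α R n := by
  refine (norm_sum_le _ _).trans ((Finset.sum_le_card_nsmul _ _ _ fun j hj =>
    ha j (by simpa [Nat.lt_succ_iff] using hj)).trans ?_)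
  rw [Finset.card_range, nsmul_eq_mul]
  push_cast
  calc ((n : ℝ) + 1) *
        ((2 * ‖Λ‖) ^ n / n.factorial * ((1 + (2 + α) * n) * R ^ (1 + (2 + α) * n)))
      = (((n : ℝ) + 1) * (1 + (2 + α) * n)) *
        ((2 * ‖Λ‖) ^ n / n.factorial * R ^ (1 + (2 + α) * n)) := by ring
    _ ≤ (2 * (3 + α)) ^ n * ((2 * ‖Λ‖) ^ n / n.factorial * R ^ (1 + (2 + α) * n)) := by
        gcongr; exact succ_mul_one_add_mul_le_pow hα n
    _ = frobBound Λ α R n := by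
        rw [frobBound, Real.rpow_add (by linarith), Real.rpow_one,
          Real.rpow_mul_natCast (by linarith), mul_pow _ (R ^ (2 + α)), mul_pow _ (2 * ‖Λ‖)]
        ring

theorem norm_frobTerm_le (hα : 0 < α) (he : e = 0 ∨ e = 1) {R : ℝ} (hR : 1 ≤ R)
    (n : ℕ) {x : ℂ} (hx : ‖x‖ ≤ R) : ‖frobTerm Λ α e n x‖ ≤ frobBound Λ α R n := by
  have he0 : 0 ≤ e := by rcases he with rfl | rfl <;> norm_num
  have he1 : e ≤ 1 := by rcases he with rfl | rfl <;> norm_num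
  refine norm_sum_range_le_frobBound hα hR n fun j hj => ?_
  rw [norm_mul, Complex.norm_cpow_real]
  refine mul_le_mul (norm_frobCoeff_le hα he0 n j) ?_ (by positivity) (by positivity)
  calc ‖x‖ ^ frobExponent α e n j ≤ R ^ frobExponent α e n j :=
        Real.rpow_le_rpow (norm_nonneg _) hx (frobExponent_nonneg hα he0 n j)
    _ ≤ R ^ (1 + (2 + α) * n) :=
        Real.rpow_le_rpow_of_exponent_le hR (frobExponent_le hα he1 hj)
    _ ≤ _ := le_mul_of_one_le_left (by positivity) (le_add_of_nonneg_right (by positivity))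

theorem norm_frobTermDeriv_le (hα : 0 < α) (he : e = 0 ∨ e = 1) {R : ℝ} (hR : 1 ≤ R)
    (n : ℕ) {x : ℂ} (hx : ‖x‖ ≤ R) : ‖frobTermDeriv Λ α e n x‖ ≤ frobBound Λ α R n := by
  have he0 : 0 ≤ e := by rcases he with rfl | rfl <;> norm_num
  have he1 : e ≤ 1 := by rcases he with rfl | rfl <;> norm_num
  refine norm_sum_range_le_frobBound hα hR n fun j hj => ?_
  rw [norm_mul]
  refine mul_le_mul (norm_frobCoeff_le hα he0 n j) ?_ (by positivity) (by positivity)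
  rw [norm_mul, Complex.norm_cpow_real, Complex.norm_of_nonneg (frobExponent_nonneg hα he0 n j)]
  rcases frobExponent_eq_zero_or_one_le hα he hj with hzero | hone
  · rw [hzero, zero_mul]; positivity
  refine mul_le_mul (frobExponent_le hα he1 hj) ?_ (by positivity) (by positivity)
  calc ‖x‖ ^ (frobExponent α e n j - 1) ≤ R ^ (frobExponent α e n j - 1) :=
        Real.rpow_le_rpow (norm_nonneg _) hx (by linarith)
    _ ≤ R ^ (1 + (2 + α) * n) :=
        Real.rpow_le_rpow_of_exponent_le hR (by linarith [frobExponent_le hα he1 hj])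

theorem hasDerivAt_cpow_real (p : ℝ) {x : ℂ} (hx : x ∈ Complex.slitPlane) :
    HasDerivAt (fun x : ℂ => x ^ (p : ℂ)) (p * x ^ ((p - 1 : ℝ) : ℂ)) x := by
  convert! (hasDerivAt_id x).cpow_const (c := (p : ℂ)) hx using 1
  push_cast; simp

theorem hasDerivAt_frobTerm (n : ℕ) {x : ℂ} (hx : x ∈ Complex.slitPlane) :
    HasDerivAt (frobTerm Λ α e n) (frobTermDeriv Λ α e n x) x := by
  unfold frobTerm frobTermDeriv
  exact HasDerivAt.fun_sum fun j _ => (hasDerivAt_cpow_real _ hx).const_mul _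

theorem hasDerivAt_frobTermDeriv_zero (he : e = 0 ∨ e = 1) {x : ℂ} :
    HasDerivAt (frobTermDeriv Λ α e 0) 0 x := by
  have hconst : frobTermDeriv Λ α e 0 = fun _ => (e : ℂ) := by
    funext x
    rcases he with rfl | rfl <;> simp [frobTermDeriv, frobExponent, frobCoeff]
  rw [hconst]
  exact hasDerivAt_const _ _

theorem frobCoeff_succ_mul (hα : 0 < α) (he : 0 ≤ e) (n j : ℕ) :
    frobCoeff Λ α e (n + 1) j *
        (frobExponent α e (n + 1) j * ((frobExponent α e (n + 1) j - 1 : ℝ) : ℂ))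
      = Λ * ((if j = 0 then 0 else frobCoeff Λ α e n (j - 1)) - frobCoeff Λ α e n j) := by
  have hp := one_lt_frobExponent_succ hα he n j
  have hp0 : (frobExponent α e (n + 1) j : ℂ) ≠ 0 := by
    exact_mod_cast (by linarith : (0 : ℝ) < frobExponent α e (n + 1) j).ne'
  have hp1 : ((frobExponent α e (n + 1) j : ℂ) - 1) ≠ 0 := by
    exact_mod_cast (sub_pos.2 hp).ne'
  cases j with
  | zero => simp only [frobCoeff]; push_cast; field_simp; simp
  | succ j => simp only [frobCoeff]; push_cast; field_simp

theorem sum_pred_frobCoeff_mul_cpow (n : ℕ) {x : ℂ} (hx : x ≠ 0) :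
    ∑ j ∈ Finset.range (n + 2),
        (if j = 0 then 0 else frobCoeff Λ α e n (j - 1)) * x ^ (frobExponent α e n j : ℂ)
      = x ^ (α : ℂ) * frobTerm Λ α e n x := by
  rw [Finset.sum_range_succ', if_pos rfl, zero_mul, add_zero, frobTerm, Finset.mul_sum]
  refine Finset.sum_congr rfl fun j _ => ?_
  have hexp : frobExponent α e n (j + 1) = α + frobExponent α e n j := by
    unfold frobExponent; push_cast; ring
  rw [if_neg (Nat.succ_ne_zero j), Nat.add_sub_cancel, hexp, Complex.ofReal_add,
    Complex.cpow_add _ _ hx]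
  ring

theorem hasDerivAt_frobTermDeriv_succ (hα : 0 < α) (he : 0 ≤ e) (n : ℕ) {x : ℂ}
    (hx : x ∈ Complex.slitPlane) :
    HasDerivAt (frobTermDeriv Λ α e (n + 1)) (Λ * (x ^ (α : ℂ) - 1) * frobTerm Λ α e n x) x := by
  set p := frobExponent α e (n + 1)
  have hderiv : HasDerivAt (frobTermDeriv Λ α e (n + 1))
      (∑ j ∈ Finset.range (n + 1 + 1), frobCoeff Λ α e (n + 1) j *
        (p j * (((p j - 1 : ℝ) : ℂ) * x ^ ((p j - 1 - 1 : ℝ) : ℂ)))) x := by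
    unfold frobTermDeriv
    exact HasDerivAt.fun_sum fun j _ => ((hasDerivAt_cpow_real _ hx).const_mul _).const_mul _
  convert! hderiv using 1
  have hterm : ∀ j, frobCoeff Λ α e (n + 1) j *
        (p j * (((p j - 1 : ℝ) : ℂ) * x ^ ((p j - 1 - 1 : ℝ) : ℂ)))
      = Λ * ((if j = 0 then 0 else frobCoeff Λ α e n (j - 1)) * x ^ (frobExponent α e n j : ℂ))
        - Λ * (frobCoeff Λ α e n j * x ^ (frobExponent α e n j : ℂ)) := by
    intro j
    linear_combination (frobCoeff_succ_mul (Λ := Λ) hα he n j) * x ^ (frobExponent α e n j : ℂ)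
      + (frobCoeff Λ α e (n + 1) j * (p j * ((p j - 1 : ℝ) : ℂ))) *
        congrArg (fun q : ℝ => x ^ (q : ℂ)) (frobExponent_succ_sub_two (α := α) (e := e) n j)
  simp only [hterm, Finset.sum_sub_distrib, ← Finset.mul_sum]
  rw [sum_pred_frobCoeff_mul_cpow n (Complex.slitPlane_ne_zero hx), Finset.sum_range_succ,
    frobCoeff_eq_zero (Nat.lt_succ_self n)]
  simp only [frobTerm]
  ring

theorem hasDerivAt_tsum_of_norm_le {F F' : ℕ → ℂ → ℂ} {u : ℕ → ℝ} {s : Set ℂ} {R : ℝ}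
    (hs : IsOpen s) (hu : Summable u) (hF : ∀ n, ∀ x ∈ s, HasDerivAt (F n) (F' n x) x)
    (hb : ∀ n x, ‖x‖ ≤ R → ‖F n x‖ ≤ u n) {x : ℂ} (hx : x ∈ s) (hxR : ‖x‖ < R) :
    HasDerivAt (fun x => ∑' n, F n x) (∑' n, F' n x) x := by
  have hU : IsOpen (s ∩ Metric.ball 0 R) := hs.inter Metric.isOpen_ball
  have hxU : x ∈ s ∩ Metric.ball 0 R := ⟨hx, by simpa using hxR⟩
  have hd : ∀ n, DifferentiableOn ℂ (F n) (s ∩ Metric.ball 0 R) := fun n y hy =>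
    (hF n y hy.1).differentiableAt.differentiableWithinAt
  have hle : ∀ n, ∀ y ∈ s ∩ Metric.ball 0 R, ‖F n y‖ ≤ u n := fun n y hy =>
    hb n y (le_of_lt (by simpa using hy.2))
  have hdiff := (Complex.differentiableOn_tsum_of_summable_norm hu hd hU hle).differentiableAt
    (hU.mem_nhds hxU)
  convert! hdiff.hasDerivAt using 1
  rw [← (Complex.hasSum_deriv_of_summable_norm hu hd hU hle hxU).tsum_eq]
  exact tsum_congr fun n => (hF n x hx).deriv.symm

theorem hasDerivAt_frobSol (hα : 0 < α) (he : e = 0 ∨ e = 1) {x : ℂ}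
    (hx : x ∈ Complex.slitPlane) : HasDerivAt (frobSol Λ α e) (frobSolDeriv Λ α e x) x :=
  hasDerivAt_tsum_of_norm_le Complex.isOpen_slitPlane (summable_frobBound (‖x‖ + 1))
    (fun n _ hy => hasDerivAt_frobTerm n hy)
    (fun n _ hy => norm_frobTerm_le hα he (by linarith [norm_nonneg x]) n hy) hx (by linarith)

theorem summable_frobTerm (hα : 0 < α) (he : e = 0 ∨ e = 1) (x : ℂ) :
    Summable fun n => frobTerm Λ α e n x :=
  Summable.of_norm_bounded (summable_frobBound (max 1 ‖x‖)) fun n =>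
    norm_frobTerm_le hα he (le_max_left _ _) n (le_max_right _ _)

theorem hasDerivAt_frobSolDeriv (hα : 0 < α) (he : e = 0 ∨ e = 1) {x : ℂ}
    (hx : x ∈ Complex.slitPlane) :
    HasDerivAt (frobSolDeriv Λ α e) (Λ * (x ^ (α : ℂ) - 1) * frobSol Λ α e x) x := by
  have he0 : 0 ≤ e := by rcases he with rfl | rfl <;> norm_num
  let F' : ℕ → ℂ → ℂ := fun n =>
    Nat.casesOn n 0 fun n x => Λ * (x ^ (α : ℂ) - 1) * frobTerm Λ α e n x
  have hsum : HasSum (fun n => F' n x) (Λ * (x ^ (α : ℂ) - 1) * frobSol Λ α e x) := by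
    rw [← hasSum_nat_add_iff' 1]
    simpa [F', frobSol] using (summable_frobTerm hα he x).hasSum.mul_left (Λ * (x ^ (α : ℂ) - 1))
  rw [← hsum.tsum_eq]
  refine hasDerivAt_tsum_of_norm_le Complex.isOpen_slitPlane (summable_frobBound (‖x‖ + 1))
    (fun n y hy => ?_)
    (fun n _ hy => norm_frobTermDeriv_le hα he (by linarith [norm_nonneg x]) n hy) hx (by linarith)
  cases n with
  | zero => exact hasDerivAt_frobTermDeriv_zero he
  | succ n => exact hasDerivAt_frobTermDeriv_succ hα he0 n hy

theorem continuousOn_cpow_real {p : ℝ} (hp : 0 ≤ p) :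
    ContinuousOn (fun x : ℂ => x ^ (p : ℂ)) (insert 0 Complex.slitPlane) := by
  rcases hp.eq_or_lt with rfl | hp
  · simpa using continuousOn_const
  rintro x (rfl | hx)
  · exact (Complex.continuousAt_cpow_const_of_re_pos (Or.inl (by simp))
      (by simpa)).continuousWithinAt
  · exact (hasDerivAt_cpow_real p hx).continuousAt.continuousWithinAt

theorem continuousOn_frobTerm (hα : 0 < α) (he : 0 ≤ e) (n : ℕ) :
    ContinuousOn (frobTerm Λ α e n) (insert 0 Complex.slitPlane) :=
  continuousOn_finsetSum _ fun j _ =>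
    continuousOn_const.mul (continuousOn_cpow_real (frobExponent_nonneg hα he n j))

theorem continuousOn_frobTermDeriv (hα : 0 < α) (he : e = 0 ∨ e = 1) (n : ℕ) :
    ContinuousOn (frobTermDeriv Λ α e n) (insert 0 Complex.slitPlane) := by
  refine continuousOn_finsetSum _ fun j hj => continuousOn_const.mul ?_
  have hjn : j ≤ n := by simpa [Nat.lt_succ_iff] using hj
  rcases frobExponent_eq_zero_or_one_le hα he hjn with hzero | hone
  · rw [hzero]; simpa using continuousOn_const
  · exact continuousOn_const.mul (continuousOn_cpow_real (by linarith))

theorem continuousOn_tsum_of_norm_le {F : ℕ → ℂ → ℂ} {u : ℝ → ℕ → ℝ} (hu : ∀ R, Summable (u R))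
    {s : Set ℂ} (hF : ∀ n, ContinuousOn (F n) s)
    (hb : ∀ R, 1 ≤ R → ∀ n x, ‖x‖ ≤ R → ‖F n x‖ ≤ u R n) :
    ContinuousOn (fun x => ∑' n, F n x) s := by
  intro x hx
  have hR : (1 : ℝ) ≤ ‖x‖ + 1 := by linarith [norm_nonneg x]
  have hball : ContinuousOn (fun x => ∑' n, F n x) (s ∩ Metric.ball 0 (‖x‖ + 1)) :=
    continuousOn_tsum (fun n => (hF n).mono inter_subset_left) (hu (‖x‖ + 1))
      fun n y hy => hb _ hR n y (le_of_lt (by simpa using hy.2))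
  exact (hball x ⟨hx, by simp⟩).mono_of_mem_nhdsWithin
    (Filter.inter_mem self_mem_nhdsWithin
      (mem_nhdsWithin_of_mem_nhds (Metric.isOpen_ball.mem_nhds (by simp))))

theorem continuousOn_frobSol (hα : 0 < α) (he : e = 0 ∨ e = 1) :
    ContinuousOn (frobSol Λ α e) (insert 0 Complex.slitPlane) :=
  continuousOn_tsum_of_norm_le (summable_frobBound (Λ := Λ) (α := α))
    (continuousOn_frobTerm hα (by rcases he with rfl | rfl <;> norm_num))
    fun _ hR n _ hx => norm_frobTerm_le hα he hR n hx

theorem continuousOn_frobSolDeriv (hα : 0 < α) (he : e = 0 ∨ e = 1) :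
    ContinuousOn (frobSolDeriv Λ α e) (insert 0 Complex.slitPlane) :=
  continuousOn_tsum_of_norm_le (summable_frobBound (Λ := Λ) (α := α))
    (continuousOn_frobTermDeriv hα he) fun _ hR n _ hx => norm_frobTermDeriv_le hα he hR n hx

theorem frobSol_apply_zero (hα : 0 < α) (he : 0 ≤ e) : frobSol Λ α e 0 = (0 : ℂ) ^ (e : ℂ) := by
  rw [frobSol, tsum_eq_single 0]
  · simp [frobTerm, frobCoeff, frobExponent]
  · intro n hn
    obtain ⟨n, rfl⟩ := Nat.exists_eq_succ_of_ne_zero hn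
    refine Finset.sum_eq_zero fun j _ => ?_
    rw [Complex.zero_cpow, mul_zero]
    exact_mod_cast (zero_lt_one.trans (one_lt_frobExponent_succ hα he n j)).ne'

theorem frobSolDeriv_apply_zero (hα : 0 < α) (he : e = 0 ∨ e = 1) : frobSolDeriv Λ α e 0 = e := by
  have he0 : 0 ≤ e := by rcases he with rfl | rfl <;> norm_num
  rw [frobSolDeriv, tsum_eq_single 0]
  · rcases he with rfl | rfl <;> simp [frobTermDeriv, frobCoeff, frobExponent]
  · intro n hn
    obtain ⟨n, rfl⟩ := Nat.exists_eq_succ_of_ne_zero hn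
    refine Finset.sum_eq_zero fun j _ => ?_
    rw [Complex.zero_cpow, mul_zero, mul_zero]
    exact_mod_cast (sub_pos.2 (one_lt_frobExponent_succ hα he0 n j)).ne'

end

/-- `(V, V')` is a solution of `V'' = Λ (x^α - 1) V` on the slit plane, continuous up to `0`. -/
structure IsSlitSolution (Λ : ℂ) (α : ℝ) (V V' : ℂ → ℂ) : Prop where
  continuousOn : ContinuousOn V (insert 0 Complex.slitPlane)
  continuousOn_deriv : ContinuousOn V' (insert 0 Complex.slitPlane)
  hasDerivAt : ∀ x ∈ Complex.slitPlane, HasDerivAt V (V' x) x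
  hasDerivAt_deriv : ∀ x ∈ Complex.slitPlane, HasDerivAt V' (Λ * (x ^ (α : ℂ) - 1) * V x) x

theorem isSlitSolution_frobSol (Λ : ℂ) {α e : ℝ} (hα : 0 < α) (he : e = 0 ∨ e = 1) :
    IsSlitSolution Λ α (frobSol Λ α e) (frobSolDeriv Λ α e) :=
  ⟨continuousOn_frobSol hα he, continuousOn_frobSolDeriv hα he,
    fun _ hx => hasDerivAt_frobSol hα he hx, fun _ hx => hasDerivAt_frobSolDeriv hα he hx⟩

theorem IsSlitSolution.linearCombination {Λ : ℂ} {α : ℝ} {V V' U U' : ℂ → ℂ}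
    (hV : IsSlitSolution Λ α V V') (hU : IsSlitSolution Λ α U U') (a b : ℂ) :
    IsSlitSolution Λ α (fun x => a * V x + b * U x) (fun x => a * V' x + b * U' x) where
  continuousOn := (continuousOn_const.mul hV.continuousOn).add
    (continuousOn_const.mul hU.continuousOn)
  continuousOn_deriv := (continuousOn_const.mul hV.continuousOn_deriv).add
    (continuousOn_const.mul hU.continuousOn_deriv)
  hasDerivAt x hx := ((hV.hasDerivAt x hx).const_mul a).add ((hU.hasDerivAt x hx).const_mul b)
  hasDerivAt_deriv x hx := by
    convert! ((hV.hasDerivAt_deriv x hx).const_mul a).add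
      ((hU.hasDerivAt_deriv x hx).const_mul b) using 1
    ring

theorem zero_mem_closure_slitPlane : (0 : ℂ) ∈ closure Complex.slitPlane := by
  refine mem_closure_of_tendsto (f := fun n : ℕ => ((1 / ((n : ℝ) + 1) : ℝ) : ℂ))
    (b := Filter.atTop) ?_ (Filter.Eventually.of_forall fun n => ?_)
  · have := (Complex.continuous_ofReal.tendsto 0).comp
      (tendsto_one_div_add_atTop_nhds_zero_nat (𝕜 := ℝ))
    rwa [Complex.ofReal_zero] at this
  · exact Complex.ofReal_mem_slitPlane.2 (by positivity)

theorem IsSlitSolution.wronskian_eq {Λ : ℂ} {α : ℝ} {V V' U U' : ℂ → ℂ}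
    (hV : IsSlitSolution Λ α V V') (hU : IsSlitSolution Λ α U U') {x : ℂ}
    (hx : x ∈ Complex.slitPlane) :
    V x * U' x - V' x * U x = V 0 * U' 0 - V' 0 * U 0 := by
  set f : ℂ → ℂ := fun x => V x * U' x - V' x * U x with hf
  have hd : ∀ y ∈ Complex.slitPlane, HasDerivAt f 0 y := fun y hy => by
    convert! ((hV.hasDerivAt y hy).mul (hU.hasDerivAt_deriv y hy)).sub
      ((hV.hasDerivAt_deriv y hy).mul (hU.hasDerivAt y hy)) using 1
    ring
  have hconst : ∀ y ∈ Complex.slitPlane, f y = f x := fun y hy =>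
    Complex.isOpen_slitPlane.is_const_of_deriv_eq_zero
      (Complex.starConvex_one_slitPlane.isPathConnected (by simp)).isConnected.isPreconnected
      (fun z hz => (hd z hz).differentiableAt.differentiableWithinAt)
      (fun z hz => (hd z hz).deriv) hy hx
  have hc : ContinuousWithinAt f Complex.slitPlane 0 :=
    (((hV.continuousOn.mul hU.continuousOn_deriv).sub
      (hV.continuousOn_deriv.mul hU.continuousOn)) 0 (mem_insert _ _)).mono (subset_insert _ _)
  have : (nhdsWithin 0 Complex.slitPlane).NeBot :=
    mem_closure_iff_nhdsWithin_neBot.1 zero_mem_closure_slitPlane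
  have hlim : Filter.Tendsto f (nhdsWithin 0 Complex.slitPlane) (nhds (f x)) :=
    tendsto_const_nhds.congr' (Filter.eventually_of_mem self_mem_nhdsWithin
      fun y hy => (hconst y hy).symm)
  exact tendsto_nhds_unique hlim hc

/-- The solution with value `a` and derivative `b` at the origin. -/
noncomputable def slitSolution (Λ : ℂ) (α : ℝ) (a b : ℂ) (x : ℂ) : ℂ :=
  a * frobSol Λ α 0 x + b * frobSol Λ α 1 x

/-- Derivative of `slitSolution`. -/
noncomputable def slitSolutionDeriv (Λ : ℂ) (α : ℝ) (a b : ℂ) (x : ℂ) : ℂ :=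
  a * frobSolDeriv Λ α 0 x + b * frobSolDeriv Λ α 1 x

theorem isSlitSolution_slitSolution (Λ : ℂ) {α : ℝ} (hα : 0 < α) (a b : ℂ) :
    IsSlitSolution Λ α (slitSolution Λ α a b) (slitSolutionDeriv Λ α a b) :=
  (isSlitSolution_frobSol Λ hα (Or.inl rfl)).linearCombination
    (isSlitSolution_frobSol Λ hα (Or.inr rfl)) a b

theorem slitSolution_zero {Λ : ℂ} {α : ℝ} (hα : 0 < α) (a b : ℂ) : slitSolution Λ α a b 0 = a := by
  simp [slitSolution, frobSol_apply_zero hα]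

theorem slitSolutionDeriv_zero {Λ : ℂ} {α : ℝ} (hα : 0 < α) (a b : ℂ) :
    slitSolutionDeriv Λ α a b 0 = b := by
  simp [slitSolutionDeriv, frobSolDeriv_apply_zero hα]

theorem exists_slitSolution_eq (Λ : ℂ) {α : ℝ} (hα : 0 < α) {x : ℂ}
    (hx : x ∈ Complex.slitPlane) (p q : ℂ) :
    ∃ a b, slitSolution Λ α a b x = p ∧ slitSolutionDeriv Λ α a b x = q := by
  have hwronskian := (isSlitSolution_frobSol Λ hα (Or.inl rfl)).wronskian_eq
    (isSlitSolution_frobSol Λ hα (Or.inr rfl)) hx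
  simp only [frobSol_apply_zero hα le_rfl, frobSol_apply_zero hα zero_le_one,
    frobSolDeriv_apply_zero hα (Or.inl rfl), frobSolDeriv_apply_zero hα (Or.inr rfl)] at hwronskian
  simp only [Complex.ofReal_zero, Complex.ofReal_one, Complex.cpow_zero, mul_one, zero_mul,
    sub_zero] at hwronskian
  refine ⟨p * frobSolDeriv Λ α 1 x - q * frobSol Λ α 1 x,
    q * frobSol Λ α 0 x - p * frobSolDeriv Λ α 0 x, ?_, ?_⟩
  · unfold slitSolution; linear_combination p * hwronskian
  · unfold slitSolutionDeriv; linear_combination q * hwronskian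

/-- The point of the ray of direction `η` at distance `r`. -/
noncomputable def rayPoint (η r : ℝ) : ℂ := r * Complex.exp (Complex.I * η)

theorem rayPoint_eq_exp {η r : ℝ} (hr : 0 < r) :
    rayPoint η r = Complex.exp ((Real.log r : ℂ) + Complex.I * η) := by
  rw [rayPoint, Complex.exp_add, ← Complex.ofReal_exp, Real.exp_log hr]

theorem rayPoint_ne_zero (η : ℝ) {r : ℝ} (hr : 0 < r) : rayPoint η r ≠ 0 := by
  rw [rayPoint_eq_exp hr]; exact Complex.exp_ne_zero _

theorem log_rayPoint {η r : ℝ} (hr : 0 < r) (hη : |η| < Real.pi) :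
    Complex.log (rayPoint η r) = (Real.log r : ℂ) + Complex.I * η := by
  obtain ⟨hlow, hup⟩ := abs_lt.1 hη
  rw [rayPoint_eq_exp hr, Complex.log_exp] <;> simp <;> linarith

theorem rayPoint_cpow {η r : ℝ} (hr : 0 < r) (hη : |η| < Real.pi) (α : ℝ) :
    rayPoint η r ^ (α : ℂ) = ((r ^ α : ℝ) : ℂ) * Complex.exp (Complex.I * ((α * η : ℝ) : ℂ)) := by
  rw [Complex.cpow_def_of_ne_zero (rayPoint_ne_zero η hr), log_rayPoint hr hη,
    Real.rpow_def_of_pos hr, Complex.ofReal_exp, ← Complex.exp_add]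
  congr 1
  push_cast; ring

theorem rayPoint_mem_slitPlane {η r : ℝ} (hr : 0 < r) (hη : |η| < Real.pi) :
    rayPoint η r ∈ Complex.slitPlane := by
  refine Complex.mem_slitPlane_iff_arg.2 ⟨?_, rayPoint_ne_zero η hr⟩
  rw [← Complex.log_im, log_rayPoint hr hη]
  simp only [Complex.add_im, Complex.ofReal_im, zero_add, Complex.mul_im, Complex.I_re,
    Complex.I_im, Complex.ofReal_re]
  have := (abs_lt.1 hη).2
  intro h; linarith

theorem rayPoint_mem_insert {η r : ℝ} (hr : 0 ≤ r) (hη : |η| < Real.pi) :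
    rayPoint η r ∈ insert 0 Complex.slitPlane := by
  rcases hr.eq_or_lt with rfl | hr
  · left; simp [rayPoint]
  · exact Or.inr (rayPoint_mem_slitPlane hr hη)

theorem hasDerivAt_rayPoint (η r : ℝ) :
    HasDerivAt (rayPoint η) (Complex.exp (Complex.I * η)) r := by
  simpa using! (hasDerivAt_id r).ofReal_comp.mul_const (Complex.exp (Complex.I * η))

section

variable {k ψ α : ℝ} {V V' : ℂ → ℂ}

theorem IsSlitSolution.hasDerivAt_ray {Λ : ℂ} (hV : IsSlitSolution Λ α V V') {η r : ℝ}
    (hη : |η| < Real.pi) (hr : 0 < r) : HasDerivAt (fun r => V (rayPoint η r))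
      (Complex.exp (Complex.I * η) * V' (rayPoint η r)) r := by
  rw [mul_comm]
  exact (hV.hasDerivAt _ (rayPoint_mem_slitPlane hr hη)).comp r (hasDerivAt_rayPoint η r)

theorem IsSlitSolution.hasDerivAt_ray_deriv
    (hV : IsSlitSolution ((k * Complex.exp (Complex.I * ψ)) ^ 2) α V V') {η r : ℝ}
    (hη : |η| < Real.pi) (hr : 0 < r) :
    HasDerivAt (fun r => Complex.exp (Complex.I * η) * V' (rayPoint η r))
      (k ^ 2 * (rayRoot α (2 * ψ + 2 * η + α * η) (2 * ψ + 2 * η) r) ^ 2 * V (rayPoint η r)) r := by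
  convert! ((hV.hasDerivAt_deriv _ (rayPoint_mem_slitPlane hr hη)).comp r
    (hasDerivAt_rayPoint η r)).const_mul (Complex.exp (Complex.I * η)) using 1
  have hexpA : Complex.exp (Complex.I * ((2 * ψ + 2 * η + α * η : ℝ) : ℂ))
      = Complex.exp (Complex.I * ψ) ^ 2 * Complex.exp (Complex.I * η) ^ 2
        * Complex.exp (Complex.I * ((α * η : ℝ) : ℂ)) := by
    rw [← Complex.exp_nat_mul, ← Complex.exp_nat_mul, ← Complex.exp_add, ← Complex.exp_add]
    congr 1; push_cast; ring
  have hexpB : Complex.exp (Complex.I * ((2 * ψ + 2 * η : ℝ) : ℂ))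
      = Complex.exp (Complex.I * ψ) ^ 2 * Complex.exp (Complex.I * η) ^ 2 := by
    rw [← Complex.exp_nat_mul, ← Complex.exp_nat_mul, ← Complex.exp_add]
    congr 1; push_cast; ring
  rw [rayRoot_sq, rayPoint_cpow hr hη, hexpA, hexpB]
  ring

theorem IsSlitSolution.continuousOn_ray {Λ : ℂ} (hV : IsSlitSolution Λ α V V') {η : ℝ}
    (hη : |η| < Real.pi) : ContinuousOn (fun r => V (rayPoint η r)) (Ici 0) :=
  hV.continuousOn.comp (fun r _ => (hasDerivAt_rayPoint η r).continuousAt.continuousWithinAt)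
    fun _ hr => rayPoint_mem_insert hr hη

theorem IsSlitSolution.continuousOn_ray_deriv {Λ : ℂ} (hV : IsSlitSolution Λ α V V') {η : ℝ}
    (hη : |η| < Real.pi) : ContinuousOn
      (fun r => Complex.exp (Complex.I * η) * V' (rayPoint η r)) (Ici 0) :=
  continuousOn_const.mul
    (hV.continuousOn_deriv.comp
      (fun r _ => (hasDerivAt_rayPoint η r).continuousAt.continuousWithinAt)
      fun _ hr => rayPoint_mem_insert hr hη)

theorem IsSlitSolution.isPathSolution_ray
    (hV : IsSlitSolution ((k * Complex.exp (Complex.I * ψ)) ^ 2) α V V') {η A B : ℝ}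
    (hη : |η| < Real.pi) (hA : A = 2 * ψ + 2 * η + α * η) (hB : B = 2 * ψ + 2 * η)
    {s₀ s₁ : ℝ} (h₀ : 0 ≤ s₀) :
    IsPathSolution k s₀ s₁ (rayRoot α A B) 1 (fun r => V (rayPoint η r))
      (fun r => Complex.exp (Complex.I * η) * V' (rayPoint η r)) where
  continuousOn := (hV.continuousOn_ray hη).mono
    (Icc_subset_Ici_self.trans (Ici_subset_Ici.2 h₀))
  continuousOn_deriv := (hV.continuousOn_ray_deriv hη).mono
    (Icc_subset_Ici_self.trans (Ici_subset_Ici.2 h₀))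
  hasDerivAt s hs := by
    simpa using hV.hasDerivAt_ray hη (h₀.trans_lt hs.1)
  hasDerivAt_deriv s hs := by
    subst hA hB
    simpa using hV.hasDerivAt_ray_deriv hη (h₀.trans_lt hs.1)

end

/-! ### The contour identity for the action integrals -/

theorem exp_mul_cpow {z : ℂ} (hz : z ≠ 0) {κ : ℝ} (hlower : -Real.pi < z.arg + κ)
    (hupper : z.arg + κ ≤ Real.pi) (p : ℂ) :
    (Complex.exp (Complex.I * κ) * z) ^ p = Complex.exp (Complex.I * κ * p) * z ^ p := by
  have hne : Complex.exp (Complex.I * κ) * z ≠ 0 := mul_ne_zero (Complex.exp_ne_zero _) hz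
  have hlog : Complex.log (Complex.exp (Complex.I * κ) * z) = Complex.I * κ + Complex.log z := by
    conv_lhs => rw [← Complex.exp_log hz, ← Complex.exp_add]
    rw [Complex.log_exp] <;> simp [Complex.log_im] <;> linarith
  rw [Complex.cpow_def_of_ne_zero hne, Complex.cpow_def_of_ne_zero hz, hlog, ← Complex.exp_add]
  congr 1; ring

theorem exp_I_mul_pi_div_two : Complex.exp (Complex.I * ((Real.pi / 2 : ℝ) : ℂ)) = Complex.I := by
  rw [mul_comm]; push_cast; exact Complex.exp_pi_div_two_mul_I

theorem cpow_half_of_im_pos {z : ℂ} (hz : 0 < z.im) :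
    z ^ ((1 / 2 : ℝ) : ℂ) = Complex.I * (-z) ^ ((1 / 2 : ℝ) : ℂ) := by
  have hne : -z ≠ 0 := neg_ne_zero.2 fun h => by simp [h] at hz
  have harg : (-z).arg < 0 := Complex.arg_neg_iff.2 (by simpa using hz)
  have hrotate := exp_mul_cpow hne (κ := Real.pi)
    (by linarith [Complex.neg_pi_lt_arg (-z), Real.pi_pos]) (by linarith) ((1 / 2 : ℝ) : ℂ)
  have hexp : Complex.I * Real.pi * ((1 / 2 : ℝ) : ℂ)
      = Complex.I * ((Real.pi / 2 : ℝ) : ℂ) := by push_cast; ring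
  rw [hexp, exp_I_mul_pi_div_two, mul_comm Complex.I, Complex.exp_pi_mul_I] at hrotate
  simpa using hrotate

theorem continuousOn_cpow_half_upper :
    ContinuousOn (fun z : ℂ => z ^ ((1 / 2 : ℝ) : ℂ)) {z | 0 ≤ z.im} := by
  -- Rotating by a quarter turn moves the branch cut out of the closed upper half plane.
  have hrotated : ContinuousOn (fun z : ℂ => Complex.exp (Complex.I * ((Real.pi / 4 : ℝ) : ℂ)) *
      (-Complex.I * z) ^ ((1 / 2 : ℝ) : ℂ)) {z | 0 ≤ z.im} := by
    refine continuousOn_const.mul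
      ((continuousOn_cpow_real (by norm_num : (0 : ℝ) ≤ 1 / 2)).comp (by fun_prop) fun z hz => ?_)
    by_cases hz0 : z = 0
    · left; simp [hz0]
    right
    rcases (show 0 ≤ z.im from hz).eq_or_lt with him | him
    · exact Or.inr (by simpa using fun hre => hz0 (Complex.ext hre him.symm))
    · left; simpa using him
  refine hrotated.congr fun z hz => ?_
  by_cases hz0 : z = 0
  · simp [hz0]
  have harg : 0 ≤ z.arg := Complex.arg_nonneg_iff.2 hz
  have hrotate := exp_mul_cpow hz0 (κ := -(Real.pi / 2)) (by linarith [Real.pi_pos])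
    (by linarith [Complex.arg_le_pi z, Real.pi_pos]) ((1 / 2 : ℝ) : ℂ)
  have hexp : Complex.exp (Complex.I * ((-(Real.pi / 2) : ℝ) : ℂ)) = -Complex.I := by
    rw [Complex.ofReal_neg, mul_neg, Complex.exp_neg, exp_I_mul_pi_div_two, Complex.inv_I]
  have hcancel : Complex.I * ((Real.pi / 4 : ℝ) : ℂ)
      + Complex.I * ((-(Real.pi / 2) : ℝ) : ℂ) * ((1 / 2 : ℝ) : ℂ) = 0 := by push_cast; ring
  rw [hexp] at hrotate
  simp only
  rw [hrotate, ← mul_assoc, ← Complex.exp_add, hcancel, Complex.exp_zero, one_mul]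

/-- The principal square root of `x ^ α - 1` at the point `x = r * exp (I * η)`. -/
noncomputable def arcSqrt (α r η : ℝ) : ℂ := (-rayFactor α (α * η) r) ^ ((1 / 2 : ℝ) : ℂ)

/-- The integrand of `∫ √(x ^ α - 1) dx` in the logarithmic coordinate `w = log x`, in which a
circular sector becomes a rectangle. -/
noncomputable def logIntegrand (α : ℝ) (w : ℂ) : ℂ :=
  Complex.exp w * (Complex.exp (α * w) - 1) ^ ((1 / 2 : ℝ) : ℂ)

section Contour

variable {α β T : ℝ}

theorem neg_rayFactor_im (α ω r : ℝ) : (-rayFactor α ω r).im = r ^ α * Real.sin ω := by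
  rw [Complex.neg_im, rayFactor_im, neg_neg]

theorem continuousOn_arcSqrt_radius {η : ℝ} (hα : 0 < α) (hnonneg : 0 ≤ α * η)
    (hle : α * η ≤ Real.pi) : ContinuousOn (fun r => arcSqrt α r η) (Ici 0) := by
  refine continuousOn_cpow_half_upper.comp (continuous_rayFactor hα).neg.continuousOn fun r hr => ?_
  change 0 ≤ (-rayFactor α (α * η) r).im
  rw [neg_rayFactor_im]
  exact mul_nonneg (Real.rpow_nonneg hr _) (Real.sin_nonneg_of_nonneg_of_le_pi hnonneg hle)

theorem logIntegrand_eq (α ρ η : ℝ) : logIntegrand α (ρ + η * Complex.I)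
    = rayPoint η (Real.exp ρ) * arcSqrt α (Real.exp ρ) η := by
  unfold logIntegrand rayPoint arcSqrt rayFactor
  rw [Complex.exp_add, ← Complex.ofReal_exp, mul_comm (η : ℂ)]
  congr 2
  rw [← Real.exp_mul, neg_sub, Complex.ofReal_exp, ← Complex.exp_add]
  congr 2
  push_cast; ring

theorem exp_mul_sub_one_im (α : ℝ) (w : ℂ) : (Complex.exp (α * w) - 1).im
    = Real.exp (α * w.re) * Real.sin (α * w.im) := by
  simp [Complex.exp_im]

theorem continuousOn_logIntegrand (hα : 0 < α) (hαβ : α * β ≤ Real.pi) :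
    ContinuousOn (logIntegrand α) {w | w.im ∈ Icc 0 β} := by
  refine Complex.continuous_exp.continuousOn.mul
    (continuousOn_cpow_half_upper.comp (by fun_prop) fun w hw => ?_)
  change 0 ≤ (Complex.exp (α * w) - 1).im
  rw [exp_mul_sub_one_im]
  exact mul_nonneg (Real.exp_pos _).le (Real.sin_nonneg_of_nonneg_of_le_pi
    (mul_nonneg hα.le hw.1) ((mul_le_mul_of_nonneg_left hw.2 hα.le).trans hαβ))

theorem differentiableAt_logIntegrand (hα : 0 < α) (hαβ : α * β ≤ Real.pi) {w : ℂ}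
    (hw : w.im ∈ Ioo 0 β) : DifferentiableAt ℂ (logIntegrand α) w := by
  have hslit : Complex.exp (α * w) - 1 ∈ Complex.slitPlane := by
    right
    rw [exp_mul_sub_one_im]
    exact (mul_pos (Real.exp_pos _) (Real.sin_pos_of_pos_of_lt_pi
      (mul_pos hα hw.1) ((mul_lt_mul_of_pos_left hw.2 hα).trans_le hαβ))).ne'
  exact DifferentiableAt.mul (by fun_prop) (DifferentiableAt.cpow_const (by fun_prop) hslit)

theorem integral_logIntegrand_eq {η ε : ℝ} (hα : 0 < α) (hnonneg : 0 ≤ α * η)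
    (hle : α * η ≤ Real.pi) (hε : 0 < ε) (hT : 0 < T) :
    (∫ ρ in Real.log ε..Real.log T, logIntegrand α (ρ + η * Complex.I))
      = Complex.exp (Complex.I * η) * ∫ r in ε..T, arcSqrt α r η := by
  have hsubst := intervalIntegral.integral_deriv_smul_comp'' (a := Real.log ε) (b := Real.log T)
    (f := Real.exp) (f' := Real.exp) (g := fun r => Complex.exp (Complex.I * η) * arcSqrt α r η)
    Real.continuous_exp.continuousOn (fun x _ => (Real.hasDerivAt_exp x).hasDerivWithinAt)
    Real.continuous_exp.continuousOn
    ((continuousOn_const.mul (continuousOn_arcSqrt_radius hα hnonneg hle)).mono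
      (image_subset_iff.2 fun x _ => (Real.exp_pos x).le))
  rw [Real.exp_log hε, Real.exp_log hT, intervalIntegral.integral_const_mul] at hsubst
  rw [← hsubst]
  refine intervalIntegral.integral_congr fun ρ _ => ?_
  simp only [logIntegrand_eq, Function.comp, Complex.real_smul, rayPoint]
  ring

theorem integral_boundary_annular_sector_eq_zero {ε : ℝ} (hα : 0 < α) (hβ : 0 ≤ β)
    (hαβ : α * β ≤ Real.pi) (hε : 0 < ε) (hT : 0 < T) :
    (∫ r in ε..T, arcSqrt α r 0)
      - Complex.exp (Complex.I * β) * (∫ r in ε..T, arcSqrt α r β)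
      + Complex.I * (∫ η in (0 : ℝ)..β, rayPoint η T * arcSqrt α T η)
      - Complex.I * (∫ η in (0 : ℝ)..β, rayPoint η ε * arcSqrt α ε η) = 0 := by
  have hrect := Complex.integral_boundary_rect_eq_zero_of_continuousOn_of_differentiableOn
    (logIntegrand α) (Real.log ε : ℂ) ((Real.log T : ℂ) + β * Complex.I)
    ((continuousOn_logIntegrand hα hαβ).mono fun w hw => by
      simpa [uIcc_of_le hβ] using (Complex.mem_reProdIm.1 hw).2)
    (fun w hw => (differentiableAt_logIntegrand hα hαβ (by
      simpa [hβ] using (Complex.mem_reProdIm.1 hw).2)).differentiableWithinAt)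
  have hbottom := integral_logIntegrand_eq (η := 0) hα (by simp) (by simp [Real.pi_pos.le]) hε hT
  have htop := integral_logIntegrand_eq hα (mul_nonneg hα.le hβ) hαβ hε hT
  simp only [Complex.ofReal_re, Complex.ofReal_im, Complex.add_re, Complex.mul_re, Complex.I_re,
    mul_zero, Complex.I_im, sub_self, add_zero, Complex.add_im, Complex.mul_im, mul_one,
    zero_add, smul_eq_mul] at hrect
  rw [hbottom, htop] at hrect
  simpa only [logIntegrand_eq, Real.exp_log hε, Real.exp_log hT, Complex.ofReal_zero, mul_zero,
    Complex.exp_zero, one_mul] using hrect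

theorem norm_rayPoint {r : ℝ} (η : ℝ) (hr : 0 ≤ r) : ‖rayPoint η r‖ = r := by
  rw [rayPoint, norm_mul, Complex.norm_exp_I_mul_ofReal, mul_one, Complex.norm_of_nonneg hr]

theorem norm_rayFactor_le {r : ℝ} (α ω : ℝ) (hr : 0 ≤ r) : ‖rayFactor α ω r‖ ≤ 1 + r ^ α := by
  refine (norm_sub_le _ _).trans_eq ?_
  rw [norm_one, norm_mul, Complex.norm_exp_I_mul_ofReal, mul_one,
    Complex.norm_of_nonneg (Real.rpow_nonneg hr _)]

theorem norm_arcSqrt_le_two {r : ℝ} (hα : 0 ≤ α) (hr : r ∈ Icc 0 1) (η : ℝ) :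
    ‖arcSqrt α r η‖ ≤ 2 := by
  rw [arcSqrt, Complex.norm_cpow_real, norm_neg]
  calc ‖rayFactor α (α * η) r‖ ^ (1 / 2 : ℝ) ≤ 2 ^ (1 / 2 : ℝ) :=
        Real.rpow_le_rpow (norm_nonneg _) ((norm_rayFactor_le _ _ hr.1).trans (by
          linarith [Real.rpow_le_one hr.1 hr.2 hα])) (by norm_num)
    _ ≤ 2 ^ (1 : ℝ) := Real.rpow_le_rpow_of_exponent_le (by norm_num) (by norm_num)
    _ = 2 := by norm_num

theorem tendsto_integral_rayPoint_mul_arcSqrt (hα : 0 ≤ α) (β : ℝ) :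
    Filter.Tendsto (fun ε : ℝ => ∫ η in (0 : ℝ)..β, rayPoint η ε * arcSqrt α ε η)
      (nhdsWithin 0 (Ioi 0)) (nhds 0) := by
  have hbound : Filter.Tendsto (fun ε : ℝ => ε * 2 * |β - 0|) (nhdsWithin 0 (Ioi 0)) (nhds 0) := by
    have : ContinuousAt (fun ε : ℝ => ε * 2 * |β - 0|) 0 := by fun_prop
    simpa using this.tendsto.mono_left nhdsWithin_le_nhds
  refine squeeze_zero_norm' ?_ hbound
  filter_upwards [Ioc_mem_nhdsGT (zero_lt_one' ℝ)] with ε hε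
  refine intervalIntegral.norm_integral_le_of_norm_le_const fun η _ => ?_
  rw [norm_mul, norm_rayPoint η hε.1.le]
  exact mul_le_mul_of_nonneg_left (norm_arcSqrt_le_two hα ⟨hε.1.le, hε.2⟩ η) hε.1.le

theorem tendsto_integral_left {f : ℝ → ℂ} (hf : ContinuousOn f (Ici 0)) (hT : 0 < T) :
    Filter.Tendsto (fun ε => ∫ r in ε..T, f r) (nhdsWithin 0 (Ioi 0))
      (nhds (∫ r in (0 : ℝ)..T, f r)) := by
  have hint : IntegrableOn f (uIcc 0 T) := by
    rw [uIcc_of_le hT.le]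
    exact (hf.mono Icc_subset_Ici_self).integrableOn_Icc
  have hcont := intervalIntegral.continuousOn_primitive_interval_left hint 0 left_mem_uIcc
  rw [uIcc_of_le hT.le] at hcont
  exact hcont.mono_left (nhdsWithin_le_of_mem (Icc_mem_nhdsGT hT))

theorem continuousOn_arcSqrt_zero (hα : 0 < α) :
    ContinuousOn (fun r => arcSqrt α r 0) (Ici 0) :=
  continuousOn_arcSqrt_radius hα (by simp) (by simp [Real.pi_pos.le])

theorem integral_boundary_sector_eq_zero (hα : 0 < α) (hβ : 0 ≤ β) (hαβ : α * β ≤ Real.pi)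
    (hT : 0 < T) :
    (∫ r in (0 : ℝ)..T, arcSqrt α r 0)
      - Complex.exp (Complex.I * β) * (∫ r in (0 : ℝ)..T, arcSqrt α r β)
      + Complex.I * (∫ η in (0 : ℝ)..β, rayPoint η T * arcSqrt α T η) = 0 := by
  have hbottom := tendsto_integral_left (continuousOn_arcSqrt_zero hα) hT
  have htop := tendsto_integral_left
    (continuousOn_arcSqrt_radius hα (mul_nonneg hα.le hβ) hαβ) hT
  have hlim := ((hbottom.sub (htop.const_mul (Complex.exp (Complex.I * β)))).add_const
    (Complex.I * ∫ η in (0 : ℝ)..β, rayPoint η T * arcSqrt α T η)).sub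
    ((tendsto_integral_rayPoint_mul_arcSqrt hα.le β).const_mul Complex.I)
  have hzero := hlim.congr' (f₂ := fun _ => (0 : ℂ)) (by
    filter_upwards [self_mem_nhdsWithin] with ε hε
    exact integral_boundary_annular_sector_eq_zero hα hβ hαβ hε hT)
  simpa using tendsto_nhds_unique hzero tendsto_const_nhds

theorem action_ray_eq (hα : 0 < α) (hβ : 0 < β) (hαβ : α * β < Real.pi) (hT : 0 < T) :
    Complex.I * Complex.exp (Complex.I * β) *
        (∫ r in (0 : ℝ)..T, rayFactor α (α * β) r ^ ((1 / 2 : ℝ) : ℂ))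
      = (∫ r in (0 : ℝ)..T, arcSqrt α r 0)
        + ∫ η in (0 : ℝ)..β, Complex.I * rayPoint η T * arcSqrt α T η := by
  have hcontour := integral_boundary_sector_eq_zero hα hβ.le hαβ.le hT
  have hbranch : (∫ r in (0 : ℝ)..T, arcSqrt α r β)
      = Complex.I * ∫ r in (0 : ℝ)..T, rayFactor α (α * β) r ^ ((1 / 2 : ℝ) : ℂ) := by
    rw [← intervalIntegral.integral_const_mul]
    refine intervalIntegral.integral_congr_Ioo_of_le hT.le fun r hr => ?_
    have him : 0 < (-rayFactor α (α * β) r).im := by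
      rw [neg_rayFactor_im]
      exact mul_pos (Real.rpow_pos_of_pos hr.1 _) (Real.sin_pos_of_pos_of_lt_pi (by positivity) hαβ)
    simp only [arcSqrt, cpow_half_of_im_pos him, neg_neg]
  simp only [mul_assoc, intervalIntegral.integral_const_mul]
  rw [hbranch] at hcontour
  linear_combination -hcontour

theorem conj_rayFactor (α ω r : ℝ) : (starRingEnd ℂ) (rayFactor α ω r) = rayFactor α (-ω) r := by
  simp [rayFactor, ← Complex.exp_conj]

theorem conj_rayPoint (η r : ℝ) : (starRingEnd ℂ) (rayPoint η r) = rayPoint (-η) r := by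
  simp [rayPoint, ← Complex.exp_conj]

theorem conj_cpow_half {z : ℂ} (hz : z ∈ Complex.slitPlane) :
    (starRingEnd ℂ) (z ^ ((1 / 2 : ℝ) : ℂ)) = (starRingEnd ℂ) z ^ ((1 / 2 : ℝ) : ℂ) := by
  rw [Complex.conj_cpow _ _ (Complex.slitPlane_arg_ne_pi hz), Complex.conj_ofReal]

theorem neg_rayFactor_mem_slitPlane {η : ℝ} (hα : 0 < α) (hT : 1 < T) (h : α * |η| < Real.pi) :
    -rayFactor α (α * η) T ∈ Complex.slitPlane := by
  by_cases hη : η = 0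
  · left
    simpa [hη, rayFactor] using Real.one_lt_rpow hT hα
  · right
    rw [← abs_of_pos hα, ← abs_mul] at h
    have hsin := Real.sin_eq_zero_iff_of_lt_of_lt (abs_lt.1 h).1 (abs_lt.1 h).2
    rw [neg_rayFactor_im]
    exact mul_ne_zero (Real.rpow_pos_of_pos (by linarith) _).ne'
      (hsin.not.2 (mul_ne_zero hα.ne' hη))

theorem conj_arcSqrt {η : ℝ} (hα : 0 < α) (hT : 1 < T) (h : α * |η| < Real.pi) :
    (starRingEnd ℂ) (arcSqrt α T η) = arcSqrt α T (-η) := by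
  rw [arcSqrt, conj_cpow_half (neg_rayFactor_mem_slitPlane hα hT h), map_neg, conj_rayFactor,
    arcSqrt, mul_neg]

theorem conj_integral_arc {γ : ℝ} (hα : 0 < α) (hγ : 0 < γ) (hαγ : α * γ < Real.pi) (hT : 1 < T) :
    (starRingEnd ℂ) (∫ η in (0 : ℝ)..γ, Complex.I * rayPoint η T * arcSqrt α T η)
      = -∫ η in (-γ)..0, Complex.I * rayPoint η T * arcSqrt α T η := by
  rw [← intervalIntegral.intervalIntegral_conj, ← neg_zero, ← intervalIntegral.integral_comp_neg,
    neg_zero, ← intervalIntegral.integral_neg]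
  refine intervalIntegral.integral_congr fun η hη => ?_
  rw [uIcc_of_le hγ.le] at hη
  have habs : α * |η| < Real.pi := by
    rw [abs_of_nonneg hη.1]
    exact (mul_le_mul_of_nonneg_left hη.2 hα.le).trans_lt hαγ
  simp only [map_mul, Complex.conj_I, conj_rayPoint, conj_arcSqrt hα hT habs, neg_mul]

theorem action_conj_ray_eq {γ : ℝ} (hα : 0 < α) (hγ : 0 < γ) (hαγ : α * γ < Real.pi) (hT : 1 < T) :
    Complex.I * Complex.exp (Complex.I * ((-γ : ℝ) : ℂ)) *
        (∫ r in (0 : ℝ)..T, rayFactor α (α * -γ) r ^ ((1 / 2 : ℝ) : ℂ))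
      = -(starRingEnd ℂ) (∫ r in (0 : ℝ)..T, arcSqrt α r 0)
        + ∫ η in (-γ)..0, Complex.I * rayPoint η T * arcSqrt α T η := by
  have hsin : Real.sin (α * γ) ≠ 0 := (Real.sin_pos_of_pos_of_lt_pi (by positivity) hαγ).ne'
  have hconj_ray : (starRingEnd ℂ)
      (∫ r in (0 : ℝ)..T, rayFactor α (α * γ) r ^ ((1 / 2 : ℝ) : ℂ))
      = ∫ r in (0 : ℝ)..T, rayFactor α (α * -γ) r ^ ((1 / 2 : ℝ) : ℂ) := by
    rw [← intervalIntegral.intervalIntegral_conj]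
    refine intervalIntegral.integral_congr fun r _ => ?_
    rw [conj_cpow_half (rayFactor_mem_slitPlane hsin r), conj_rayFactor, mul_neg]
  have hconj_exp : (starRingEnd ℂ) (Complex.exp (Complex.I * γ))
      = Complex.exp (Complex.I * ((-γ : ℝ) : ℂ)) := by
    rw [← Complex.exp_conj]; simp
  have hconj := congrArg (starRingEnd ℂ) (action_ray_eq hα hγ hαγ (by linarith))
  rw [map_add, map_mul, map_mul, hconj_ray, conj_integral_arc hα hγ hαγ hT, hconj_exp,
    Complex.conj_I] at hconj
  linear_combination -hconj

theorem arcSqrt_zero_sub_conj (α r : ℝ) :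
    arcSqrt α r 0 - (starRingEnd ℂ) (arcSqrt α r 0)
      = 2 * Complex.I * ((√(1 - r ^ α) : ℝ) : ℂ) := by
  have hreal : -rayFactor α (α * 0) r = ((r ^ α - 1 : ℝ) : ℂ) := by simp [rayFactor]
  rw [arcSqrt, hreal]
  rcases le_total 0 (r ^ α - 1) with hsign | hsign
  · rw [Real.sqrt_eq_zero_of_nonpos (by linarith), ← Complex.ofReal_cpow hsign,
      Complex.conj_ofReal]
    simp
  · have hexp : Complex.exp (Real.pi * Complex.I * ((1 / 2 : ℝ) : ℂ)) = Complex.I := by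
      refine Eq.trans ?_ exp_I_mul_pi_div_two
      congr 1; push_cast; ring
    rw [Complex.ofReal_cpow_of_nonpos hsign, hexp, ← Complex.ofReal_neg,
      ← Complex.ofReal_cpow (by linarith), map_mul, Complex.conj_I, Complex.conj_ofReal,
      Real.sqrt_eq_rpow, neg_sub]
    ring

theorem integral_sqrt_one_sub_rpow (hα : 0 ≤ α) (hT : 1 ≤ T) :
    (∫ r in (0 : ℝ)..T, √(1 - r ^ α)) = ∫ r in (0 : ℝ)..1, √(1 - r ^ α) := by
  have hcont : Continuous fun r : ℝ => √(1 - r ^ α) := by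
    have := Real.continuous_rpow_const hα
    fun_prop
  have htail : (∫ r in (1 : ℝ)..T, √(1 - r ^ α)) = ∫ _ in (1 : ℝ)..T, (0 : ℝ) :=
    intervalIntegral.integral_congr_Ioo_of_le hT fun _ hr =>
      Real.sqrt_eq_zero_of_nonpos (by linarith [Real.one_le_rpow hr.1.le hα])
  rw [← intervalIntegral.integral_add_adjacent_intervals (hcont.intervalIntegrable 0 1)
    (hcont.intervalIntegrable 1 T), htail]
  simp

theorem integral_arcSqrt_zero_sub_conj (hα : 0 < α) (hT : 1 ≤ T) :
    (∫ r in (0 : ℝ)..T, arcSqrt α r 0) - (starRingEnd ℂ) (∫ r in (0 : ℝ)..T, arcSqrt α r 0)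
      = 2 * Complex.I * ((∫ u in (0 : ℝ)..1, √(1 - u ^ α) : ℝ) : ℂ) := by
  have hcont : ContinuousOn (fun r => arcSqrt α r 0) (uIcc 0 T) := by
    rw [uIcc_of_le (by linarith)]
    exact (continuousOn_arcSqrt_zero hα).mono Icc_subset_Ici_self
  have hconj : ContinuousOn (fun r => (starRingEnd ℂ) (arcSqrt α r 0)) (uIcc 0 T) :=
    Complex.continuous_conj.comp_continuousOn hcont
  rw [← intervalIntegral.intervalIntegral_conj,
    ← intervalIntegral.integral_sub hcont.intervalIntegrable hconj.intervalIntegrable,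
    ← integral_sqrt_one_sub_rpow hα.le hT, ← intervalIntegral.integral_ofReal,
    ← intervalIntegral.integral_const_mul]
  exact intervalIntegral.integral_congr fun r _ => arcSqrt_zero_sub_conj α r

theorem continuousAt_arcSqrt {η : ℝ} (hα : 0 < α) (hT : 1 < T) (h : α * |η| < Real.pi) :
    ContinuousAt (arcSqrt α T) η := by
  have : ContinuousAt (fun η => -rayFactor α (α * η) T) η := by
    unfold rayFactor; fun_prop
  exact this.cpow continuousAt_const (neg_rayFactor_mem_slitPlane hα hT h)

theorem continuousAt_arc_integrand {η : ℝ} (hα : 0 < α) (hT : 1 < T) (h : α * |η| < Real.pi) :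
    ContinuousAt (fun η => Complex.I * rayPoint η T * arcSqrt α T η) η := by
  have := continuousAt_arcSqrt hα hT h
  unfold rayPoint
  fun_prop

theorem mul_abs_lt_of_mem_Icc {a b c d x : ℝ} (ha : 0 ≤ a) (hb : a * b < d) (hc : a * c < d)
    (hx : x ∈ Icc (-b) c) : a * |x| < d := by
  rcases abs_cases x with ⟨habs, _⟩ | ⟨habs, _⟩ <;> rw [habs] <;> nlinarith [hx.1, hx.2]

theorem add_action_conj_ray_eq {γ : ℝ} (hα : 0 < α) (hβ : 0 < β) (hαβ : α * β < Real.pi)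
    (hγ : 0 < γ) (hαγ : α * γ < Real.pi) (hT : 1 < T) :
    Complex.I * Complex.exp (Complex.I * β) *
        (∫ r in (0 : ℝ)..T, rayFactor α (α * β) r ^ ((1 / 2 : ℝ) : ℂ))
      + Complex.I * Complex.exp (Complex.I * ((-γ : ℝ) : ℂ)) *
        (∫ r in (0 : ℝ)..T, rayFactor α (α * -γ) r ^ ((1 / 2 : ℝ) : ℂ))
      = 2 * Complex.I * ((∫ u in (0 : ℝ)..1, √(1 - u ^ α) : ℝ) : ℂ)
        + ∫ η in (-γ)..β, Complex.I * rayPoint η T * arcSqrt α T η := by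
  have hcont : ContinuousOn (fun η => Complex.I * rayPoint η T * arcSqrt α T η) (Icc (-γ) β) :=
    fun η hη => (continuousAt_arc_integrand hα hT
      (mul_abs_lt_of_mem_Icc hα.le hαγ hαβ hη)).continuousWithinAt
  rw [← intervalIntegral.integral_add_adjacent_intervals (b := 0)
    (ContinuousOn.intervalIntegrable_of_Icc (by linarith)
      (hcont.mono (Icc_subset_Icc_right hβ.le)))
    (ContinuousOn.intervalIntegrable_of_Icc hβ.le
      (hcont.mono (Icc_subset_Icc_left (by linarith)))),
    action_ray_eq hα hβ hαβ (by linarith), action_conj_ray_eq hα hγ hαγ hT,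
    ← integral_arcSqrt_zero_sub_conj hα hT.le]
  ring

end Contour

/-! ### Solutions along large arcs -/

/-- The continuous square root of the potential along the arc of radius `T`. -/
noncomputable def arcRoot (α ψ T η : ℝ) : ℂ := -Complex.exp (Complex.I * ψ) * arcSqrt α T η

/-- Half the logarithmic derivative of `arcRoot` in the angle. -/
noncomputable def arcCoupling (α T η : ℝ) : ℂ :=
  Complex.I * α * ((T ^ α : ℝ) : ℂ) * Complex.exp (Complex.I * ((α * η : ℝ) : ℂ)) /
    (4 * -rayFactor α (α * η) T)

/-- The action along the arc of radius `T` starting at the angle `η₀`. -/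
noncomputable def arcAction (α ψ T η₀ η : ℝ) : ℂ :=
  ∫ s in η₀..η, Complex.I * rayPoint s T * arcRoot α ψ T s

/-- The growing Liouville–Green mode along the arc of radius `T`, starting at the angle `η₀`. -/
noncomputable def arcMode (α ψ T η₀ k η : ℝ) : ℂ :=
  (-rayFactor α (α * η) T) ^ ((1 / 4 : ℝ) : ℂ) * Complex.exp (k * arcAction α ψ T η₀ η)

section Arc

variable {α β γ k T η ψ : ℝ}

theorem norm_arcMode (α ψ T η₀ k η : ℝ) : ‖arcMode α ψ T η₀ k η‖
    = ‖rayFactor α (α * η) T‖ ^ (1 / 4 : ℝ) * Real.exp (k * (arcAction α ψ T η₀ η).re) := by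
  rw [arcMode, norm_mul, Complex.norm_cpow_real, norm_neg, Complex.norm_exp, Complex.re_ofReal_mul]

theorem arcSqrt_sq (α T η : ℝ) : arcSqrt α T η ^ 2 = -rayFactor α (α * η) T := by
  rw [arcSqrt, ← Complex.cpow_nat_mul]; norm_num

theorem arcRoot_sq (α ψ T η : ℝ) :
    arcRoot α ψ T η ^ 2 = Complex.exp (Complex.I * ψ) ^ 2 * -rayFactor α (α * η) T := by
  rw [arcRoot, mul_pow, arcSqrt_sq, neg_sq]

theorem norm_arcRoot_sq (α ψ T η : ℝ) : ‖arcRoot α ψ T η‖ ^ 2 = ‖rayFactor α (α * η) T‖ := by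
  rw [← norm_pow, arcRoot_sq, norm_mul, norm_neg, norm_pow, Complex.norm_exp_I_mul_ofReal,
    one_pow, one_mul]

theorem hasDerivAt_neg_rayFactor_angle (h : -rayFactor α (α * η) T ≠ 0) :
    HasDerivAt (fun η => -rayFactor α (α * η) T)
      (4 * arcCoupling α T η * -rayFactor α (α * η) T) η := by
  have hphase : HasDerivAt (fun η : ℝ => Complex.I * ((α * η : ℝ) : ℂ)) (Complex.I * α) η := by
    simpa using (((hasDerivAt_id η).const_mul α).ofReal_comp).const_mul Complex.I
  convert! ((hphase.cexp.const_mul ((T ^ α : ℝ) : ℂ)).const_sub 1).neg using 1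
  have hne := neg_ne_zero.1 h
  unfold arcCoupling
  field_simp

theorem hasDerivAt_neg_rayFactor_angle_cpow (h : -rayFactor α (α * η) T ∈ Complex.slitPlane)
    (p : ℂ) : HasDerivAt (fun η => (-rayFactor α (α * η) T) ^ p)
      (4 * p * arcCoupling α T η * (-rayFactor α (α * η) T) ^ p) η := by
  have hne := Complex.slitPlane_ne_zero h
  convert! ((hasDerivAt_id (-rayFactor α (α * η) T)).cpow_const (c := p) h).comp η
    (hasDerivAt_neg_rayFactor_angle hne) using 1
  have hne' := neg_ne_zero.1 hne
  simp only [id]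
  rw [Complex.cpow_sub _ _ hne, Complex.cpow_one]
  field_simp

theorem hasDerivAt_arcRoot (h : -rayFactor α (α * η) T ∈ Complex.slitPlane) :
    HasDerivAt (arcRoot α ψ T) (2 * arcCoupling α T η * arcRoot α ψ T η) η := by
  convert! (hasDerivAt_neg_rayFactor_angle_cpow h ((1 / 2 : ℝ) : ℂ)).const_mul
    (-Complex.exp (Complex.I * ψ)) using 1
  rw [arcRoot, arcSqrt]
  push_cast
  ring

theorem hasDerivAt_rayPoint_angle (T η : ℝ) :
    HasDerivAt (fun η => rayPoint η T) (Complex.I * rayPoint η T) η := by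
  have hphase : HasDerivAt (fun η : ℝ => Complex.I * (η : ℂ)) Complex.I η := by
    simpa using (hasDerivAt_id η).ofReal_comp.const_mul Complex.I
  convert! hphase.cexp.const_mul (T : ℂ) using 1
  unfold rayPoint
  ring

theorem arcAction_eq (α ψ T η₀ η : ℝ) : arcAction α ψ T η₀ η
    = -Complex.exp (Complex.I * ψ) * ∫ s in η₀..η, Complex.I * rayPoint s T * arcSqrt α T s := by
  rw [arcAction, ← intervalIntegral.integral_const_mul]
  congr 1
  ext s
  rw [arcRoot]
  ring

theorem hasDerivAt_arcAction (hα : 0 < α) (hT : 1 < T) (hγ : α * γ < Real.pi)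
    (hβ : α * β < Real.pi) (h : η ∈ Icc (-γ) β) :
    HasDerivAt (arcAction α ψ T (-γ)) (Complex.I * rayPoint η T * arcRoot α ψ T η) η := by
  have hcont : ∀ s : ℝ, α * |s| < Real.pi →
      ContinuousAt (fun s => Complex.I * rayPoint s T * arcRoot α ψ T s) s := fun s hs =>
    (continuousAt_const.mul (hasDerivAt_rayPoint_angle T s).continuousAt).mul
      (hasDerivAt_arcRoot (neg_rayFactor_mem_slitPlane hα hT hs)).continuousAt
  have hη := mul_abs_lt_of_mem_Icc hα.le hγ hβ h
  refine intervalIntegral.integral_hasDerivAt_right ?_ ?_ (hcont η hη)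
  · refine ContinuousOn.intervalIntegrable_of_Icc h.1 fun s hs => (hcont s ?_).continuousWithinAt
    exact mul_abs_lt_of_mem_Icc hα.le hγ hβ ⟨hs.1, hs.2.trans h.2⟩
  · have hopen : IsOpen {s : ℝ | α * |s| < Real.pi} := isOpen_lt (by fun_prop) continuous_const
    exact ContinuousOn.stronglyMeasurableAtFilter hopen
      (fun s hs => (hcont s hs).continuousWithinAt) η hη

theorem hasDerivAt_arcMode (hα : 0 < α) (hT : 1 < T) (hγ : α * γ < Real.pi)
    (hβ : α * β < Real.pi) (h : η ∈ Icc (-γ) β) : HasDerivAt (arcMode α ψ T (-γ) k)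
      ((k * (Complex.I * rayPoint η T) * arcRoot α ψ T η + arcCoupling α T η)
        * arcMode α ψ T (-γ) k η) η := by
  have hslit := neg_rayFactor_mem_slitPlane hα hT (mul_abs_lt_of_mem_Icc hα.le hγ hβ h)
  convert! (hasDerivAt_neg_rayFactor_angle_cpow hslit ((1 / 4 : ℝ) : ℂ)).mul
    ((hasDerivAt_arcAction (ψ := ψ) hα hT hγ hβ h).const_mul (k : ℂ)).cexp using 1
  rw [arcMode]
  push_cast
  ring

theorem arcMode_ne_zero (h : -rayFactor α (α * η) T ≠ 0) (ψ η₀ k : ℝ) :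
    arcMode α ψ T η₀ k η ≠ 0 :=
  mul_ne_zero (by simp [h]) (Complex.exp_ne_zero _)

theorem isWKBPath_arc (hα : 0 < α) (hT : 1 < T) (hγ : α * γ < Real.pi) (hβ : α * β < Real.pi)
    (ψ k : ℝ) : IsWKBPath k (-γ) β (arcRoot α ψ T) (arcMode α ψ T (-γ) k)
      (fun η => Complex.I * rayPoint η T) (arcCoupling α T) :=
  have hslit : ∀ η ∈ Icc (-γ) β, -rayFactor α (α * η) T ∈ Complex.slitPlane := fun _ hη =>
    neg_rayFactor_mem_slitPlane hα hT (mul_abs_lt_of_mem_Icc hα.le hγ hβ hη)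
  { continuousOn_root := fun η hη =>
      (hasDerivAt_arcRoot (hslit η hη)).continuousAt.continuousWithinAt
    continuousOn_mode := fun _ hη =>
      (hasDerivAt_arcMode hα hT hγ hβ hη).continuousAt.continuousWithinAt
    mode_ne_zero := fun η hη => arcMode_ne_zero (Complex.slitPlane_ne_zero (hslit η hη)) ψ (-γ) k
    hasDerivAt_root := fun η hη => hasDerivAt_arcRoot (hslit η (Ioo_subset_Icc_self hη))
    hasDerivAt_mode := fun _ hη => hasDerivAt_arcMode hα hT hγ hβ (Ioo_subset_Icc_self hη) }

theorem IsSlitSolution.isPathSolution_arc {V V' : ℂ → ℂ}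
    (hV : IsSlitSolution ((k * Complex.exp (Complex.I * ψ)) ^ 2) α V V')
    (hγ : γ < Real.pi) (hβ : β < Real.pi) (hT : 0 < T) :
    IsPathSolution k (-γ) β (arcRoot α ψ T) (fun η => Complex.I * rayPoint η T)
      (fun η => V (rayPoint η T)) (fun η => V' (rayPoint η T)) := by
  have habs : ∀ η ∈ Icc (-γ) β, |η| < Real.pi := fun η hη =>
    abs_lt.2 ⟨by linarith [hη.1], by linarith [hη.2]⟩
  have hW : ∀ η ∈ Icc (-γ) β, HasDerivAt (fun η => V (rayPoint η T))
      (Complex.I * rayPoint η T * V' (rayPoint η T)) η := fun η hη => by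
    rw [mul_comm]
    exact (hV.hasDerivAt _ (rayPoint_mem_slitPlane hT (habs η hη))).comp η
      (hasDerivAt_rayPoint_angle T η)
  have hY : ∀ η ∈ Icc (-γ) β, HasDerivAt (fun η => V' (rayPoint η T))
      (k ^ 2 * (Complex.I * rayPoint η T) * arcRoot α ψ T η ^ 2 * V (rayPoint η T)) η :=
    fun η hη => by
      convert! (hV.hasDerivAt_deriv _ (rayPoint_mem_slitPlane hT (habs η hη))).comp η
        (hasDerivAt_rayPoint_angle T η) using 1
      rw [arcRoot_sq, rayPoint_cpow hT (habs η hη), rayFactor]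
      ring
  exact ⟨fun η hη => (hW η hη).continuousAt.continuousWithinAt,
    fun η hη => (hY η hη).continuousAt.continuousWithinAt,
    fun η hη => hW η (Ioo_subset_Icc_self hη), fun η hη => hY η (Ioo_subset_Icc_self hη)⟩

theorem rpow_sub_one_le_norm_rayFactor (α ω : ℝ) {r : ℝ} (hr : 0 ≤ r) :
    r ^ α - 1 ≤ ‖rayFactor α ω r‖ := by
  have := norm_sub_norm_le (((r ^ α : ℝ) : ℂ) * Complex.exp (Complex.I * (ω : ℂ))) 1
  rwa [norm_sub_rev, norm_mul, Complex.norm_exp_I_mul_ofReal, mul_one, norm_one,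
    Complex.norm_of_nonneg (by positivity)] at this

theorem norm_arcCoupling_le (hα : 0 < α) (hT : 0 < T) (hTα : 2 ≤ T ^ α) (η : ℝ) :
    ‖arcCoupling α T η‖ ≤ α / 2 := by
  have hge := rpow_sub_one_le_norm_rayFactor α (α * η) hT.le
  simp only [arcCoupling, norm_div, norm_mul, norm_neg, Complex.norm_exp_I_mul_ofReal,
    Complex.norm_I, Complex.norm_of_nonneg hα.le,
    Complex.norm_of_nonneg (Real.rpow_pos_of_pos hT α).le, Complex.norm_ofNat, one_mul, mul_one]
  rw [div_le_iff₀ (mul_pos (by norm_num) (by linarith))]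
  nlinarith

theorem re_cpow_half_nonneg (z : ℂ) : 0 ≤ (z ^ ((1 / 2 : ℝ) : ℂ)).re := by
  by_cases hz : z = 0
  · simp [hz]
  rw [Complex.cpow_def_of_ne_zero hz, Complex.exp_re]
  refine mul_nonneg (Real.exp_pos _).le (Real.cos_nonneg_of_mem_Icc ?_)
  rw [Complex.im_mul_ofReal, Complex.log_im]
  constructor <;> linarith [Complex.neg_pi_lt_arg z, Complex.arg_le_pi z]

theorem norm_arcSqrt_sub_le {s c : ℝ} (hT : 0 < T) (hc : c ≤ Real.cos (α * η / 2)) (hc0 : 0 < c)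
    (hlarge : 1 ≤ T ^ α * s * c) :
    ‖arcSqrt α T η - (T ^ (α / 2) : ℝ) * Complex.exp (((α * η / 2 : ℝ) : ℂ) * Complex.I)‖
      ≤ T ^ (α / 2) * s := by
  set a : ℝ := T ^ (α / 2)
  have ha : 0 < a := Real.rpow_pos_of_pos hT _
  have ha_sq : a ^ 2 = T ^ α := by
    rw [← Real.rpow_natCast, ← Real.rpow_mul hT.le]; congr 1; push_cast; ring
  set w₀ : ℂ := a * Complex.exp (((α * η / 2 : ℝ) : ℂ) * Complex.I)
  set w := arcSqrt α T η
  have hprod : (w - w₀) * (w + w₀) = -1 := by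
    have hw₀_sq : w₀ ^ 2 = ((T ^ α : ℝ) : ℂ) * Complex.exp (Complex.I * ((α * η : ℝ) : ℂ)) := by
      rw [mul_pow, ← Complex.exp_nat_mul, ← Complex.ofReal_pow, ha_sq]
      congr 2; push_cast; ring
    have hw_sq := arcSqrt_sq α T η
    rw [rayFactor, ← hw₀_sq] at hw_sq
    linear_combination hw_sq
  have hsum : a * c ≤ ‖w + w₀‖ := by
    refine le_trans ?_ (Complex.re_le_norm _)
    have hw : 0 ≤ w.re := re_cpow_half_nonneg _
    rw [Complex.add_re, Complex.re_ofReal_mul, Complex.exp_ofReal_mul_I_re]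
    linarith [mul_le_mul_of_nonneg_left hc ha.le]
  refine le_of_mul_le_mul_right ?_ (mul_pos ha hc0)
  calc ‖w - w₀‖ * (a * c) ≤ ‖w - w₀‖ * ‖w + w₀‖ := by gcongr
    _ = 1 := by rw [← norm_mul, hprod, norm_neg, norm_one]
    _ ≤ T ^ α * s * c := hlarge
    _ = a * s * (a * c) := by rw [← ha_sq]; ring

theorem rayPoint_mul_arcRoot_eq (α ψ T η : ℝ) : Complex.I * rayPoint η T * arcRoot α ψ T η
    = T * ((T ^ (α / 2) : ℝ) *
          (-Complex.I * Complex.exp (((ψ + (1 + α / 2) * η : ℝ) : ℂ) * Complex.I))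
        + -Complex.I * Complex.exp (((ψ + η : ℝ) : ℂ) * Complex.I)
          * (arcSqrt α T η
            - (T ^ (α / 2) : ℝ) * Complex.exp (((α * η / 2 : ℝ) : ℂ) * Complex.I))) := by
  have hleading : Complex.exp (((ψ + (1 + α / 2) * η : ℝ) : ℂ) * Complex.I)
      = Complex.exp (((ψ + η : ℝ) : ℂ) * Complex.I) *
        Complex.exp (((α * η / 2 : ℝ) : ℂ) * Complex.I) := by
    rw [← Complex.exp_add]; congr 1; push_cast; ring
  have hphase : Complex.exp (((ψ + η : ℝ) : ℂ) * Complex.I)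
      = Complex.exp (Complex.I * ψ) * Complex.exp (Complex.I * η) := by
    rw [← Complex.exp_add]; congr 1; push_cast; ring
  rw [hleading, hphase, arcRoot, rayPoint]
  ring

theorem re_rayPoint_mul_arcRoot_nonneg {s c : ℝ} (hT : 0 < T)
    (hs : s ≤ Real.sin (ψ + (1 + α / 2) * η)) (hc : c ≤ Real.cos (α * η / 2)) (hc0 : 0 < c)
    (hlarge : 1 ≤ T ^ α * s * c) : 0 ≤ (Complex.I * rayPoint η T * arcRoot α ψ T η).re := by
  rw [rayPoint_mul_arcRoot_eq, Complex.re_ofReal_mul, Complex.add_re, Complex.re_ofReal_mul]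
  set d := arcSqrt α T η - (T ^ (α / 2) : ℝ) * Complex.exp (((α * η / 2 : ℝ) : ℂ) * Complex.I)
  have hleading : (-Complex.I * Complex.exp (((ψ + (1 + α / 2) * η : ℝ) : ℂ) * Complex.I)).re
      = Real.sin (ψ + (1 + α / 2) * η) := by
    rw [neg_mul, Complex.neg_re, Complex.I_mul_re, Complex.exp_ofReal_mul_I_im, neg_neg]
  have herror : |(-Complex.I * Complex.exp (((ψ + η : ℝ) : ℂ) * Complex.I) * d).re|
      ≤ T ^ (α / 2) * s := by
    refine (Complex.abs_re_le_norm _).trans ?_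
    rw [norm_mul, norm_mul, Complex.norm_exp_ofReal_mul_I, norm_neg, Complex.norm_I, one_mul,
      one_mul]
    exact norm_arcSqrt_sub_le hT hc hc0 hlarge
  rw [hleading]
  refine mul_nonneg hT.le ?_
  linarith [neg_le_of_abs_le herror,
    mul_le_mul_of_nonneg_left hs (Real.rpow_pos_of_pos hT (α / 2)).le]

theorem wkbEnergy_zero_amplitude (k : ℝ) (g F W Y : ℝ → ℂ) (s : ℝ) : wkbEnergy k g F W Y 0 s
    = 2 * (k ^ 2 * ‖g s‖ ^ 2 * ‖W s‖ ^ 2 + ‖Y s‖ ^ 2) / ‖F s‖ ^ 2 := by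
  have hparallelogram := parallelogram_law_with_norm ℝ ((k : ℂ) * g s * W s) (Y s)
  have hsq : ‖(k : ℂ) * g s * W s‖ ^ 2 = k ^ 2 * ‖g s‖ ^ 2 * ‖W s‖ ^ 2 := by
    rw [norm_mul, norm_mul, mul_pow, mul_pow, Complex.norm_real, Real.norm_eq_abs, sq_abs]
  rw [wkbEnergy, sub_zero, norm_zero, norm_div, norm_div, div_pow, div_pow, growingPart,
    decayingPart, ← hsq, ← add_div, zero_pow two_ne_zero, add_zero, hparallelogram]

theorem IsSlitSolution.wkbEnergy_arc_le {V V' : ℂ → ℂ}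
    (hV : IsSlitSolution ((k * Complex.exp (Complex.I * ψ)) ^ 2) α V V') (hα : 0 < α) (hk : 0 ≤ k)
    (hγβ : -γ ≤ β) (hγ : γ < Real.pi) (hβ : β < Real.pi) (hαγ : α * γ < Real.pi)
    (hαβ : α * β < Real.pi) (hT : 1 < T) (hTα : 2 ≤ T ^ α)
    (hre : ∀ η ∈ Icc (-γ) β, 0 ≤ (Complex.I * rayPoint η T * arcRoot α ψ T η).re) :
    wkbEnergy k (arcRoot α ψ T) (arcMode α ψ T (-γ) k) (fun η => V (rayPoint η T))
        (fun η => V' (rayPoint η T)) 0 β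
      ≤ Real.exp (2 * α * (β + γ)) * wkbEnergy k (arcRoot α ψ T) (arcMode α ψ T (-γ) k)
        (fun η => V (rayPoint η T)) (fun η => V' (rayPoint η T)) 0 (-γ) := by
  have hT0 : 0 < T := by linarith
  have hrate : ∀ η ∈ Ioo (-γ) β, 0 ≤ 2 * k * (Complex.I * rayPoint η T * arcRoot α ψ T η).re :=
    fun η hη => mul_nonneg (by positivity) (hre η (Ioo_subset_Icc_self hη))
  have hE : IsErrorControl (-γ) β
      (fun η => 2 * k * (Complex.I * rayPoint η T * arcRoot α ψ T η).re) (arcCoupling α T)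
      (fun _ => 2 * α) (fun η => 2 * α * η) :=
    { continuousOn := by fun_prop
      hasDerivAt := fun η _ => by simpa using (hasDerivAt_id η).const_mul (2 * α)
      rate_nonneg := hrate
      density_nonneg := fun _ _ => by positivity
      coupling_le := fun η hη => by
        have hc := norm_arcCoupling_le hα hT0 hTα η
        have := mul_nonneg hα.le (hrate η hη)
        nlinarith [norm_nonneg (arcCoupling α T η)] }
  have henergy := (isWKBPath_arc hα hT hαγ hαβ ψ k).wkbEnergy_le_left
    (hV.isPathSolution_arc hγ hβ hT0) hE 0 (right_mem_Icc.2 hγβ)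
  rwa [show 2 * α * β - 2 * α * -γ = 2 * α * (β + γ) by ring] at henergy

end Arc

/-! ### Signs of the real and imaginary parts of the square root -/

theorem pos_of_continuous_of_ne_zero {f : ℝ → ℝ} (hf : Continuous f) {a : ℝ} (ha : 0 < f a)
    (hne : ∀ r, a ≤ r → f r ≠ 0) {r : ℝ} (hr : a ≤ r) : 0 < f r := by
  by_contra! hle
  obtain ⟨s, hs, hzero⟩ := intermediate_value_Icc' hr hf.continuousOn ⟨hle, ha.le⟩
  exact hne s hs.1 hzero

section

variable {α A B r : ℝ}

theorem rayRoot_sq_re (α A B r : ℝ) :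
    (rayRoot α A B r ^ 2).re = r ^ α * Real.cos A - Real.cos B := by
  rw [rayRoot_sq, mul_comm Complex.I, mul_comm Complex.I, Complex.sub_re, Complex.re_mul_ofReal,
    Complex.exp_ofReal_mul_I_re, Complex.exp_ofReal_mul_I_re]
  ring

theorem rayRoot_sq_im (α A B r : ℝ) :
    (rayRoot α A B r ^ 2).im = r ^ α * Real.sin A - Real.sin B := by
  rw [rayRoot_sq, mul_comm Complex.I, mul_comm Complex.I, Complex.sub_im, Complex.im_mul_ofReal,
    Complex.exp_ofReal_mul_I_im, Complex.exp_ofReal_mul_I_im]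
  ring

theorem two_mul_re_mul_im_rayRoot (α A B r : ℝ) :
    2 * ((rayRoot α A B r).re * (rayRoot α A B r).im) = r ^ α * Real.sin A - Real.sin B := by
  rw [← rayRoot_sq_im, sq, Complex.mul_im]; ring

theorem re_sq_sub_im_sq_rayRoot (α A B r : ℝ) :
    (rayRoot α A B r).re ^ 2 - (rayRoot α A B r).im ^ 2 = r ^ α * Real.cos A - Real.cos B := by
  rw [← rayRoot_sq_re, sq (rayRoot α A B r), Complex.mul_re]; ring

theorem sin_sub_eq_rayRoot (α A B r : ℝ) : Real.sin (A - B)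
    = 2 * Real.cos A * (rayRoot α A B r).re * (rayRoot α A B r).im
      - Real.sin A * ((rayRoot α A B r).re ^ 2 - (rayRoot α A B r).im ^ 2) := by
  rw [Real.sin_sub]
  linear_combination Real.sin A * re_sq_sub_im_sq_rayRoot α A B r
    - Real.cos A * two_mul_re_mul_im_rayRoot α A B r

theorem re_rayRoot_zero (hα : 0 < α) : (rayRoot α A B 0).re = Real.sin (B / 2) := by
  rw [rayRoot_zero hα, mul_comm Complex.I, neg_mul, Complex.neg_re, Complex.I_mul_re,
    Complex.exp_ofReal_mul_I_im, neg_neg]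

theorem im_rayRoot_zero (hα : 0 < α) : (rayRoot α A B 0).im = -Real.cos (B / 2) := by
  rw [rayRoot_zero hα, mul_comm Complex.I, neg_mul, Complex.neg_im, Complex.I_mul_im,
    Complex.exp_ofReal_mul_I_re]

theorem re_rayRoot_pos (hα : 0 < α) (hA : 0 < A) (hAB : A < B) (hB : B < Real.pi) (hr : 0 ≤ r) :
    0 < (rayRoot α A B r).re := by
  have hω : Real.sin (A - B) < 0 := Real.sin_neg_of_neg_of_neg_pi_lt (by linarith) (by linarith)
  have hsA : 0 < Real.sin A := Real.sin_pos_of_pos_of_lt_pi hA (by linarith)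
  refine pos_of_continuous_of_ne_zero (f := fun r => (rayRoot α A B r).re)
    (Complex.continuous_re.comp (continuous_rayRoot hα hω.ne)) ?_ (fun s _ hzero => ?_) hr
  · rw [re_rayRoot_zero hα]
    exact Real.sin_pos_of_pos_of_lt_pi (by linarith) (by linarith)
  · have hsin := sin_sub_eq_rayRoot α A B s
    rw [hzero] at hsin
    nlinarith [mul_nonneg hsA.le (sq_nonneg (rayRoot α A B s).im)]

theorem im_rayRoot_neg (hα : 0 < α) (hB : 0 < B) (hAB : B < A) (hA : A < Real.pi) (hr : 0 ≤ r) :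
    (rayRoot α A B r).im < 0 := by
  have hω : 0 < Real.sin (A - B) := Real.sin_pos_of_pos_of_lt_pi (by linarith) (by linarith)
  have hsA : 0 < Real.sin A := Real.sin_pos_of_pos_of_lt_pi (by linarith) hA
  refine neg_pos.1 <| pos_of_continuous_of_ne_zero (f := fun r => -(rayRoot α A B r).im)
    (Complex.continuous_im.comp (continuous_rayRoot hα hω.ne')).neg ?_ (fun s _ hzero => ?_) hr
  · rw [im_rayRoot_zero hα, neg_neg]
    exact Real.cos_pos_of_mem_Ioo ⟨by linarith, by linarith⟩
  · have hsin := sin_sub_eq_rayRoot α A B s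
    rw [neg_eq_zero.1 hzero] at hsin
    nlinarith [mul_nonneg hsA.le (sq_nonneg (rayRoot α A B s).re)]

theorem re_rayRoot_nonneg (hα : 0 < α) (hB : 0 < B) (hAB : B < A) (hA : A < Real.pi) (hr : 0 ≤ r)
    (h : r ^ α * Real.sin A ≤ Real.sin B) : 0 ≤ (rayRoot α A B r).re := by
  have hprod := two_mul_re_mul_im_rayRoot α A B r
  by_contra! hneg
  nlinarith [mul_pos_of_neg_of_neg hneg (im_rayRoot_neg hα hB hAB hA hr)]

theorem re_rayRoot_nonpos (hα : 0 < α) (hB : 0 < B) (hAB : B < A) (hA : A < Real.pi) (hr : 0 ≤ r)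
    (h : Real.sin B ≤ r ^ α * Real.sin A) : (rayRoot α A B r).re ≤ 0 := by
  have hprod := two_mul_re_mul_im_rayRoot α A B r
  by_contra! hpos
  nlinarith [mul_neg_of_pos_of_neg hpos (im_rayRoot_neg hα hB hAB hA hr)]

end

/-! ### The contour and its total action -/

/-- The real part of the turning-point integral of the action: `α` is the exponent and `ψ` the
argument of the large parameter. -/
noncomputable def turningAction (α ψ : ℝ) : ℝ := Real.sin ψ * ∫ u in (0 : ℝ)..1, √(1 - u ^ α)

/-- The angles of the contour for the coefficient `exp (I θ) t ^ α - exp (I φ)`. After rotation of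
the half-line to the ray of direction `β`, the large parameter has argument `ψ` and the coefficient
is real up to a constant phase; the contour comes from infinity along the ray of direction `-γ`,
on which the coefficient has angles `ψ` and `2 * ψ + 2 * -γ`. -/
structure ContourAngles (α θ φ ψ β γ : ℝ) : Prop where
  alpha_pos : 0 < α
  beta_pos : 0 < β
  psi_pos : 0 < ψ
  theta_lt_pi : θ < Real.pi
  theta_eq : θ = 2 * ψ + 2 * β + α * β
  phi_eq : φ = 2 * ψ + 2 * β
  psi_eq : ψ = 2 * ψ + 2 * -γ + α * -γ

theorem contourAngles {α θ φ : ℝ} (hα : 0 < α) (hφθ : φ < θ) (hθ : θ < Real.pi)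
    (hθφ : 2 * θ < (α + 2) * φ) :
    ContourAngles α θ φ ((φ - θ) / α + φ / 2) ((θ - φ) / α) (((φ - θ) / α + φ / 2) / (α + 2)) where
  alpha_pos := hα
  beta_pos := div_pos (by linarith) hα
  psi_pos := by
    rw [show (φ - θ) / α + φ / 2 = ((α + 2) * φ - 2 * θ) / (2 * α) by field_simp; ring]
    exact div_pos (by linarith) (by linarith)
  theta_lt_pi := hθ
  theta_eq := by field_simp; ring
  phi_eq := by ring
  psi_eq := by field_simp; ring

theorem rayAction_eq (α A B T : ℝ) : rayAction α A B T
    = -Complex.I * Complex.exp (Complex.I * ((B / 2 : ℝ) : ℂ)) *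
      ∫ r in (0 : ℝ)..T, rayFactor α (A - B) r ^ ((1 / 2 : ℝ) : ℂ) := by
  rw [← intervalIntegral.integral_const_mul]; rfl

namespace ContourAngles

variable {α θ φ ψ β γ : ℝ}

theorem gamma_pos (h : ContourAngles α θ φ ψ β γ) : 0 < γ := by
  refine pos_of_mul_pos_right (a := α + 2) ?_ (by linarith [h.alpha_pos])
  linarith [h.psi_eq, h.psi_pos]

theorem alpha_mul_beta_pos (h : ContourAngles α θ φ ψ β γ) : 0 < α * β :=
  mul_pos h.alpha_pos h.beta_pos

theorem alpha_mul_gamma_pos (h : ContourAngles α θ φ ψ β γ) : 0 < α * γ :=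
  mul_pos h.alpha_pos h.gamma_pos

theorem phi_pos (h : ContourAngles α θ φ ψ β γ) : 0 < φ := by
  linarith [h.phi_eq, h.psi_pos, h.beta_pos]

theorem phi_lt_theta (h : ContourAngles α θ φ ψ β γ) : φ < θ := by
  linarith [h.phi_eq, h.theta_eq, h.alpha_mul_beta_pos]

theorem sin_theta_pos (h : ContourAngles α θ φ ψ β γ) : 0 < Real.sin θ :=
  Real.sin_pos_of_pos_of_lt_pi (h.phi_pos.trans h.phi_lt_theta) h.theta_lt_pi

theorem sin_phi_pos (h : ContourAngles α θ φ ψ β γ) : 0 < Real.sin φ :=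
  Real.sin_pos_of_pos_of_lt_pi h.phi_pos (h.phi_lt_theta.trans h.theta_lt_pi)

theorem psi_lt_pi (h : ContourAngles α θ φ ψ β γ) : ψ < Real.pi := by
  linarith [h.phi_eq, h.phi_lt_theta, h.theta_lt_pi, h.psi_pos, h.beta_pos]

theorem beta_lt_pi (h : ContourAngles α θ φ ψ β γ) : β < Real.pi := by
  linarith [h.phi_eq, h.phi_lt_theta, h.theta_lt_pi, h.psi_pos, h.beta_pos]

theorem gamma_lt_pi (h : ContourAngles α θ φ ψ β γ) : γ < Real.pi := by
  linarith [h.psi_eq, h.psi_lt_pi, h.alpha_mul_gamma_pos, h.gamma_pos]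

theorem abs_beta_lt_pi (h : ContourAngles α θ φ ψ β γ) : |β| < Real.pi := by
  rw [abs_of_pos h.beta_pos]; exact h.beta_lt_pi

theorem abs_neg_gamma_lt_pi (h : ContourAngles α θ φ ψ β γ) : |-γ| < Real.pi := by
  rw [abs_neg, abs_of_pos h.gamma_pos]; exact h.gamma_lt_pi

theorem alpha_mul_beta_lt_pi (h : ContourAngles α θ φ ψ β γ) : α * β < Real.pi := by
  linarith [h.theta_eq, h.theta_lt_pi, h.psi_pos, h.beta_pos]

theorem alpha_mul_gamma_lt_pi (h : ContourAngles α θ φ ψ β γ) : α * γ < Real.pi := by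
  linarith [h.psi_eq, h.psi_lt_pi, h.gamma_pos]

theorem theta_sub_phi (h : ContourAngles α θ φ ψ β γ) : θ - φ = α * β := by
  rw [h.theta_eq, h.phi_eq]; ring

theorem psi_sub_lower (h : ContourAngles α θ φ ψ β γ) : ψ - (2 * ψ + 2 * -γ) = α * -γ := by
  linarith [h.psi_eq]

theorem isRegularRay_upper (h : ContourAngles α θ φ ψ β γ) : IsRegularRay α θ φ where
  alpha_pos := h.alpha_pos
  sin_ne_zero := by
    rw [h.theta_sub_phi]
    exact (Real.sin_pos_of_pos_of_lt_pi h.alpha_mul_beta_pos h.alpha_mul_beta_lt_pi).ne'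
  one_add_cos_pos := by
    have := Real.cos_lt_cos_of_nonneg_of_le_pi (h.phi_pos.trans h.phi_lt_theta).le le_rfl
      h.theta_lt_pi
    linarith [Real.cos_pi]

theorem isRegularRay_lower (h : ContourAngles α θ φ ψ β γ) :
    IsRegularRay α ψ (2 * ψ + 2 * -γ) where
  alpha_pos := h.alpha_pos
  sin_ne_zero := by
    rw [h.psi_sub_lower, mul_neg, Real.sin_neg]
    exact neg_ne_zero.2
      (Real.sin_pos_of_pos_of_lt_pi h.alpha_mul_gamma_pos h.alpha_mul_gamma_lt_pi).ne'
  one_add_cos_pos := by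
    have := Real.cos_lt_cos_of_nonneg_of_le_pi h.psi_pos.le le_rfl h.psi_lt_pi
    linarith [Real.cos_pi]

theorem eventually_rayControl (h : ContourAngles α θ φ ψ β γ) : ∀ᶠ k in Filter.atTop,
    RayControl α θ φ k ∧ RayControl α ψ (2 * ψ + 2 * -γ) k :=
  (h.isRegularRay_upper.eventually_rayControl h.sin_theta_pos.ne').and
    (h.isRegularRay_lower.eventually_rayControl
      (Real.sin_pos_of_pos_of_lt_pi h.psi_pos h.psi_lt_pi).ne')

theorem re_total_action (h : ContourAngles α θ φ ψ β γ) {T : ℝ} (hT : 1 < T) :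
    (arcAction α ψ T (-γ) β).re - (rayAction α ψ (2 * ψ + 2 * -γ) T).re - (rayAction α θ φ T).re
      = -(2 * turningAction α ψ) := by
  have hcontour := add_action_conj_ray_eq h.alpha_pos h.beta_pos h.alpha_mul_beta_lt_pi h.gamma_pos
    h.alpha_mul_gamma_lt_pi hT
  have hupper : Complex.exp (Complex.I * ((φ / 2 : ℝ) : ℂ))
      = Complex.exp ((ψ : ℂ) * Complex.I) * Complex.exp (Complex.I * β) := by
    rw [← Complex.exp_add, h.phi_eq]; congr 1; push_cast; ring
  have hlower : Complex.exp (Complex.I * (((2 * ψ + 2 * -γ) / 2 : ℝ) : ℂ))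
      = Complex.exp ((ψ : ℂ) * Complex.I) * Complex.exp (Complex.I * ((-γ : ℝ) : ℂ)) := by
    rw [← Complex.exp_add]; congr 1; push_cast; ring
  have haction : arcAction α ψ T (-γ) β - rayAction α ψ (2 * ψ + 2 * -γ) T - rayAction α θ φ T
      = ((2 * ∫ u in (0 : ℝ)..1, √(1 - u ^ α) : ℝ) : ℂ) *
        (Complex.I * Complex.exp ((ψ : ℂ) * Complex.I)) := by
    rw [rayAction_eq, rayAction_eq, arcAction_eq, hupper, hlower, h.theta_sub_phi,
      h.psi_sub_lower, mul_comm Complex.I (ψ : ℂ)]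
    push_cast at hcontour ⊢
    linear_combination Complex.exp ((ψ : ℂ) * Complex.I) * hcontour
  have hre := congrArg Complex.re haction
  rw [Complex.re_ofReal_mul, Complex.I_mul_re, Complex.exp_ofReal_mul_I_im, Complex.sub_re,
    Complex.sub_re] at hre
  rw [hre, turningAction]; ring

theorem half_psi_le_arc_angle (h : ContourAngles α θ φ ψ β γ) {η : ℝ} (hη : -γ ≤ η) :
    ψ / 2 ≤ ψ + (1 + α / 2) * η := by
  nlinarith [h.psi_eq, h.alpha_pos]

theorem arc_angle_le_half_theta (h : ContourAngles α θ φ ψ β γ) {η : ℝ} (hη : η ≤ β) :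
    ψ + (1 + α / 2) * η ≤ θ / 2 := by
  nlinarith [h.theta_eq, h.alpha_pos]

theorem eventually_re_arc_nonneg (h : ContourAngles α θ φ ψ β γ) : ∀ᶠ T : ℝ in Filter.atTop,
    ∀ η ∈ Icc (-γ) β, 0 ≤ (Complex.I * rayPoint η T * arcRoot α ψ T η).re := by
  have hsin : 0 < Real.sin (ψ / 2) :=
    Real.sin_pos_of_pos_of_lt_pi (by linarith [h.psi_pos]) (by linarith [h.psi_lt_pi, h.psi_pos])
  have hspread : α * (β + γ) < Real.pi := by
    linarith [h.theta_eq, h.theta_lt_pi, h.psi_eq, h.psi_pos, h.beta_pos, h.gamma_pos]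
  have hcos : 0 < Real.cos (α * (β + γ) / 2) := Real.cos_pos_of_mem_Ioo
    ⟨by linarith [h.alpha_mul_beta_pos, h.alpha_mul_gamma_pos, Real.pi_pos], by linarith⟩
  filter_upwards [Filter.eventually_gt_atTop 0, (tendsto_rpow_atTop h.alpha_pos).eventually_ge_atTop
    (1 / (Real.sin (ψ / 2) * Real.cos (α * (β + γ) / 2)))] with T hT hlarge η hη
  rw [div_le_iff₀ (by positivity), ← mul_assoc] at hlarge
  refine re_rayPoint_mul_arcRoot_nonneg hT ?_ ?_ hcos hlarge
  · exact Real.sin_le_sin_of_le_of_le_pi_div_two (by linarith [h.psi_pos, Real.pi_pos])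
      (by linarith [h.arc_angle_le_half_theta hη.2, h.theta_lt_pi]) (h.half_psi_le_arc_angle hη.1)
  · rw [← Real.cos_abs (α * η / 2)]
    refine Real.cos_le_cos_of_nonneg_of_le_pi (abs_nonneg _) (by linarith [Real.pi_pos]) ?_
    exact abs_le.2 ⟨by nlinarith [hη.1, h.alpha_pos, h.alpha_mul_beta_pos],
      by nlinarith [hη.2, h.alpha_pos, h.alpha_mul_gamma_pos]⟩

end ContourAngles

/-! ### Splitting solutions between the ends of an interval -/

section

variable {k s : ℝ} {g F W Y w y : ℝ → ℂ}

theorem growingPart_sub_mul (ρ : ℂ) :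
    growingPart k g (fun s => W s - ρ * w s) (fun s => Y s - ρ * y s) s
      = growingPart k g W Y s - ρ * growingPart k g w y s := by
  unfold growingPart; ring

theorem decayingPart_sub_mul (ρ : ℂ) :
    decayingPart k g (fun s => W s - ρ * w s) (fun s => Y s - ρ * y s) s
      = decayingPart k g W Y s - ρ * decayingPart k g w y s := by
  unfold decayingPart; ring

theorem IsPathSolution.sub_mul {s₀ s₁ : ℝ} {τ : ℝ → ℂ} (hW : IsPathSolution k s₀ s₁ g τ W Y)
    (hw : IsPathSolution k s₀ s₁ g τ w y) (ρ : ℂ) :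
    IsPathSolution k s₀ s₁ g τ (fun s => W s - ρ * w s) (fun s => Y s - ρ * y s) where
  continuousOn := hW.continuousOn.sub (continuousOn_const.mul hw.continuousOn)
  continuousOn_deriv := hW.continuousOn_deriv.sub (continuousOn_const.mul hw.continuousOn_deriv)
  hasDerivAt s hs := by
    convert! (hW.hasDerivAt s hs).sub ((hw.hasDerivAt s hs).const_mul ρ) using 1
    ring
  hasDerivAt_deriv s hs := by
    convert! (hW.hasDerivAt_deriv s hs).sub ((hw.hasDerivAt_deriv s hs).const_mul ρ) using 1
    ring

theorem two_mul_norm_mul_le :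
    2 * ‖k * g s * W s‖ ≤ ‖growingPart k g W Y s‖ + ‖decayingPart k g W Y s‖ := by
  have hsum : growingPart k g W Y s + decayingPart k g W Y s = 2 * (k * g s * W s) := by
    unfold growingPart decayingPart; ring
  simpa [hsum] using norm_add_le (growingPart k g W Y s) (decayingPart k g W Y s)

theorem two_mul_norm_deriv_le :
    2 * ‖Y s‖ ≤ ‖growingPart k g W Y s‖ + ‖decayingPart k g W Y s‖ := by
  have hsub : growingPart k g W Y s - decayingPart k g W Y s = 2 * Y s := by
    unfold growingPart decayingPart; ring
  simpa [hsub] using norm_sub_le (growingPart k g W Y s) (decayingPart k g W Y s)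

theorem norm_decayingPart_sub_norm_growingPart_le :
    ‖decayingPart k g W Y s‖ - ‖growingPart k g W Y s‖ ≤ 2 * ‖k * g s * W s‖ := by
  have hsum : decayingPart k g W Y s - -growingPart k g W Y s = 2 * (k * g s * W s) := by
    unfold growingPart decayingPart; ring
  have := norm_sub_norm_le (decayingPart k g W Y s) (-growingPart k g W Y s)
  simpa [hsum] using this

theorem norm_growingPart_le_of_wkbEnergy_le {M : ℝ} (hF : F s ≠ 0) (hM : 0 ≤ M)
    (h : wkbEnergy k g F W Y 0 s ≤ M ^ 2) : ‖growingPart k g W Y s‖ ≤ M * ‖F s‖ := by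
  rw [← div_le_iff₀ (norm_pos_iff.2 hF), ← norm_div]
  refine le_of_sq_le_sq (le_trans ?_ h) hM
  rw [wkbEnergy, sub_zero, norm_zero]
  linarith [sq_nonneg ‖decayingPart k g W Y s / F s‖]

theorem norm_decayingPart_le_of_wkbEnergy_le {M : ℝ} (hF : F s ≠ 0) (hM : 0 ≤ M)
    (h : wkbEnergy k g F W Y 0 s ≤ M ^ 2) : ‖decayingPart k g W Y s‖ ≤ M * ‖F s‖ := by
  rw [← div_le_iff₀ (norm_pos_iff.2 hF), ← norm_div]
  refine le_of_sq_le_sq (le_trans ?_ h) hM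
  rw [wkbEnergy, sub_zero, norm_zero]
  linarith [sq_nonneg ‖growingPart k g W Y s / F s‖]

theorem norm_mul_le_of_wkbEnergy_le {M : ℝ} (hF : F s ≠ 0) (hM : 0 ≤ M)
    (h : wkbEnergy k g F W Y 0 s ≤ M ^ 2) : ‖k * g s * W s‖ ≤ M * ‖F s‖ := by
  linarith [two_mul_norm_mul_le (k := k) (g := g) (W := W) (Y := Y) (s := s),
    norm_growingPart_le_of_wkbEnergy_le hF hM h, norm_decayingPart_le_of_wkbEnergy_le hF hM h]

theorem wkbEnergy_zero_const_mul (k : ℝ) (g F W Y : ℝ → ℂ) (c : ℂ) (s : ℝ) :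
    wkbEnergy k g F (fun s => c * W s) (fun s => c * Y s) 0 s
      = ‖c‖ ^ 2 * wkbEnergy k g F W Y 0 s := by
  rw [wkbEnergy_zero_amplitude, wkbEnergy_zero_amplitude, norm_mul, norm_mul]
  ring

theorem wkbEnergy_zero_eq_exp_mul {g' F' W' Y' : ℝ → ℂ} {s' x : ℝ} (hg : ‖g s‖ ^ 2 = ‖g' s'‖ ^ 2)
    (hW : ‖W s‖ = ‖W' s'‖) (hY : ‖Y s‖ = ‖Y' s'‖) (hF : ‖F' s'‖ = ‖F s‖ * Real.exp x) :
    wkbEnergy k g F W Y 0 s = Real.exp (2 * x) * wkbEnergy k g' F' W' Y' 0 s' := by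
  have hexp : Real.exp (2 * x) = Real.exp x ^ 2 := (Real.exp_nat_mul x 2).symm ▸ by norm_num
  have := Real.exp_ne_zero x
  rw [wkbEnergy_zero_amplitude, wkbEnergy_zero_amplitude, hg, hW, hY, hF, hexp, mul_pow]
  field_simp

end

namespace RayControl

variable {α A B k Z : ℝ} {W Y w y : ℝ → ℂ}

theorem norm_mul_le_of_decayingPart_eq_zero (hc : RayControl α A B k) (hZ : 0 ≤ Z)
    (hW : IsPathSolution k 0 Z (rayRoot α A B) 1 W Y)
    (hG : ∀ s ∈ Ioo 0 Z, 0 ≤ (rayRoot α A B s).re)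
    (hpure : decayingPart k (rayRoot α A B) W Y 0 = 0) {t : ℝ} (ht : t ∈ Icc 0 Z) :
    ‖k * rayRoot α A B t * W t‖
      ≤ ‖growingPart k (rayRoot α A B) W Y Z‖ / ‖rayMode α A B k 1 Z‖ * ‖rayMode α A B k 1 t‖ := by
  obtain ⟨hend, -, -⟩ :=
    hc.norm_parts_of_decayingPart_eq_zero le_rfl hW hG hpure (right_mem_Icc.2 hZ)
  obtain ⟨-, hgrowing, hdecaying⟩ := hc.norm_parts_of_decayingPart_eq_zero le_rfl hW hG hpure ht
  rw [← le_div_iff₀ (norm_pos_iff.2 (rayMode_ne_zero hc.sin_ne_zero _ _ _))] at hend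
  refine le_trans ?_ (mul_le_mul_of_nonneg_right hend (norm_nonneg _))
  linarith [two_mul_norm_mul_le (k := k) (g := rayRoot α A B) (W := W) (Y := Y) (s := t)]

theorem norm_mul_le_of_growingPart_eq_zero (hc : RayControl α A B k) (hZ : 0 ≤ Z)
    (hW : IsPathSolution k 0 Z (rayRoot α A B) 1 W Y)
    (hG : ∀ s ∈ Ioo 0 Z, 0 ≤ (rayRoot α A B s).re)
    (hpure : growingPart k (rayRoot α A B) W Y Z = 0) {t : ℝ} (ht : t ∈ Icc 0 Z) :
    ‖k * rayRoot α A B t * W t‖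
      ≤ ‖decayingPart k (rayRoot α A B) W Y 0‖ * ‖rayMode α A B k (-1) t‖ := by
  obtain ⟨hstart, -, -⟩ :=
    hc.norm_parts_of_growingPart_eq_zero le_rfl hW hG hpure (left_mem_Icc.2 hZ)
  obtain ⟨-, hdecaying, hgrowing⟩ := hc.norm_parts_of_growingPart_eq_zero le_rfl hW hG hpure ht
  rw [rayMode_zero hc.alpha_pos, norm_one, mul_one] at hstart
  refine le_trans ?_ (mul_le_mul_of_nonneg_right hstart (norm_nonneg _))
  linarith [two_mul_norm_mul_le (k := k) (g := rayRoot α A B) (W := W) (Y := Y) (s := t)]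

theorem decayingPart_zero_ne_zero (hc : RayControl α A B k) (hZ : 0 ≤ Z)
    (hW : IsPathSolution k 0 Z (rayRoot α A B) 1 W Y)
    (hG : ∀ s ∈ Ioo 0 Z, 0 ≤ (rayRoot α A B s).re)
    (hpure : growingPart k (rayRoot α A B) W Y Z = 0)
    (hne : decayingPart k (rayRoot α A B) W Y Z ≠ 0) :
    decayingPart k (rayRoot α A B) W Y 0 ≠ 0 := by
  obtain ⟨hstart, -, -⟩ :=
    hc.norm_parts_of_growingPart_eq_zero le_rfl hW hG hpure (left_mem_Icc.2 hZ)
  rw [rayMode_zero hc.alpha_pos, norm_one, mul_one] at hstart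
  rw [← norm_pos_iff] at hne ⊢
  have := norm_pos_iff.2 (rayMode_ne_zero (α := α) hc.sin_ne_zero k (-1) Z)
  exact lt_of_lt_of_le (by positivity) hstart

/-- Subtracting the multiple of the decaying solution `w` with the same decaying part at `0` leaves
a solution which is purely growing there. -/
theorem norm_mul_le_add (hc : RayControl α A B k) (hZ : 0 ≤ Z)
    (hW : IsPathSolution k 0 Z (rayRoot α A B) 1 W Y)
    (hw : IsPathSolution k 0 Z (rayRoot α A B) 1 w y)
    (hG : ∀ s ∈ Ioo 0 Z, 0 ≤ (rayRoot α A B s).re)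
    (hpure : growingPart k (rayRoot α A B) w y Z = 0)
    (hne : decayingPart k (rayRoot α A B) w y Z ≠ 0) {t : ℝ} (ht : t ∈ Icc 0 Z) :
    ‖k * rayRoot α A B t * W t‖
      ≤ ‖decayingPart k (rayRoot α A B) W Y 0‖ * ‖rayMode α A B k (-1) t‖
        + ‖growingPart k (rayRoot α A B) W Y Z‖ / ‖rayMode α A B k 1 Z‖
          * ‖rayMode α A B k 1 t‖ := by
  have hne₀ := hc.decayingPart_zero_ne_zero hZ hw hG hpure hne
  set ρ := decayingPart k (rayRoot α A B) W Y 0 / decayingPart k (rayRoot α A B) w y 0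
  have hρ_mul : ρ * decayingPart k (rayRoot α A B) w y 0 = decayingPart k (rayRoot α A B) W Y 0 :=
    div_mul_cancel₀ _ hne₀
  have hgrowing := hc.norm_mul_le_of_decayingPart_eq_zero hZ (hW.sub_mul hw ρ) hG
    (by rw [decayingPart_sub_mul, hρ_mul, sub_self]) ht
  have hdecaying := mul_le_mul_of_nonneg_left
    (hc.norm_mul_le_of_growingPart_eq_zero hZ hw hG hpure ht) (norm_nonneg ρ)
  rw [growingPart_sub_mul, hpure, mul_zero, sub_zero] at hgrowing
  rw [← mul_assoc, ← norm_mul, ← norm_mul, hρ_mul] at hdecaying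
  calc ‖k * rayRoot α A B t * W t‖
      = ‖ρ * (k * rayRoot α A B t * w t) + k * rayRoot α A B t * (W t - ρ * w t)‖ := by
        congr 1; ring
    _ ≤ _ := (norm_add_le _ _).trans (add_le_add hdecaying hgrowing)

end RayControl

/-! ### The recessive solution -/

/-- The constant in the bounds for the recessive solution: the factor `exp (α * (β + γ))` is the
loss along the arc, and `5` bounds the losses along the two rays. -/
noncomputable def connectionConstant (α β γ : ℝ) : ℝ := 5 * Real.exp (α * (β + γ))

/-- The restriction to the ray of direction `η` of the solution of `V'' = Λ (x ^ α - 1) V` with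
initial values `a` and `b`, where `Λ = (k * exp (I ψ)) ^ 2`. -/
noncomputable def raySolution (α k ψ η : ℝ) (a b : ℂ) (r : ℝ) : ℂ :=
  slitSolution ((k * Complex.exp (Complex.I * ψ)) ^ 2) α a b (rayPoint η r)

/-- The derivative of `raySolution` along the ray. -/
noncomputable def raySolutionDeriv (α k ψ η : ℝ) (a b : ℂ) (r : ℝ) : ℂ :=
  Complex.exp (Complex.I * η) *
    slitSolutionDeriv ((k * Complex.exp (Complex.I * ψ)) ^ 2) α a b (rayPoint η r)

section

variable {α k ψ η A B T : ℝ} {g : ℝ → ℂ}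

theorem raySolution_zero (hα : 0 < α) (a b : ℂ) : raySolution α k ψ η a b 0 = a := by
  simp [raySolution, rayPoint, slitSolution_zero hα]

theorem norm_raySolutionDeriv_zero (hα : 0 < α) (a b : ℂ) :
    ‖raySolutionDeriv α k ψ η a b 0‖ = ‖b‖ := by
  simp [raySolutionDeriv, rayPoint, slitSolutionDeriv_zero hα, Complex.norm_exp_I_mul_ofReal]

theorem raySolution_mul (c a b : ℂ) (r : ℝ) :
    raySolution α k ψ η (c * a) (c * b) r = c * raySolution α k ψ η a b r := by
  unfold raySolution slitSolution; ring

theorem raySolutionDeriv_mul (c a b : ℂ) (r : ℝ) :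
    raySolutionDeriv α k ψ η (c * a) (c * b) r = c * raySolutionDeriv α k ψ η a b r := by
  unfold raySolutionDeriv slitSolutionDeriv; ring

theorem isPathSolution_raySolution (hα : 0 < α) (hη : |η| < Real.pi)
    (hA : A = 2 * ψ + 2 * η + α * η) (hB : B = 2 * ψ + 2 * η) {s₀ s₁ : ℝ} (h₀ : 0 ≤ s₀) (a b : ℂ) :
    IsPathSolution k s₀ s₁ (rayRoot α A B) 1 (raySolution α k ψ η a b)
      (raySolutionDeriv α k ψ η a b) :=
  (isSlitSolution_slitSolution _ hα a b).isPathSolution_ray hη hA hB h₀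

theorem exists_raySolution_growingPart_eq_zero (hα : 0 < α) (hη : |η| < Real.pi) (hk : k ≠ 0)
    (hT : 0 < T) (hg : g T ≠ 0) :
    ∃ a b, growingPart k g (raySolution α k ψ η a b) (raySolutionDeriv α k ψ η a b) T = 0 ∧
      decayingPart k g (raySolution α k ψ η a b) (raySolutionDeriv α k ψ η a b) T ≠ 0 := by
  have hexp := Complex.exp_ne_zero (Complex.I * η)
  obtain ⟨a, b, hvalue, hderiv⟩ :=
    exists_slitSolution_eq ((k * Complex.exp (Complex.I * ψ)) ^ 2) hα
      (rayPoint_mem_slitPlane hT hη) 1 (-(Complex.exp (Complex.I * η))⁻¹ * (k * g T))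
  have hderiv' : raySolutionDeriv α k ψ η a b T = -(k * g T) := by
    rw [raySolutionDeriv, hderiv]; field_simp
  refine ⟨a, b, ?_, ?_⟩
  · rw [growingPart, raySolution, hvalue, hderiv']; ring
  · rw [decayingPart, raySolution, hvalue, hderiv', mul_one, sub_neg_eq_add, ← two_mul]
    exact mul_ne_zero two_ne_zero (mul_ne_zero (Complex.ofReal_ne_zero.2 hk) hg)

theorem RayControl.norm_initial_values_le (hc : RayControl α A B k) (hT : 0 ≤ T) {W Y : ℝ → ℂ}
    (hW : IsPathSolution k 0 T (rayRoot α A B) 1 W Y)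
    (hG : ∀ s ∈ Ioo 0 T, 0 ≤ (rayRoot α A B s).re)
    (hpure : growingPart k (rayRoot α A B) W Y T = 0) :
    let K := ‖decayingPart k (rayRoot α A B) W Y T‖ / ‖rayMode α A B k (-1) T‖
    K ≤ 4 * k * ‖W 0‖ ∧ ‖Y 0‖ ≤ 3 / 4 * K := by
  intro K
  obtain ⟨hlower, hupper, hgrowing⟩ :=
    hc.norm_parts_of_growingPart_eq_zero le_rfl hW hG hpure (left_mem_Icc.2 hT)
  rw [rayMode_zero hc.alpha_pos, norm_one, mul_one] at hlower hupper hgrowing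
  have hroot : ‖(k : ℂ) * rayRoot α A B 0 * W 0‖ = k * ‖W 0‖ := by
    rw [norm_mul, norm_mul, norm_rayRoot, rayFactor_zero hc.alpha_pos, norm_one, Real.one_rpow,
      Complex.norm_of_nonneg (zero_le_one.trans hc.one_le), mul_one]
  have hdiff := norm_decayingPart_sub_norm_growingPart_le (k := k) (g := rayRoot α A B) (W := W)
    (Y := Y) (s := 0)
  have hderiv := two_mul_norm_deriv_le (k := k) (g := rayRoot α A B) (W := W) (Y := Y) (s := 0)
  rw [hroot] at hdiff
  constructor <;> linarith

theorem RayControl.exists_raySolution_wkbEnergy_le (hc : RayControl α A B k) (hη : |η| < Real.pi)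
    (hA : A = 2 * ψ + 2 * η + α * η) (hB : B = 2 * ψ + 2 * η)
    (hG : ∀ s ∈ Ioo 0 T, 0 ≤ (rayRoot α A B s).re) (hT : 0 < T) :
    ∃ m : ℂ, ‖m‖ ≤ 3 * k ∧ wkbEnergy k (rayRoot α A B) (rayMode α A B k (-1))
      (raySolution α k ψ η 1 m) (raySolutionDeriv α k ψ η 1 m) 0 T ≤ 16 * k ^ 2 := by
  have hk : 0 < k := zero_lt_one.trans_le hc.one_le
  have hmode := norm_pos_iff.2 (rayMode_ne_zero (α := α) hc.sin_ne_zero k (-1) T)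
  obtain ⟨a, b, hpure, hne⟩ := exists_raySolution_growingPart_eq_zero (g := rayRoot α A B) (ψ := ψ)
    hc.alpha_pos hη hk.ne' hT (rayRoot_ne_zero hc.sin_ne_zero T)
  obtain ⟨hvalue, hderiv⟩ := hc.norm_initial_values_le hT.le
    (isPathSolution_raySolution hc.alpha_pos hη hA hB le_rfl a b) hG hpure
  rw [raySolution_zero hc.alpha_pos] at hvalue
  rw [norm_raySolutionDeriv_zero hc.alpha_pos] at hderiv
  set K := ‖decayingPart k (rayRoot α A B) (raySolution α k ψ η a b)
    (raySolutionDeriv α k ψ η a b) T‖ / ‖rayMode α A B k (-1) T‖ with hK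
  have hKpos : 0 < K := div_pos (norm_pos_iff.2 hne) hmode
  have ha : 0 < ‖a‖ := pos_of_mul_pos_right (hKpos.trans_le hvalue) (by positivity)
  have henergy : wkbEnergy k (rayRoot α A B) (rayMode α A B k (-1)) (raySolution α k ψ η a b)
      (raySolutionDeriv α k ψ η a b) 0 T = K ^ 2 := by
    simp [wkbEnergy, hpure, hK]
  have hnormalize : ∀ r, raySolution α k ψ η 1 (a⁻¹ * b) r = a⁻¹ * raySolution α k ψ η a b r ∧
      raySolutionDeriv α k ψ η 1 (a⁻¹ * b) r = a⁻¹ * raySolutionDeriv α k ψ η a b r := fun r => by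
    rw [← raySolution_mul, ← raySolutionDeriv_mul, inv_mul_cancel₀ (norm_pos_iff.1 ha)]
    exact ⟨rfl, rfl⟩
  refine ⟨a⁻¹ * b, ?_, ?_⟩
  · rw [norm_mul, norm_inv, inv_mul_le_iff₀ ha]
    linarith
  · rw [funext fun r => (hnormalize r).1, funext fun r => (hnormalize r).2,
      wkbEnergy_zero_const_mul, henergy, norm_inv, inv_pow, inv_mul_le_iff₀ (by positivity)]
    exact (pow_le_pow_left₀ hKpos.le hvalue 2).trans_eq (by ring)

end

namespace ContourAngles

variable {α θ φ ψ β γ k T Z : ℝ}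

theorem re_rayRoot_lower_nonneg (h : ContourAngles α θ φ ψ β γ) {r : ℝ} (hr : 0 ≤ r) :
    0 ≤ (rayRoot α ψ (2 * ψ + 2 * -γ) r).re :=
  (re_rayRoot_pos h.alpha_pos h.psi_pos (by linarith [h.psi_eq, h.alpha_mul_gamma_pos])
    (by linarith [h.theta_eq, h.theta_lt_pi, h.alpha_mul_beta_pos, h.beta_pos, h.gamma_pos])
    hr).le

theorem re_rayRoot_upper_nonneg (h : ContourAngles α θ φ ψ β γ)
    (hZ : Z ^ α * Real.sin θ = Real.sin φ) {t : ℝ} (ht : t ∈ Icc 0 Z) :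
    0 ≤ (rayRoot α θ φ t).re := by
  refine re_rayRoot_nonneg h.alpha_pos h.phi_pos h.phi_lt_theta h.theta_lt_pi ht.1 (hZ ▸ ?_)
  exact mul_le_mul_of_nonneg_right (Real.rpow_le_rpow ht.1 ht.2 h.alpha_pos.le) h.sin_theta_pos.le

theorem re_rayRoot_upper_nonpos (h : ContourAngles α θ φ ψ β γ) (hZ₀ : 0 ≤ Z)
    (hZ : Z ^ α * Real.sin θ = Real.sin φ) {t : ℝ} (ht : Z ≤ t) : (rayRoot α θ φ t).re ≤ 0 := by
  refine re_rayRoot_nonpos h.alpha_pos h.phi_pos h.phi_lt_theta h.theta_lt_pi (hZ₀.trans ht)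
    (hZ ▸ ?_)
  exact mul_le_mul_of_nonneg_right (Real.rpow_le_rpow hZ₀ ht h.alpha_pos.le) h.sin_theta_pos.le

theorem wkbEnergy_arc_start (h : ContourAngles α θ φ ψ β γ) (m : ℂ) :
    wkbEnergy k (arcRoot α ψ T) (arcMode α ψ T (-γ) k)
        (fun η => slitSolution ((k * Complex.exp (Complex.I * ψ)) ^ 2) α 1 m (rayPoint η T))
        (fun η => slitSolutionDeriv ((k * Complex.exp (Complex.I * ψ)) ^ 2) α 1 m (rayPoint η T))
        0 (-γ)
      = Real.exp (2 * -(k * (rayAction α ψ (2 * ψ + 2 * -γ) T).re)) *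
        wkbEnergy k (rayRoot α ψ (2 * ψ + 2 * -γ)) (rayMode α ψ (2 * ψ + 2 * -γ) k (-1))
          (raySolution α k ψ (-γ) 1 m) (raySolutionDeriv α k ψ (-γ) 1 m) 0 T := by
  refine wkbEnergy_zero_eq_exp_mul ?_ rfl ?_ ?_
  · rw [norm_arcRoot_sq, norm_rayRoot_sq, h.psi_sub_lower]
  · rw [raySolutionDeriv, norm_mul, Complex.norm_exp_I_mul_ofReal, one_mul]
  · rw [norm_rayMode, norm_arcMode, h.psi_sub_lower, arcAction, intervalIntegral.integral_same]
    simp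

theorem wkbEnergy_upper_eq (h : ContourAngles α θ φ ψ β γ) (m : ℂ) :
    wkbEnergy k (rayRoot α θ φ) (rayMode α θ φ k 1) (raySolution α k ψ β 1 m)
        (raySolutionDeriv α k ψ β 1 m) 0 T
      = Real.exp (2 * (k * ((arcAction α ψ T (-γ) β).re - (rayAction α θ φ T).re))) *
        wkbEnergy k (arcRoot α ψ T) (arcMode α ψ T (-γ) k)
          (fun η => slitSolution ((k * Complex.exp (Complex.I * ψ)) ^ 2) α 1 m (rayPoint η T))
          (fun η => slitSolutionDeriv ((k * Complex.exp (Complex.I * ψ)) ^ 2) α 1 m (rayPoint η T))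
          0 β := by
  refine wkbEnergy_zero_eq_exp_mul ?_ rfl ?_ ?_
  · rw [norm_arcRoot_sq, norm_rayRoot_sq, h.theta_sub_phi]
  · rw [raySolutionDeriv, norm_mul, Complex.norm_exp_I_mul_ofReal, one_mul]
  · rw [norm_rayMode, norm_arcMode, h.theta_sub_phi, mul_assoc, ← Real.exp_add]
    congr 2; ring

theorem wkbEnergy_upper_le (h : ContourAngles α θ φ ψ β γ) (hk : 0 ≤ k) (hT : 1 < T)
    (hTα : 2 ≤ T ^ α)
    (hre : ∀ η ∈ Icc (-γ) β, 0 ≤ (Complex.I * rayPoint η T * arcRoot α ψ T η).re) (m : ℂ) :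
    wkbEnergy k (rayRoot α θ φ) (rayMode α θ φ k 1) (raySolution α k ψ β 1 m)
        (raySolutionDeriv α k ψ β 1 m) 0 T
      ≤ Real.exp (α * (β + γ) - 2 * k * turningAction α ψ) ^ 2 *
        wkbEnergy k (rayRoot α ψ (2 * ψ + 2 * -γ)) (rayMode α ψ (2 * ψ + 2 * -γ) k (-1))
          (raySolution α k ψ (-γ) 1 m) (raySolutionDeriv α k ψ (-γ) 1 m) 0 T := by
  have harc := (isSlitSolution_slitSolution ((k * Complex.exp (Complex.I * ψ)) ^ 2) h.alpha_pos
    1 m).wkbEnergy_arc_le h.alpha_pos hk (by linarith [h.beta_pos, h.gamma_pos]) h.gamma_lt_pi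
    h.beta_lt_pi h.alpha_mul_gamma_lt_pi h.alpha_mul_beta_lt_pi hT hTα hre
  rw [h.wkbEnergy_arc_start] at harc
  rw [h.wkbEnergy_upper_eq]
  refine (mul_le_mul_of_nonneg_left harc (Real.exp_pos _).le).trans_eq ?_
  rw [← mul_assoc, ← mul_assoc, ← Real.exp_add, ← Real.exp_add, ← Real.exp_nat_mul]
  congr 2
  push_cast
  linear_combination 2 * k * h.re_total_action hT

theorem eventually_exists_wkbEnergy_le (h : ContourAngles α θ φ ψ β γ) (hc : RayControl α θ φ k)
    (hc' : RayControl α ψ (2 * ψ + 2 * -γ) k) (hZ₀ : 0 ≤ Z)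
    (hZ : Z ^ α * Real.sin θ = Real.sin φ) :
    ∀ᶠ T in Filter.atTop, ∃ m : ℂ, ‖m‖ ≤ 3 * k ∧ ∀ t ∈ Icc Z T,
      wkbEnergy k (rayRoot α θ φ) (rayMode α θ φ k 1) (raySolution α k ψ β 1 m)
          (raySolutionDeriv α k ψ β 1 m) 0 t
        ≤ (connectionConstant α β γ * (k * Real.exp (-(2 * k * turningAction α ψ)))) ^ 2 := by
  filter_upwards [h.eventually_re_arc_nonneg, Filter.eventually_gt_atTop 1,
    (tendsto_rpow_atTop h.alpha_pos).eventually_ge_atTop 2] with T hre hT hTα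
  obtain ⟨m, hm, henergy⟩ := hc'.exists_raySolution_wkbEnergy_le (T := T) h.abs_neg_gamma_lt_pi
    h.psi_eq rfl (fun s hs => h.re_rayRoot_lower_nonneg hs.1.le) (by linarith)
  refine ⟨m, hm, fun t ht => ?_⟩
  have hup := hc.wkbEnergy_le (hZ₀.trans ht.1) ht.2
    (isPathSolution_raySolution h.alpha_pos h.abs_beta_lt_pi h.theta_eq h.phi_eq
      (hZ₀.trans ht.1) 1 m)
    (fun s hs => h.re_rayRoot_upper_nonpos hZ₀ hZ (ht.1.trans hs.1.le))
  have hT_le := h.wkbEnergy_upper_le (zero_le_one.trans hc.one_le) hT hTα hre m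
  have hsq : 0 ≤ Real.exp (α * (β + γ) - 2 * k * turningAction α ψ) ^ 2 := sq_nonneg _
  calc _ ≤ 17 / 16 * (Real.exp (α * (β + γ) - 2 * k * turningAction α ψ) ^ 2 * (16 * k ^ 2)) := by
        linarith [mul_le_mul_of_nonneg_left henergy hsq]
    _ ≤ (5 * k * Real.exp (α * (β + γ) - 2 * k * turningAction α ψ)) ^ 2 := by
        nlinarith [mul_nonneg hsq (sq_nonneg k)]
    _ = _ := by
        rw [connectionConstant, sub_eq_add_neg, Real.exp_add]; ring

/-- The initial slopes found on the intervals `[Z, T]` are bounded, so they have a limit point as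
`T` tends to infinity. -/
theorem exists_wkbEnergy_le (h : ContourAngles α θ φ ψ β γ) (hc : RayControl α θ φ k)
    (hc' : RayControl α ψ (2 * ψ + 2 * -γ) k) (hZ₀ : 0 ≤ Z)
    (hZ : Z ^ α * Real.sin θ = Real.sin φ) :
    ∃ m : ℂ, ‖m‖ ≤ 3 * k ∧ ∀ t, Z ≤ t →
      wkbEnergy k (rayRoot α θ φ) (rayMode α θ φ k 1) (raySolution α k ψ β 1 m)
          (raySolutionDeriv α k ψ β 1 m) 0 t
        ≤ (connectionConstant α β γ * (k * Real.exp (-(2 * k * turningAction α ψ)))) ^ 2 := by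
  obtain ⟨N, hN⟩ := Filter.eventually_atTop.1 (h.eventually_exists_wkbEnergy_le hc hc' hZ₀ hZ)
  choose m hm henergy using fun n : ℕ => hN (N + n) (by simp)
  obtain ⟨m₀, hm₀, ν, hν, hlim⟩ := tendsto_subseq_of_bounded
    (Metric.isBounded_closedBall (x := (0 : ℂ)) (r := 3 * k))
    (fun n => mem_closedBall_zero_iff.2 (hm n))
  rw [Metric.isClosed_closedBall.closure_eq, mem_closedBall_zero_iff] at hm₀
  refine ⟨m₀, hm₀, fun t ht => ?_⟩
  have hcont : Continuous fun m : ℂ => wkbEnergy k (rayRoot α θ φ) (rayMode α θ φ k 1)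
      (raySolution α k ψ β 1 m) (raySolutionDeriv α k ψ β 1 m) 0 t := by
    unfold wkbEnergy growingPart decayingPart raySolution raySolutionDeriv slitSolution
      slitSolutionDeriv
    fun_prop
  have hend : Filter.Tendsto (fun n => N + (ν n : ℝ)) Filter.atTop Filter.atTop :=
    Filter.tendsto_atTop_add_const_left _ _ (tendsto_natCast_atTop_atTop.comp hν.tendsto_atTop)
  refine le_of_tendsto ((hcont.tendsto m₀).comp hlim) ?_
  filter_upwards [hend.eventually_ge_atTop t] with n hn
  exact henergy (ν n) t ⟨ht, hn⟩

end ContourAngles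

/-! ### Bounds for the recessive solution -/

theorem norm_le_of_norm_mul_rayRoot_le {α A B k t D x : ℝ} {v : ℂ} (hk : 0 < k)
    (hω : Real.sin (A - B) ≠ 0)
    (h : ‖k * rayRoot α A B t * v‖ ≤ D * (k * (‖rayFactor α (A - B) t‖ ^ (1 / 4 : ℝ) * x))) :
    ‖v‖ ≤ D * ‖rayFactor α (A - B) t‖ ^ (-(1 / 4 : ℝ)) * x := by
  have hfactor := norm_pos_iff.2 (rayFactor_ne_zero (α := α) hω t)
  rw [norm_mul, norm_mul, norm_rayRoot, Complex.norm_of_nonneg hk.le,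
    show (1 / 4 : ℝ) = 1 / 2 + -(1 / 4) by norm_num, Real.rpow_add hfactor] at h
  refine le_of_mul_le_mul_left (h.trans_eq ?_)
    (mul_pos hk (Real.rpow_pos_of_pos hfactor (1 / 2)))
  ring

namespace ContourAngles

variable {α θ φ ψ β γ k Z : ℝ}

theorem five_le_connectionConstant (h : ContourAngles α θ φ ψ β γ) :
    5 ≤ connectionConstant α β γ := by
  have := Real.one_le_exp (x := α * (β + γ))
    (by linarith [h.alpha_mul_beta_pos, h.alpha_mul_gamma_pos])
  unfold connectionConstant
  linarith

theorem norm_decayingPart_zero_le (h : ContourAngles α θ φ ψ β γ) (hk : 0 ≤ k) {m : ℂ}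
    (hm : ‖m‖ ≤ 3 * k) :
    ‖decayingPart k (rayRoot α θ φ) (raySolution α k ψ β 1 m) (raySolutionDeriv α k ψ β 1 m) 0‖
      ≤ connectionConstant α β γ * k := by
  have hroot : ‖rayRoot α θ φ 0‖ = 1 := by
    rw [norm_rayRoot, rayFactor_zero h.alpha_pos, norm_one, Real.one_rpow]
  refine (norm_sub_le _ _).trans ?_
  rw [raySolution_zero h.alpha_pos, norm_raySolutionDeriv_zero h.alpha_pos, norm_mul, norm_mul,
    hroot, norm_one, mul_one, mul_one, Complex.norm_of_nonneg hk]
  nlinarith [h.five_le_connectionConstant]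

theorem exists_recessive_bounds (h : ContourAngles α θ φ ψ β γ) (hc : RayControl α θ φ k)
    (hc' : RayControl α ψ (2 * ψ + 2 * -γ) k) (hZ₀ : 0 < Z)
    (hZ : Z ^ α * Real.sin θ = Real.sin φ) :
    ∃ m : ℂ,
      (∀ t ∈ Icc 0 Z, ‖raySolution α k ψ β 1 m t‖
        ≤ connectionConstant α β γ * ‖rayFactor α (θ - φ) t‖ ^ (-(1 / 4 : ℝ)) *
          (Real.exp (k * ((rayAction α θ φ t).re - 2 * turningAction α ψ))
            + Real.exp (-(k * (rayAction α θ φ t).re)))) ∧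
      ∀ t, Z ≤ t → ‖raySolution α k ψ β 1 m t‖
        ≤ connectionConstant α β γ * ‖rayFactor α (θ - φ) t‖ ^ (-(1 / 4 : ℝ)) *
          Real.exp (k * ((rayAction α θ φ t).re - 2 * turningAction α ψ)) := by
  have hk : 0 < k := zero_lt_one.trans_le hc.one_le
  have hmode : ∀ t, rayMode α θ φ k 1 t ≠ 0 := rayMode_ne_zero hc.sin_ne_zero k 1
  have hC := h.five_le_connectionConstant
  obtain ⟨m, hm, henergy⟩ := h.exists_wkbEnergy_le hc hc' hZ₀.le hZ
  set R := turningAction α ψ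
  set M := connectionConstant α β γ * (k * Real.exp (-(2 * k * R)))
  have hM : 0 ≤ M := by positivity
  have hgrowth : ∀ t, M * ‖rayMode α θ φ k 1 t‖ = connectionConstant α β γ *
      (k * (‖rayFactor α (θ - φ) t‖ ^ (1 / 4 : ℝ) *
        Real.exp (k * ((rayAction α θ φ t).re - 2 * R)))) := fun t => by
    rw [norm_rayMode, show k * ((rayAction α θ φ t).re - 2 * R)
      = -(2 * k * R) + k * 1 * (rayAction α θ φ t).re by ring, Real.exp_add]
    ring
  refine ⟨m, fun t ht => ?_, fun t ht => ?_⟩ <;>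
    refine norm_le_of_norm_mul_rayRoot_le hk hc.sin_ne_zero ?_
  · have hsol := isPathSolution_raySolution (k := k) (s₁ := Z) h.alpha_pos h.abs_beta_lt_pi
      h.theta_eq h.phi_eq le_rfl
    obtain ⟨a, b, hpure, hne⟩ := exists_raySolution_growingPart_eq_zero (ψ := ψ) h.alpha_pos
      h.abs_beta_lt_pi hk.ne' hZ₀ (rayRoot_ne_zero (α := α) hc.sin_ne_zero Z)
    have hend := norm_growingPart_le_of_wkbEnergy_le (hmode Z) hM (henergy Z le_rfl)
    rw [← div_le_iff₀ (norm_pos_iff.2 (hmode Z))] at hend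
    refine (hc.norm_mul_le_add hZ₀.le (hsol 1 m) (hsol a b)
      (fun s hs => h.re_rayRoot_upper_nonneg hZ (Ioo_subset_Icc_self hs)) hpure hne ht).trans ?_
    refine (add_le_add (mul_le_mul_of_nonneg_right (h.norm_decayingPart_zero_le hk.le hm)
      (norm_nonneg _)) (mul_le_mul_of_nonneg_right hend (norm_nonneg _))).trans_eq ?_
    rw [hgrowth, norm_rayMode, mul_neg_one, neg_mul]
    ring
  · exact (norm_mul_le_of_wkbEnergy_le (hmode t) hM (henergy t ht)).trans_eq (hgrowth t)

end ContourAngles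

/-! ### Decay at infinity -/

namespace IsRegularRay

variable {α A B : ℝ}

theorem exists_eventually_re_rayRoot_le (h : IsRegularRay α A B)
    (hG : ∀ᶠ t in Filter.atTop, (rayRoot α A B t).re ≤ 0) :
    ∃ c > 0, ∀ᶠ t in Filter.atTop, (rayRoot α A B t).re ≤ -c := by
  refine ⟨√(1 + Real.cos A) / 2, by have := h.one_add_cos_pos; positivity, ?_⟩
  filter_upwards [hG, Filter.eventually_ge_atTop 1,
    (tendsto_rpow_atTop h.alpha_pos).eventually_ge_atTop (4 / (1 + Real.cos A))] with t hle ht htα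
  have habs := sqrt_mul_rpow_le_abs_re_rayRoot (B := B) h.one_add_cos_pos (by linarith) htα
  have hpow : 1 ≤ t ^ (α / 2) := Real.one_le_rpow ht (by linarith [h.alpha_pos])
  rw [abs_of_nonpos hle] at habs
  nlinarith [Real.sqrt_nonneg (1 + Real.cos A)]

theorem exists_eventually_re_rayAction_le (h : IsRegularRay α A B)
    (hG : ∀ᶠ t in Filter.atTop, (rayRoot α A B t).re ≤ 0) :
    ∃ c > 0, ∃ a, ∀ᶠ t in Filter.atTop, (rayAction α A B t).re ≤ a - c * t := by
  obtain ⟨c, hc, hre⟩ := h.exists_eventually_re_rayRoot_le hG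
  obtain ⟨T, hT⟩ := Filter.eventually_atTop.1 hre
  have hderiv : ∀ t, HasDerivAt (fun s => (rayAction α A B s).re) (rayRoot α A B t).re t :=
    fun t => Complex.reCLM.hasFDerivAt.comp_hasDerivAt t
      (hasDerivAt_rayAction h.alpha_pos h.sin_ne_zero t)
  refine ⟨c, hc, (rayAction α A B T).re + c * T, ?_⟩
  filter_upwards [Filter.eventually_ge_atTop T] with t ht
  have hmean := (convex_Ici T).image_sub_le_mul_sub_of_deriv_le
    (fun s _ => (hderiv s).continuousAt.continuousWithinAt)
    (fun s _ => (hderiv s).differentiableAt.differentiableWithinAt)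
    (fun s hs => (hderiv s).deriv.trans_le (hT s (interior_subset hs))) T self_mem_Ici t ht ht
  linarith

theorem integrableOn_norm_sq (h : IsRegularRay α A B) {W : ℝ → ℂ} {k D x : ℝ} (hk : 0 < k)
    (hD : 0 ≤ D) (hG : ∀ᶠ t in Filter.atTop, (rayRoot α A B t).re ≤ 0)
    (hW : ContinuousOn W (Ici 0))
    (hbound : ∀ᶠ t in Filter.atTop, ‖W t‖ ≤ D * ‖rayFactor α (A - B) t‖ ^ (-(1 / 4 : ℝ)) *
      Real.exp (k * ((rayAction α A B t).re - x))) :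
    IntegrableOn (fun t => ‖W t‖ ^ 2) (Ioi 0) := by
  obtain ⟨c, hc, a, haction⟩ := h.exists_eventually_re_rayAction_le hG
  have hsin : 0 < |Real.sin (A - B)| := abs_pos.2 h.sin_ne_zero
  refine integrable_of_isBigO_exp_neg (b := 2 * k * c) (by positivity) (hW.norm.pow 2)
    (Asymptotics.IsBigO.of_bound
      ((D * |Real.sin (A - B)| ^ (-(1 / 4 : ℝ)) * Real.exp (k * (a - x))) ^ 2) ?_)
  filter_upwards [hbound, haction] with t hWt ht
  have hfactor : ‖rayFactor α (A - B) t‖ ^ (-(1 / 4 : ℝ)) ≤ |Real.sin (A - B)| ^ (-(1 / 4 : ℝ)) :=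
    Real.rpow_le_rpow_of_nonpos hsin (abs_sin_le_norm_rayFactor α (A - B) t) (by norm_num)
  have hexp : Real.exp (-(2 * k * c) * t) = Real.exp (-(k * c * t)) ^ 2 := by
    rw [← Real.exp_nat_mul]; congr 1; push_cast; ring
  rw [norm_pow, norm_norm, Real.norm_of_nonneg (Real.exp_pos _).le, hexp, ← mul_pow, mul_assoc,
    ← Real.exp_add]
  refine pow_le_pow_left₀ (norm_nonneg _) (hWt.trans ?_) 2
  gcongr
  nlinarith

end IsRegularRay

/-! ### The recessive solution on the half-line -/

theorem rpow_one_div_rpow_mul_sin {α θ φ : ℝ} (hα : α ≠ 0) (hθ : 0 < Real.sin θ)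
    (hφ : 0 ≤ Real.sin φ) :
    ((Real.sin φ / Real.sin θ) ^ (1 / α)) ^ α * Real.sin θ = Real.sin φ := by
  rw [one_div, Real.rpow_inv_rpow (div_nonneg hφ hθ.le) hα, div_mul_cancel₀ _ hθ.ne']

theorem eqOn_rayRoot_of_sq_eq {α A B : ℝ} (hα : 0 < α) (hω : Real.sin (A - B) ≠ 0) {g : ℝ → ℂ}
    (hg : ContinuousOn g (Ici 0)) (hsq : ∀ t, 0 ≤ t → g t ^ 2 = rayRoot α A B t ^ 2)
    (h₀ : g 0 = rayRoot α A B 0) : EqOn g (rayRoot α A B) (Ici 0) :=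
  isPreconnected_Ici.eq_of_sq_eq hg (continuous_rayRoot hα hω).continuousOn hsq
    (fun _ => rayRoot_ne_zero hω _) self_mem_Ici h₀

theorem integral_eq_rayAction {α A B t : ℝ} {g : ℝ → ℂ} (hg : EqOn g (rayRoot α A B) (Ici 0))
    (ht : 0 ≤ t) : ∫ s in (0 : ℝ)..t, g s = rayAction α A B t :=
  intervalIntegral.integral_congr fun s hs => hg (by rw [uIcc_of_le ht] at hs; exact hs.1)

theorem ContourAngles.exists_recessive_solution {α θ φ ψ β γ k Z : ℝ}
    (h : ContourAngles α θ φ ψ β γ) (hc : RayControl α θ φ k)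
    (hc' : RayControl α ψ (2 * ψ + 2 * -γ) k) (hZ₀ : 0 < Z)
    (hZ : Z ^ α * Real.sin θ = Real.sin φ) :
    ∃ W W' : ℝ → ℂ, ContinuousOn W (Ici 0) ∧
      (∀ t ∈ Ioi (0 : ℝ), HasDerivAt W (W' t) t) ∧
      (∀ t ∈ Ioi (0 : ℝ), HasDerivAt W' (k ^ 2 * rayRoot α θ φ t ^ 2 * W t) t) ∧
      IntegrableOn (fun t => ‖W t‖ ^ 2) (Ioi 0) ∧
      (∀ t ∈ Icc 0 Z, ‖W t‖
        ≤ connectionConstant α β γ * ‖rayFactor α (θ - φ) t‖ ^ (-(1 / 4 : ℝ)) *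
          (Real.exp (k * ((rayAction α θ φ t).re - 2 * turningAction α ψ))
            + Real.exp (-(k * (rayAction α θ φ t).re)))) ∧
      (∀ t, Z ≤ t → ‖W t‖
        ≤ connectionConstant α β γ * ‖rayFactor α (θ - φ) t‖ ^ (-(1 / 4 : ℝ)) *
          Real.exp (k * ((rayAction α θ φ t).re - 2 * turningAction α ψ))) ∧ W 0 = 1 := by
  obtain ⟨m, hwell, htail⟩ := h.exists_recessive_bounds hc hc' hZ₀ hZ
  have hV := isSlitSolution_slitSolution ((k * Complex.exp (Complex.I * ψ)) ^ 2) h.alpha_pos 1 m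
  have hcont := hV.continuousOn_ray h.abs_beta_lt_pi
  refine ⟨raySolution α k ψ β 1 m, raySolutionDeriv α k ψ β 1 m, hcont,
    fun t ht => hV.hasDerivAt_ray h.abs_beta_lt_pi ht, fun t ht => ?_, ?_, hwell, htail,
    raySolution_zero h.alpha_pos 1 m⟩
  · rw [h.theta_eq, h.phi_eq]
    exact hV.hasDerivAt_ray_deriv h.abs_beta_lt_pi ht
  · exact hc.toIsRegularRay.integrableOn_norm_sq (zero_lt_one.trans_le hc.one_le)
      (by linarith [h.five_le_connectionConstant])
      (Filter.eventually_atTop.2 ⟨Z, fun _ => h.re_rayRoot_upper_nonpos hZ₀.le hZ⟩) hcont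
      (Filter.eventually_atTop.2 ⟨Z, htail⟩)

theorem two_mul_lt_add_two_mul_of_t0_bounds {α θ δ φ : ℝ} (hα : 0 < α) (hα2 : α < 2)
    (hθ : θ < Real.pi * α) (hδ : δ < (Real.pi * min 1 α - θ) / 2) (hφ : t0 α - δ < φ) :
    2 * θ < (α + 2) * φ := by
  have ht0 : t0 α * (α + 2) = 2 * Real.pi * α := div_mul_cancel₀ _ (by linarith)
  have hδα : δ < (Real.pi * α - θ) / 2 := by
    linarith [mul_le_mul_of_nonneg_left (min_le_right 1 α) Real.pi_pos.le]
  nlinarith [mul_pos (sub_pos.2 hα2) (sub_pos.2 hθ)]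

theorem stmt14_general (α θ φ : ℝ) (hα : 0 < α) (hφθ : φ < θ) (hθ : θ < Real.pi)
    (hθφ : 2 * θ < (α + 2) * φ) (q : ℝ → ℂ)
    (hq : ∀ t : ℝ, q t = Complex.exp (Complex.I * (θ : ℂ)) * ((t ^ α : ℝ) : ℂ)
      - Complex.exp (Complex.I * (φ : ℂ)))
    (Z₀ : ℝ) (hZ₀ : Z₀ = (Real.sin φ / Real.sin θ) ^ (1 / α))
    (g : ℝ → ℂ) (hgcont : ContinuousOn g (Set.Ici 0))
    (hgsq : ∀ t : ℝ, 0 ≤ t → g t ^ 2 = q t)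
    (hg0 : g 0 = -Complex.I * Complex.exp (Complex.I * ((φ / 2 : ℝ) : ℂ)))
    (S : ℝ → ℂ) (hS : ∀ t : ℝ, S t = ∫ s in (0 : ℝ)..t, g s)
    (R₀ : ℝ)
    (hR₀ : R₀ = Real.sin ((φ - θ) / α + φ / 2) * ∫ u in (0 : ℝ)..1, Real.sqrt (1 - u ^ α)) :
    ∃ k₀ > (0 : ℝ), ∃ C > (0 : ℝ), ∀ k : ℝ, k₀ ≤ k →
      ∃ W : ℝ → ℂ,
        ContinuousOn W (Set.Ici 0) ∧
        (∃ W' : ℝ → ℂ,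
          (∀ t ∈ Set.Ioi (0 : ℝ), HasDerivAt W (W' t) t) ∧
          (∀ t ∈ Set.Ioi (0 : ℝ), HasDerivAt W' (((k : ℂ) ^ 2) * q t * W t) t)) ∧
        MeasureTheory.IntegrableOn (fun t => ‖W t‖ ^ 2) (Set.Ioi 0) ∧
        (∀ t ∈ Set.Icc (0 : ℝ) Z₀,
          ‖W t‖ ≤ C * ‖q t‖ ^ (-(1 / 4 : ℝ)) *
            (Real.exp (k * ((S t).re - 2 * R₀)) + Real.exp (-(k * (S t).re)))) ∧
        (∀ t : ℝ, Z₀ < t →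
          ‖W t‖ ≤ C * ‖q t‖ ^ (-(1 / 4 : ℝ)) * Real.exp (k * ((S t).re - 2 * R₀))) ∧
        1 / C ≤ ‖W 0‖ := by
  have h := contourAngles hα hφθ hθ hθφ
  have hω := h.isRegularRay_upper.sin_ne_zero
  have hC := h.five_le_connectionConstant
  obtain rfl : q = fun t => rayRoot α θ φ t ^ 2 := funext fun t => by rw [hq, rayRoot_sq]
  have hg := eqOn_rayRoot_of_sq_eq hα hω hgcont hgsq (by rw [hg0, rayRoot_zero hα])
  have hS' : ∀ t, 0 ≤ t → S t = rayAction α θ φ t := fun t ht => by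
    rw [hS, integral_eq_rayAction hg ht]
  have hZpos : 0 < Z₀ := hZ₀ ▸ Real.rpow_pos_of_pos (div_pos h.sin_phi_pos h.sin_theta_pos) _
  have hZ : Z₀ ^ α * Real.sin θ = Real.sin φ :=
    hZ₀ ▸ rpow_one_div_rpow_mul_sin hα.ne' h.sin_theta_pos h.sin_phi_pos.le
  obtain ⟨k₀, hk₀⟩ := Filter.eventually_atTop.1 h.eventually_rayControl
  refine ⟨max k₀ 1, by positivity,
    connectionConstant α ((θ - φ) / α) (((φ - θ) / α + φ / 2) / (α + 2)), by linarith,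
    fun k hk => ?_⟩
  obtain ⟨hc, hc'⟩ := hk₀ k ((le_max_left _ _).trans hk)
  obtain ⟨W, W', hW, hderiv, hderiv', hint, hwell, htail, hW0⟩ :=
    h.exists_recessive_solution hc hc' hZpos hZ
  simp only [norm_pow, norm_rayRoot_sq]
  refine ⟨W, hW, ⟨W', hderiv, hderiv'⟩, hint, fun t ht => ?_, fun t ht => ?_, ?_⟩
  · rw [hS' t ht.1, hR₀]
    exact hwell t ht
  · rw [hS' t (hZpos.le.trans ht.le), hR₀]
    exact htail t ht.le
  · rw [hW0, norm_one]
    exact (div_le_one (by linarith)).2 (by linarith)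

/-- with `c = e^{iθ}`, `μ = e^{iφ}`, `q(t) = c t^α − μ`,
`Z₀ = (sin φ / sin θ)^{1/α}`, `g` the continuous branch of `√q` on `[0,∞)` with
`g(0) = −i e^{iφ/2}`, `S(t) = ∫₀^t g` and `R₀ = sin((φ−θ)/α + φ/2)·∫₀¹ √(1−u^α) du`:
there are `k₀, C > 0` so that for every `k ≥ k₀` there is a square-integrable solution
`W` of `W'' = k²(c t^α − μ)W` on `(0,∞)` with
`|W(t)| ≤ C|q(t)|^{−1/4}(e^{k(Re S(t) − 2R₀)} + e^{−k Re S(t)})` on `[0,Z₀]`,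
`|W(t)| ≤ C|q(t)|^{−1/4} e^{k(Re S(t) − 2R₀)}` for `t > Z₀`, and `|W(0)| ≥ 1/C`. -/
theorem stmt14 (α θ δ φ : ℝ) (hα0 : 0 < α) (hα2 : α < 2)
    (hθ1 : t0 α ≤ θ) (hθ2 : θ < min Real.pi (Real.pi * α))
    (hδ1 : 0 < δ) (hδ2 : δ < (Real.pi * min 1 α - θ) / 2)
    (hφ1 : t0 α - δ < φ) (hφ2 : φ < t0 α)
    (q : ℝ → ℂ)
    (hq : ∀ t : ℝ, q t = Complex.exp (Complex.I * (θ : ℂ)) * ((t ^ α : ℝ) : ℂ)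
      - Complex.exp (Complex.I * (φ : ℂ)))
    (Z₀ : ℝ) (hZ₀ : Z₀ = (Real.sin φ / Real.sin θ) ^ (1 / α))
    (g : ℝ → ℂ) (hgcont : ContinuousOn g (Set.Ici 0))
    (hgsq : ∀ t : ℝ, 0 ≤ t → g t ^ 2 = q t)
    (hg0 : g 0 = -Complex.I * Complex.exp (Complex.I * ((φ / 2 : ℝ) : ℂ)))
    (S : ℝ → ℂ) (hS : ∀ t : ℝ, S t = ∫ s in (0 : ℝ)..t, g s)
    (R₀ : ℝ)
    (hR₀ : R₀ = Real.sin ((φ - θ) / α + φ / 2) * ∫ u in (0 : ℝ)..1, Real.sqrt (1 - u ^ α)) :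
    ∃ k₀ > (0 : ℝ), ∃ C > (0 : ℝ), ∀ k : ℝ, k₀ ≤ k →
      ∃ W : ℝ → ℂ,
        ContinuousOn W (Set.Ici 0) ∧
        (∃ W' : ℝ → ℂ,
          (∀ t ∈ Set.Ioi (0 : ℝ), HasDerivAt W (W' t) t) ∧
          (∀ t ∈ Set.Ioi (0 : ℝ), HasDerivAt W' (((k : ℂ) ^ 2) * q t * W t) t)) ∧
        MeasureTheory.IntegrableOn (fun t => ‖W t‖ ^ 2) (Set.Ioi 0) ∧
        (∀ t ∈ Set.Icc (0 : ℝ) Z₀,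
          ‖W t‖ ≤ C * ‖q t‖ ^ (-(1 / 4 : ℝ)) *
            (Real.exp (k * ((S t).re - 2 * R₀)) + Real.exp (-(k * (S t).re)))) ∧
        (∀ t : ℝ, Z₀ < t →
          ‖W t‖ ≤ C * ‖q t‖ ^ (-(1 / 4 : ℝ)) * Real.exp (k * ((S t).re - 2 * R₀))) ∧
        1 / C ≤ ‖W 0‖ := by
  exact stmt14_general α θ φ hα0 (hφ2.trans_le hθ1) (hθ2.trans_le (min_le_left _ _))
    (two_mul_lt_add_two_mul_of_t0_bounds hα0 hα2 (hθ2.trans_le (min_le_right _ _)) hδ2 hφ1)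
    q hq Z₀ hZ₀ g hgcont hgsq hg0 S hS R₀ hR₀
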